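/- Let A = (a_{ij}) be symmetric, Lipschitz and elliptic (λ I_d ≤ A ≤ λ^{-1} I_d) on B_2^+, and let V, η be Lipschitz with ‖V‖_{W^{1,∞}} ≤ M, ‖η‖_{W^{1,∞}} ≤ M_η. Then for every δ ∈ (0,1) there exists C = C(λ, d, ‖a_{ij}‖_{W^{1,∞}}, M, M_η, δ) such that every W^{1,2} weak solution u of div(A Du) = V u in B_2^+ with A Du · n = η u on Γ_2 satisfies, for all r ∈ (0,1), the stability estimate ∫_{B_r^+} u² dx ≤ C r ∫_{Γ_{2r}} u² dσ + δ ∫_{B_{2r}^+} u² dx. -/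

import Mathlib

open MeasureTheory Metric Real
open scoped RealInnerProductSpace ENNReal Topology

noncomputable section

/-- Euclidean space `ℝ^{d+1}` (the paper's `ℝ^d` with `d ≥ 1`). -/
abbrev Euc (d : ℕ) : Type := EuclideanSpace ℝ (Fin (d + 1))

/-- The open upper half space `ℝ^d_+ = {x : x_d > 0}`. -/
def upperHalf (d : ℕ) : Set (Euc d) := {x : Euc d | 0 < x (Fin.last d)}

/-- `B_r^+ = B_r(0) ∩ ℝ^d_+`. -/
def Bplus (d : ℕ) (r : ℝ) : Set (Euc d) := Metric.ball (0 : Euc d) r ∩ upperHalf d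

/-- `Γ_r = B_r(0) ∩ ∂ℝ^d_+`. -/
def Gam (d : ℕ) (r : ℝ) : Set (Euc d) :=
  Metric.ball (0 : Euc d) r ∩ {x : Euc d | x (Fin.last d) = 0}

/-- The surface measure on the boundary hyperplane: `d`-dimensional Hausdorff measure. -/
def surf (d : ℕ) : Measure (Euc d) := MeasureTheory.Measure.hausdorffMeasure (d : ℝ)

/-- `A` is symmetric: `a_{ij} = a_{ji}`. -/
def IsSymmA (d : ℕ) (A : Euc d → Euc d →L[ℝ] Euc d) : Prop :=
  ∀ x v w, ⟪A x v, w⟫ = ⟪v, A x w⟫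

/-- Ellipticity: `λ I_d ≤ A ≤ λ⁻¹ I_d`. -/
def IsEllipticA (d : ℕ) (lam : ℝ) (A : Euc d → Euc d →L[ℝ] Euc d) : Prop :=
  ∀ x v, lam * ‖v‖ ^ 2 ≤ ⟪A x v, v⟫ ∧ ⟪A x v, v⟫ ≤ lam⁻¹ * ‖v‖ ^ 2

/-- Block-diagonal structure `A = diag(Ã, a_dd)`. -/
def IsBlockDiagA (d : ℕ) (A : Euc d → Euc d →L[ℝ] Euc d) : Prop :=
  ∀ x, ∀ i : Fin (d + 1), i ≠ Fin.last d →
    ⟪A x (EuclideanSpace.single i (1 : ℝ)), EuclideanSpace.single (Fin.last d) (1 : ℝ)⟫ = 0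

/-- The Dini-type bound `|Da_{ij}(x)| ≤ ε(|x|)/|x|` for `|x| ≤ 1`. -/
def CoeffBoundA (d : ℕ) (A : Euc d → Euc d →L[ℝ] Euc d) (eps : ℝ → ℝ) : Prop :=
  Differentiable ℝ A ∧ (∀ s : ℝ, 0 < s → 0 < eps s) ∧
    ∀ x : Euc d, 0 < ‖x‖ → ‖x‖ ≤ 1 → ‖fderiv ℝ A x‖ ≤ eps ‖x‖ / ‖x‖

/-- `‖V‖_{W^{1,∞}} ≤ M`: bounded by `M` with Lipschitz constant `M`. -/
def W1Inf (d : ℕ) (V : Euc d → ℝ) (M : ℝ) : Prop :=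
  (∀ x, |V x| ≤ M) ∧ LipschitzWith (Real.toNNReal M) V

/-- The conformal factor `μ(x) = ⟨A(x)x, x⟩/|x|²`. -/
def muA (d : ℕ) (A : Euc d → Euc d →L[ℝ] Euc d) (x : Euc d) : ℝ :=
  ⟪A x x, x⟫ / ‖x‖ ^ 2

/-- The vector field `β(x) = A(x)x/μ(x)`. -/
def betaA (d : ℕ) (A : Euc d → Euc d →L[ℝ] Euc d) (x : Euc d) : Euc d :=
  (muA d A x)⁻¹ • A x x

/-- `u ∈ W^{1,2}(B_2^+)` (with boundary trace in `L²(Γ_2)`), encoded via a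
differentiable representative with square-integrable value and gradient. -/
def MemW12 (d : ℕ) (u : Euc d → ℝ) : Prop :=
  Differentiable ℝ u ∧
    IntegrableOn (fun x => (u x) ^ 2 + ‖gradient u x‖ ^ 2) (Bplus d 2) ∧
    IntegrableOn (fun x => (u x) ^ 2) (Gam d 2) (surf d)

/-- Weak solution of `div(A Du) = V u` in `B_2^+` with `A Du · n = η u` on `Γ_2`. -/
def IsWeakSol (d : ℕ) (A : Euc d → Euc d →L[ℝ] Euc d) (V η u : Euc d → ℝ) : Prop :=
  MemW12 d u ∧
    ∀ ψ : Euc d → ℝ, ContDiff ℝ (⊤ : ℕ∞) ψ → HasCompactSupport ψ →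
      tsupport ψ ⊆ Metric.ball (0 : Euc d) 2 →
      ∫ x in Bplus d 2, (⟪A x (gradient u x), gradient ψ x⟫ + V x * u x * ψ x)
        = ∫ x in Gam d 2, η x * u x * ψ x ∂(surf d)

/-- The weighted height function `H(r)`. -/
def Hfun (d : ℕ) (A : Euc d → Euc d →L[ℝ] Euc d) (u : Euc d → ℝ) (α r : ℝ) : ℝ :=
  ∫ x in Bplus d r, (u x) ^ 2 * (r ^ 2 - ‖x‖ ^ 2) ^ α * muA d A x

/-- The weighted energy function `I(r)`. -/
def Ifun (d : ℕ) (A : Euc d → Euc d →L[ℝ] Euc d) (u : Euc d → ℝ) (α r : ℝ) : ℝ :=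
  2 * (α + 1) * ∫ x in Bplus d r, ⟪A x (gradient u x), x⟫ * u x * (r ^ 2 - ‖x‖ ^ 2) ^ α

/-- The frequency function `N(r) = I(r)/H(r)`. -/
def Nfun (d : ℕ) (A : Euc d → Euc d →L[ℝ] Euc d) (u : Euc d → ℝ) (α r : ℝ) : ℝ :=
  Ifun d A u α r / Hfun d A u α r

/-!
Extend `u` by zero across the flat boundary and mollify it with a kernel supported to one side, so
that the Robin condition contributes only the `L²` mass of `u` on `Γ_2`. The mollified, cut-off
function solves the equation with mollified coefficients up to a Friedrichs commutator bounded by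
the local energy of `u` and a boundary term. A Carleman estimate with weight
`exp (2τ exp (-s |x - z|²))`, centred at `z = -e_d / 4` below the boundary, gains a factor `τ³` on
its weighted `L²` norm, whereas the commutator costs only `(sτ)²` by Caccioppoli's inequality.
Mollification at scale `ε ~ 1 / (sτ²)` changes the weighted norm by a comparably small amount, so
for `τ` large the interior mass is absorbed. Outside radius `13/10` the weight is smaller than on
the half ball `B_1^+`, hence what remains is `δ` times the mass on `B_2^+` plus the boundary mass;
scaling then gives all `r`.
-/

open scoped Gradient

section Divergence

variable {E : Type*} [NormedAddCommGroup E] [InnerProductSpace ℝ E]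

/-- The trace, as a linear functional on bounded operators. -/
def opTrace : (E →L[ℝ] E) →ₗ[ℝ] ℝ := LinearMap.trace ℝ E ∘ₗ ContinuousLinearMap.coeLM ℝ

lemma opTrace_eq_sum_inner {ι : Type*} [Fintype ι] (T : E →L[ℝ] E) (b : OrthonormalBasis ι ℝ E) :
    opTrace T = ∑ i, ⟪b i, T (b i)⟫ :=
  LinearMap.trace_eq_sum_inner (T : E →ₗ[ℝ] E) b

/-- The divergence `tr DX` of a vector field. -/
def divergence (X : E → E) (x : E) : ℝ := opTrace (fderiv ℝ X x)

lemma divergence_neg (X : E → E) (x : E) : divergence (fun y => -X y) x = -divergence X x := by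
  rw [divergence, fderiv_fun_neg, map_neg, divergence]

lemma divergence_sub {X Y : E → E} {x : E} (hX : DifferentiableAt ℝ X x)
    (hY : DifferentiableAt ℝ Y x) :
    divergence (fun y => X y - Y y) x = divergence X x - divergence Y x := by
  rw [divergence, fderiv_fun_sub hX hY, map_sub, divergence, divergence]

lemma divergence_of_notMem_tsupport {X : E → E} {x : E} (hx : x ∉ tsupport X) :
    divergence X x = 0 := by
  rw [divergence, fderiv_of_notMem_tsupport ℝ hx, map_zero]

variable [FiniteDimensional ℝ E]

@[simp]
lemma opTrace_smulRight (l : E →L[ℝ] ℝ) (a : E) : opTrace (l.smulRight a) = l a :=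
  LinearMap.trace_smulRight (l : E →ₗ[ℝ] ℝ) a

lemma opTrace_comp_smulRight (S : E →L[ℝ] E) (l : E →L[ℝ] ℝ) (a : E) :
    opTrace (S ∘L l.smulRight a) = l (S a) := by
  have : S ∘L l.smulRight a = l.smulRight (S a) := by ext; simp
  rw [this, opTrace_smulRight]

lemma divergence_smul {f : E → ℝ} {X : E → E} {x : E} (hf : DifferentiableAt ℝ f x)
    (hX : DifferentiableAt ℝ X x) :
    divergence (fun y => f y • X y) x = f x * divergence X x + fderiv ℝ f x (X x) := by
  rw [divergence, fderiv_fun_smul hf hX, map_add, map_smul, opTrace_smulRight]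
  rfl

lemma abs_opTrace_le (T : E →L[ℝ] E) : |opTrace T| ≤ Module.finrank ℝ E * ‖T‖ := by
  let b := stdOrthonormalBasis ℝ E
  have hb : ∀ i ∈ Finset.univ, |⟪b i, T (b i)⟫| ≤ ‖T‖ := fun i _ => by
    simpa using (abs_real_inner_le_norm (b i) (T (b i))).trans
      (mul_le_mul_of_nonneg_left (T.le_opNorm (b i)) (norm_nonneg _))
  rw [opTrace_eq_sum_inner T b]
  simpa using (Finset.abs_sum_le_sum_abs _ _).trans (Finset.sum_le_card_nsmul _ _ _ hb)

lemma continuous_opTrace : Continuous (opTrace : (E →L[ℝ] E) →ₗ[ℝ] ℝ) :=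
  LinearMap.continuous_of_finiteDimensional _

lemma continuous_divergence {X : E → E} (hX : ContDiff ℝ 1 X) : Continuous (divergence X) :=
  continuous_opTrace.comp (hX.continuous_fderiv one_ne_zero)

variable [MeasurableSpace E] [BorelSpace E]

lemma integrable_divergence {X : E → E} (hX : ContDiff ℝ 1 X) (hc : HasCompactSupport X) :
    Integrable (divergence X) :=
  (continuous_divergence hX).integrable_of_hasCompactSupport
    (HasCompactSupport.intro hc fun _ => divergence_of_notMem_tsupport)

lemma integral_divergence_eq_zero {X : E → E} (hX : ContDiff ℝ 1 X) (hc : HasCompactSupport X) :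
    ∫ x, divergence X x = 0 := by
  let b := stdOrthonormalBasis ℝ E
  have hint (i) : Integrable fun x => innerSL ℝ (b i) (fderiv ℝ X x (b i)) := by
    have := (hc.fderiv_apply ℝ (b i))
    refine Continuous.integrable_of_hasCompactSupport ?_
      (HasCompactSupport.intro this fun x hx => ?_)
    · have := hX.continuous_fderiv one_ne_zero
      fun_prop
    · rw [image_eq_zero_of_notMem_tsupport hx, map_zero]
  have hzero (i) : ∫ x, innerSL ℝ (b i) (fderiv ℝ X x (b i)) = 0 := by
    have := integral_bilinear_hasLineDerivAt_right_eq_neg_left_of_integrable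
      (μ := (volume : Measure E)) (B := innerSL ℝ) (v := b i) (f := fun _ => b i)
      (f' := fun _ => 0) (g := X) (g' := fun x => fderiv ℝ X x (b i))
      (by simp) (hint i)
      (((innerSL ℝ (b i)).continuous.comp hX.continuous).integrable_of_hasCompactSupport
        (hc.comp_left (map_zero _)))
      (fun x _ => by simpa using (hasFDerivAt_const (𝕜 := ℝ) (b i) x).hasLineDerivAt (b i))
      (fun x _ => (hX.differentiable one_ne_zero x).hasFDerivAt.hasLineDerivAt (b i))
    exact this.trans (by simp)
  simp_rw [divergence, opTrace_eq_sum_inner _ b, ← innerSL_apply_apply ℝ]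
  rw [integral_finsetSum _ fun i _ => hint i]
  exact Finset.sum_eq_zero fun i _ => hzero i

end Divergence

section Gradient

variable {E : Type*} [NormedAddCommGroup E] [InnerProductSpace ℝ E]

section Complete

variable [CompleteSpace E] {f g : E → ℝ} {x : E}

lemma norm_gradient (f : E → ℝ) (x : E) : ‖∇ f x‖ = ‖fderiv ℝ f x‖ :=
  (InnerProductSpace.toDual ℝ E).symm.norm_map _

lemma gradient_of_notMem_tsupport (hx : x ∉ tsupport f) : ∇ f x = 0 := by
  rw [← norm_eq_zero, norm_gradient, fderiv_of_notMem_tsupport ℝ hx, norm_zero]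

lemma hasGradientAt_of_hasFDerivAt {l : E →L[ℝ] ℝ} {a : E} (h : HasFDerivAt f l x)
    (hl : ∀ v, l v = ⟪a, v⟫) : HasGradientAt f a x :=
  hasGradientAt_iff_hasFDerivAt.2 (h.congr_fderiv (ContinuousLinearMap.ext hl))

lemma gradient_fun_mul (hf : DifferentiableAt ℝ f x) (hg : DifferentiableAt ℝ g x) :
    ∇ (fun y => f y * g y) x = f x • ∇ g x + g x • ∇ f x :=
  (hasGradientAt_of_hasFDerivAt (hf.hasFDerivAt.mul hg.hasFDerivAt) fun v => by
    simp [inner_add_left, inner_smul_left, inner_gradient_left]).gradient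

lemma contDiff_gradient {m n : WithTop ℕ∞} (hf : ContDiff ℝ n f) (hmn : m + 1 ≤ n) :
    ContDiff ℝ m (∇ f) :=
  (InnerProductSpace.toDual ℝ E).symm.contDiff.comp (hf.fderiv_right hmn)

lemma continuous_gradient (hf : ContDiff ℝ 1 f) : Continuous (∇ f) :=
  (contDiff_gradient (m := 0) hf (zero_add 1).le).continuous

lemma hasCompactSupport_gradient (hf : HasCompactSupport f) : HasCompactSupport (∇ f) :=
  HasCompactSupport.intro hf fun _ => gradient_of_notMem_tsupport

lemma inner_fderiv_gradient (hf : ContDiff ℝ 2 f) (x a b : E) :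
    ⟪fderiv ℝ (∇ f) x a, b⟫ = fderiv ℝ (fderiv ℝ f) x a b := by
  have hf' : DifferentiableAt ℝ (fderiv ℝ f) x :=
    (hf.fderiv_right (m := 1) (by norm_num)).differentiable one_ne_zero x
  have h := (InnerProductSpace.toDual ℝ E).symm.toContinuousLinearEquiv.toContinuousLinearMap
    |>.hasFDerivAt.comp x hf'.hasFDerivAt
  rw [show ∇ f = (InnerProductSpace.toDual ℝ E).symm ∘ fderiv ℝ f from rfl]
  erw [h.fderiv]
  exact InnerProductSpace.toDual_symm_apply

lemma isSymmetric_fderiv_gradient (hf : ContDiff ℝ 2 f) (x : E) :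
    (fderiv ℝ (∇ f) x : E →ₗ[ℝ] E).IsSymmetric := fun a b => by
  have hsymm := hf.contDiffAt.isSymmSndFDerivAt (x := x) (by simp)
  change ⟪fderiv ℝ (∇ f) x a, b⟫ = ⟪a, fderiv ℝ (∇ f) x b⟫
  rw [← real_inner_comm a, inner_fderiv_gradient hf, inner_fderiv_gradient hf]
  exact hsymm a b

end Complete

variable [FiniteDimensional ℝ E] {A : E → E →L[ℝ] E} {f g v : E → ℝ} {x : E}

/-- The operator `tr (A D²v)` in non-divergence form. -/
def nonDivOp (A : E → E →L[ℝ] E) (v : E → ℝ) (x : E) : ℝ := opTrace (A x ∘L fderiv ℝ (∇ v) x)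

lemma nonDivOp_mul (hA : (A x : E →ₗ[ℝ] E).IsSymmetric) (hf : ContDiff ℝ 2 f)
    (hg : ContDiff ℝ 2 g) :
    nonDivOp A (fun y => f y * g y) x
      = f x * nonDivOp A g x + g x * nonDivOp A f x + 2 * ⟪A x (∇ f x), ∇ g x⟫ := by
  have hf1 := hf.differentiable two_ne_zero
  have hg1 := hg.differentiable two_ne_zero
  have hf2 := (contDiff_gradient (m := 1) hf one_add_one_eq_two.le).differentiable one_ne_zero x
  have hg2 := (contDiff_gradient (m := 1) hg one_add_one_eq_two.le).differentiable one_ne_zero x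
  have hgrad : ∇ (fun y => f y * g y) = fun y => f y • ∇ g y + g y • ∇ f y :=
    funext fun y => gradient_fun_mul (hf1 y) (hg1 y)
  have hcross : ⟪∇ f x, A x (∇ g x)⟫ = ⟪A x (∇ f x), ∇ g x⟫ := (hA _ _).symm
  have hD := ((hf1 x).hasFDerivAt.fun_smul hg2.hasFDerivAt).fun_add
    ((hg1 x).hasFDerivAt.fun_smul hf2.hasFDerivAt)
  simp only [nonDivOp]
  rw [hgrad, hD.fderiv]
  simp only [ContinuousLinearMap.comp_add, ContinuousLinearMap.comp_smul, map_add, map_smul,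
    opTrace_comp_smulRight, ← inner_gradient_left, smul_eq_mul, hcross]
  rw [real_inner_comm (A x (∇ f x))]
  ring

lemma continuous_nonDivOp (hA : Continuous A) (hv : ContDiff ℝ 2 v) :
    Continuous (nonDivOp A v) := by
  have : Continuous (fderiv ℝ (∇ v)) :=
    (contDiff_gradient (m := 1) hv one_add_one_eq_two.le).continuous_fderiv one_ne_zero
  exact continuous_opTrace.comp (hA.clm_comp this)

lemma nonDivOp_of_notMem_tsupport (hx : x ∉ tsupport v) : nonDivOp A v x = 0 := by
  have hx' : x ∉ tsupport (∇ v) := fun h =>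
    hx (closure_minimal (Function.support_subset_iff'.2 fun _ => gradient_of_notMem_tsupport)
      (isClosed_tsupport v) h)
  rw [nonDivOp, fderiv_of_notMem_tsupport ℝ hx', ContinuousLinearMap.comp_zero, map_zero]

end Gradient

section RadialWeight

variable {E : Type*} [NormedAddCommGroup E]

/-- The Gaussian `φ(x) = exp (-s|x - z|²)`; `exp (2τφ)` is the Carleman weight. -/
def gaussWeight (s : ℝ) (z x : E) : ℝ := exp (-s * ‖x - z‖ ^ 2)

lemma gaussWeight_pos (s : ℝ) (z x : E) : 0 < gaussWeight s z x := exp_pos _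

lemma exp_neg_le_gaussWeight {s R : ℝ} {z x : E} (hs : 0 ≤ s) (hx : ‖x - z‖ ≤ R) :
    exp (-(s * R ^ 2)) ≤ gaussWeight s z x := by
  rw [gaussWeight, exp_le_exp, neg_mul, neg_le_neg_iff]
  gcongr

variable [InnerProductSpace ℝ E]

/-- The radial field `N`, normalised so that the Gaussian weight `φ` satisfies `∇φ = sφN`. -/
def radialField (z x : E) : E := (-2 : ℝ) • (x - z)

lemma contDiff_gaussWeight (s : ℝ) (z : E) {n : WithTop ℕ∞} : ContDiff ℝ n (gaussWeight s z) :=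
  (contDiff_const.mul ((contDiff_id.sub contDiff_const).norm_sq ℝ)).exp

lemma contDiff_radialField (z : E) {n : WithTop ℕ∞} : ContDiff ℝ n (radialField z) :=
  contDiff_const.smul (contDiff_id.sub contDiff_const)

lemma hasFDerivAt_radialField (z x : E) :
    HasFDerivAt (radialField z) ((-2 : ℝ) • ContinuousLinearMap.id ℝ E) x :=
  ((hasFDerivAt_id x).sub_const z).const_smul (-2 : ℝ)

lemma hasFDerivAt_gaussWeight (s : ℝ) (z x : E) :
    HasFDerivAt (gaussWeight s z) ((s * gaussWeight s z x) • innerSL ℝ (radialField z x)) x := by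
  refine ((((hasFDerivAt_id x).sub_const z).norm_sq.const_mul (-s)).exp).congr_fderiv ?_
  ext v
  simp only [id_eq, neg_mul, map_sub, ContinuousLinearMap.comp_id, neg_smul, smul_neg, neg_apply,
    smul_apply, sub_apply, coe_innerSL_apply, nsmul_eq_mul, Nat.cast_ofNat, smul_eq_mul,
    gaussWeight, radialField, map_neg, map_smul, neg_inj]
  ring

lemma hasFDerivAt_exp_mul_gaussWeight (c s : ℝ) (z x : E) :
    HasFDerivAt (fun y => exp (c * gaussWeight s z y))
      ((c * s * gaussWeight s z x * exp (c * gaussWeight s z x)) • innerSL ℝ (radialField z x))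
      x := by
  refine (((hasFDerivAt_gaussWeight s z x).const_mul c).exp).congr_fderiv ?_
  ext v
  simp only [smul_apply, coe_innerSL_apply, smul_eq_mul]
  ring

lemma contDiff_exp_mul_gaussWeight (c s : ℝ) (z : E) {n : WithTop ℕ∞} :
    ContDiff ℝ n fun y => exp (c * gaussWeight s z y) :=
  (contDiff_const.mul (contDiff_gaussWeight s z)).exp

variable [FiniteDimensional ℝ E] {A : E → E →L[ℝ] E} {x : E}

lemma gradient_exp_mul_gaussWeight (c s : ℝ) (z x : E) :
    ∇ (fun y => exp (c * gaussWeight s z y)) x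
      = (c * s * gaussWeight s z x * exp (c * gaussWeight s z x)) • radialField z x :=
  (hasGradientAt_of_hasFDerivAt (hasFDerivAt_exp_mul_gaussWeight c s z x) fun v => by
    simp [inner_smul_left]).gradient

lemma nonDivOp_exp_mul_gaussWeight (A : E → E →L[ℝ] E) (c s : ℝ) (z x : E) :
    nonDivOp A (fun y => exp (c * gaussWeight s z y)) x
      = exp (c * gaussWeight s z x) *
        ((c ^ 2 * s ^ 2 * gaussWeight s z x ^ 2 + c * s ^ 2 * gaussWeight s z x)
            * ⟪A x (radialField z x), radialField z x⟫
          - 2 * c * s * gaussWeight s z x * opTrace (A x)) := by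
  have hcoef := ((hasFDerivAt_gaussWeight s z x).const_mul (c * s)).fun_mul
    (hasFDerivAt_exp_mul_gaussWeight c s z x)
  have hgrad := hcoef.fun_smul (hasFDerivAt_radialField z x)
  simp only [nonDivOp]
  rw [funext (gradient_exp_mul_gaussWeight c s z), hgrad.fderiv]
  simp only [ContinuousLinearMap.comp_add, ContinuousLinearMap.comp_smul, map_add, map_smul,
    opTrace_comp_smulRight, ContinuousLinearMap.comp_id, smul_eq_mul, add_apply, smul_apply,
    innerSL_apply_apply, real_inner_comm (A x _)]
  ring

/-- With `w = exp (τφ) v`, this is the expansion of the conjugated operator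
`exp (τφ) tr (A D²v)` around `tr (A D²w)`. -/
lemma exp_mul_nonDivOp {v : E → ℝ} (hA : (A x : E →ₗ[ℝ] E).IsSymmetric) (hv : ContDiff ℝ 2 v)
    (s τ : ℝ) (z : E) {w : E → ℝ} (hw : ∀ y, w y = exp (τ * gaussWeight s z y) * v y) :
    exp (τ * gaussWeight s z x) * nonDivOp A v x
      = nonDivOp A w x
        - 2 * s * (τ * gaussWeight s z x) * ⟪A x (radialField z x), ∇ w x⟫
        + (s * (τ * gaussWeight s z x) ^ 2 * ⟪A x (radialField z x), radialField z x⟫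
            - s * (τ * gaussWeight s z x) * ⟪A x (radialField z x), radialField z x⟫
            + 2 * (τ * gaussWeight s z x) * opTrace (A x)) * (s * w x) := by
  have hw2 : ContDiff ℝ 2 w := by
    rw [funext hw]; exact (contDiff_exp_mul_gaussWeight τ s z).mul hv
  have hvw : v = fun y => exp (-τ * gaussWeight s z y) * w y := funext fun y => by
    rw [hw, ← mul_assoc, ← exp_add]; simp
  have hexp : exp (τ * gaussWeight s z x) * exp (-τ * gaussWeight s z x) = 1 := by
    rw [← exp_add]; simp
  have hL := nonDivOp_mul hA (contDiff_exp_mul_gaussWeight (-τ) s z) hw2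
  rw [← hvw, gradient_exp_mul_gaussWeight, nonDivOp_exp_mul_gaussWeight, map_smul,
    real_inner_smul_left] at hL
  rw [hL]
  linear_combination (nonDivOp A w x
    - 2 * s * (τ * gaussWeight s z x) * ⟪A x (radialField z x), ∇ w x⟫
    + (s * (τ * gaussWeight s z x) ^ 2 * ⟪A x (radialField z x), radialField z x⟫
        - s * (τ * gaussWeight s z x) * ⟪A x (radialField z x), radialField z x⟫
        + 2 * (τ * gaussWeight s z x) * opTrace (A x)) * (s * w x)) * hexp

end RadialWeight

section Rellich

variable {E : Type*} [NormedAddCommGroup E] [InnerProductSpace ℝ E] [FiniteDimensional ℝ E]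
  {A : E → E →L[ℝ] E} {A' : E →L[ℝ] E →L[ℝ] E} {w p φ : E → ℝ} {B β : E → E} {B' β' : E →L[ℝ] E}
  {p' : E →L[ℝ] ℝ} {N x : E} {s τ : ℝ}

lemma divergence_clm_gradient (hA : HasFDerivAt A A' x) (hw : ContDiff ℝ 2 w) :
    divergence (fun y => A y (∇ w y)) x = nonDivOp A w x + opTrace (A'.flip (∇ w x)) := by
  have hg := ((contDiff_gradient (m := 1) hw one_add_one_eq_two.le).differentiable one_ne_zero
    x).hasFDerivAt
  rw [divergence, (hA.clm_apply hg).fderiv, map_add, nonDivOp]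

/-- The Rellich–Pohozaev flux of `w` along the field `B`. -/
def rellichFlux (A : E → E →L[ℝ] E) (B : E → E) (w : E → ℝ) (x : E) : E :=
  ⟪B x, ∇ w x⟫ • A x (∇ w x) - (1 / 2 * ⟪A x (∇ w x), ∇ w x⟫) • B x

/-- The Hessian of `w` contributes to both terms of the flux and cancels. -/
lemma divergence_rellichFlux (hAs : (A x : E →ₗ[ℝ] E).IsSymmetric) (hA : HasFDerivAt A A' x)
    (hB : HasFDerivAt B B' x) (hw : ContDiff ℝ 2 w) :
    divergence (rellichFlux A B w) x
      = ⟪B x, ∇ w x⟫ * (nonDivOp A w x + opTrace (A'.flip (∇ w x)))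
        + ⟪B' (A x (∇ w x)), ∇ w x⟫ - 1 / 2 * ⟪A' (B x) (∇ w x), ∇ w x⟫
        - 1 / 2 * ⟪A x (∇ w x), ∇ w x⟫ * opTrace B' := by
  have hg := ((contDiff_gradient (m := 1) hw one_add_one_eq_two.le).differentiable one_ne_zero
    x).hasFDerivAt
  have hAg := hA.clm_apply hg
  have hBg := hB.inner ℝ hg
  have hQ := (hAg.inner ℝ hg).const_mul (1 / 2)
  have hHess : ⟪B x, fderiv ℝ (∇ w) x (A x (∇ w x))⟫ = ⟪A x (∇ w x), fderiv ℝ (∇ w) x (B x)⟫ := by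
    rw [real_inner_comm]
    exact isSymmetric_fderiv_gradient hw x _ _
  have hQB : ⟪A x (fderiv ℝ (∇ w) x (B x)), ∇ w x⟫ = ⟪A x (∇ w x), fderiv ℝ (∇ w) x (B x)⟫ := by
    rw [real_inner_comm]
    exact (hAs _ _).symm
  unfold rellichFlux
  rw [divergence_sub (hBg.fun_smul hAg).differentiableAt (hQ.fun_smul hB).differentiableAt,
    divergence_smul hBg.differentiableAt hAg.differentiableAt,
    divergence_smul hQ.differentiableAt hB.differentiableAt, divergence_clm_gradient hA hw,
    hBg.fderiv, hQ.fderiv, divergence, hB.fderiv]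
  simp only [ContinuousLinearMap.comp_apply, ContinuousLinearMap.prod_apply, fderivInnerCLM_apply,
    hHess, one_div, smul_apply, add_apply, ContinuousLinearMap.flip_apply, inner_add_left, hQB,
    smul_eq_mul]
  ring

/-- The flux whose divergence produces the positive terms of the Carleman estimate with weight
`φ`: the Rellich flux along `φβ`, corrected by two lower order terms. -/
def carlemanFlux (A : E → E →L[ℝ] E) (β : E → E) (φ p w : E → ℝ) (s τ : ℝ) (x : E) : E :=
  -rellichFlux A (fun y => φ y • β y) w x - (s * (φ x * (p x * w x))) • A x (∇ w x)
    - (1 / 2 * (τ ^ 2 * s ^ 2) * (φ x ^ 3 * (p x * w x ^ 2))) • β x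

lemma divergence_carlemanFlux (hAs : (A x : E →ₗ[ℝ] E).IsSymmetric) (hA : HasFDerivAt A A' x)
    (hβ : HasFDerivAt β β' x) (hβN : β x = A x N) (hp : HasFDerivAt p p' x)
    (hpN : p x = ⟪β x, N⟫) (hφ : HasFDerivAt φ ((s * φ x) • innerSL ℝ N) x)
    (hw : ContDiff ℝ 2 w) :
    divergence (carlemanFlux A β φ p w s τ) x
      = φ x * (-(⟪β x, ∇ w x⟫ + p x * (s * w x))
            * (nonDivOp A w x + opTrace (A'.flip (∇ w x)))
          - (⟪β' (A x (∇ w x)), ∇ w x⟫ - 1 / 2 * ⟪A' (β x) (∇ w x), ∇ w x⟫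
              - 1 / 2 * ⟪A x (∇ w x), ∇ w x⟫ * opTrace β')
          - s * ⟪β x, ∇ w x⟫ ^ 2 - 1 / 2 * s * p x * ⟪A x (∇ w x), ∇ w x⟫
          - s * p x * (s * w x) * ⟪β x, ∇ w x⟫ - s * w x * p' (A x (∇ w x))
          - 1 / 2 * (τ * φ x) ^ 2 * ((p x * opTrace β' + p' (β x)) * (s * w x) ^ 2
              + 3 * s * p x ^ 2 * (s * w x) ^ 2 + 2 * s * p x * (s * w x) * ⟪β x, ∇ w x⟫)) := by
  have hg := ((contDiff_gradient (m := 1) hw one_add_one_eq_two.le).differentiable one_ne_zero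
    x).hasFDerivAt
  have hw' : HasFDerivAt w (innerSL ℝ (∇ w x)) x :=
    (hw.differentiable two_ne_zero x).hasGradientAt.hasFDerivAt
  have hAg := hA.clm_apply hg
  have hφβ := hφ.fun_smul hβ
  have hq := (hφ.fun_mul (hp.fun_mul hw')).const_mul s
  have hr := ((hφ.pow 3).fun_mul (hp.fun_mul (hw'.pow 2))).const_mul (1 / 2 * (τ ^ 2 * s ^ 2))
  have hrel : DifferentiableAt ℝ (rellichFlux A (fun y => φ y • β y) w) x :=
    (((hφβ.inner ℝ hg).fun_smul hAg).sub
      (((hAg.inner ℝ hg).const_mul (1 / 2)).fun_smul hφβ)).differentiableAt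
  have hNg : ⟪N, A x (∇ w x)⟫ = ⟪β x, ∇ w x⟫ := by
    rw [hβN]; exact (hAs _ _).symm
  have hNβ : ⟪N, β x⟫ = p x := by rw [hpN, real_inner_comm]
  have hgA : ⟪∇ w x, A x (∇ w x)⟫ = ⟪A x (∇ w x), ∇ w x⟫ := real_inner_comm _ _
  have hgβ : ⟪∇ w x, β x⟫ = ⟪β x, ∇ w x⟫ := real_inner_comm _ _
  unfold carlemanFlux
  rw [divergence_sub (hrel.fun_neg.fun_sub (hq.fun_smul hAg).differentiableAt)
      (hr.fun_smul hβ).differentiableAt,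
    divergence_sub hrel.fun_neg (hq.fun_smul hAg).differentiableAt, divergence_neg,
    divergence_rellichFlux hAs hA hφβ hw,
    divergence_smul hq.differentiableAt hAg.differentiableAt,
    divergence_smul hr.differentiableAt hβ.differentiableAt, divergence_clm_gradient hA hw,
    hq.fderiv, hr.fderiv, divergence, hβ.fderiv]
  simp only [inner_smul_left, ringHom_apply, add_apply, smul_apply,
    ContinuousLinearMap.smulRight_apply, coe_innerSL_apply, hNg, smul_eq_mul, inner_add_left,
    one_div, map_smul, map_add, opTrace_smulRight, hNβ, neg_sub, smul_add, hgA,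
    Nat.add_one_sub_one, pow_one, nsmul_eq_mul, Nat.cast_ofNat, hgβ, neg_add_rev]
  ring

end Rellich

section CarlemanAlgebra

variable {s k W y p Q T a R b R₁ t f G C p₀ lam : ℝ}

/-- `T` is eliminated in favour of the conjugated operator `f`; the indefinite products are then
absorbed by Young's inequality into `s k y²` and `s k² p² W²`. -/
lemma carleman_young (hk : 0 < k) (hs : 1 ≤ s)
    (hf : f = T - 2 * s * k * y + (s * k ^ 2 * p - s * k * p + 2 * k * t) * W) :
    -(y + p * W) * (T + a) - R - s * y ^ 2 - 1 / 2 * s * p * Q - s * p * W * y - W * b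
        - 1 / 2 * k ^ 2 * (R₁ * W ^ 2 + 3 * s * p ^ 2 * W ^ 2 + 2 * s * p * W * y)
      ≤ f ^ 2 / k - (y + p * W) * a - R - W * b - 1 / 2 * s * p * Q
        + (-1 / 2 * s * k ^ 2 * p ^ 2 + 5 / 4 * s * k * p ^ 2 + 1 / 2 * k * p ^ 2 + 2 * k * t ^ 2
            + 2 * k * t * p + 1 / 4 * s * p ^ 2 - 1 / 2 * k ^ 2 * R₁) * W ^ 2 := by
  have hsource : -((y + p * W) * f) ≤ f ^ 2 / k + k / 4 * (y + p * W) ^ 2 := by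
    have : f ^ 2 / k + k / 4 * (y + p * W) ^ 2 + (y + p * W) * f
        = (f / k + (y + p * W) / 2) ^ 2 * k := by field_simp; ring
    nlinarith [mul_nonneg (sq_nonneg (f / k + (y + p * W) / 2)) hk.le]
  have hcross : 0 ≤ s * k * (y + 3 / 2 * p * W) ^ 2 := by positivity
  have hcross' : 0 ≤ s * (y + 1 / 2 * p * W) ^ 2 := by positivity
  have htrace : 0 ≤ k / 2 * (y - 2 * t * W) ^ 2 := by positivity
  have hsum : 0 ≤ k / 4 * (y - p * W) ^ 2 := by positivity
  have hky : 0 ≤ (s - 1) * (k * y ^ 2) := mul_nonneg (by linarith) (by positivity)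
  obtain rfl : T = f + 2 * s * k * y - (s * k ^ 2 * p - s * k * p + 2 * k * t) * W := by
    linarith
  nlinarith

lemma carleman_absorb_gradient (hC : 1 ≤ C) (hs : 1 ≤ s) (hp₀ : 0 < p₀) (hlam : 0 < lam)
    (hp : p₀ ≤ p) (hQ : lam * G ^ 2 ≤ Q) (hy : |y| ≤ C * G) (ha : |a| ≤ C * G)
    (hR : |R| ≤ C * G ^ 2) (hb : |b| ≤ C * G) (h : 10 * C ^ 2 ≤ s * p₀ * lam) :
    -(y + p * W) * a - R - W * b - 1 / 2 * s * p * Q ≤ 1 / 2 * p ^ 2 * W ^ 2 + 1 / 2 * W ^ 2 := by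
  have hya : -(y * a) ≤ (C * G) ^ 2 := by
    have := mul_le_mul hy ha (abs_nonneg a) ((abs_nonneg y).trans hy)
    rw [← abs_mul] at this
    nlinarith [neg_abs_le (y * a)]
  have ha2 : a ^ 2 ≤ (C * G) ^ 2 := sq_le_sq' (abs_le.1 ha).1 (abs_le.1 ha).2
  have hb2 : b ^ 2 ≤ (C * G) ^ 2 := sq_le_sq' (abs_le.1 hb).1 (abs_le.1 hb).2
  have hR' : -R ≤ (C * G) ^ 2 := by
    nlinarith [neg_abs_le R, mul_nonneg (mul_nonneg (zero_le_one.trans hC) (sub_nonneg.2 hC))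
      (sq_nonneg G)]
  have hpos : 0 < p := hp₀.trans_le hp
  have hQ' : 5 * (C * G) ^ 2 ≤ 1 / 2 * s * p * Q := calc
    5 * (C * G) ^ 2 ≤ 1 / 2 * (s * p₀ * lam) * G ^ 2 := by nlinarith [sq_nonneg G]
    _ = 1 / 2 * s * p₀ * (lam * G ^ 2) := by ring
    _ ≤ 1 / 2 * s * p * Q := by gcongr
  nlinarith [sq_nonneg (a + p * W), sq_nonneg (b + W)]

lemma carleman_absorb_weight (hC : 1 ≤ C) (hs : 1 ≤ s) (hp₀ : 0 < p₀) (hp : p₀ ≤ p) (hpC : p ≤ C)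
    (ht : |t| ≤ C) (hR₁ : |R₁| ≤ C) (hsC : 8 * C ^ 2 ≤ s * p₀ ^ 2) (hk : 96 ≤ k) :
    -1 / 2 * s * k ^ 2 * p ^ 2 + 5 / 4 * s * k * p ^ 2 + 1 / 2 * k * p ^ 2 + 2 * k * t ^ 2
        + 2 * k * t * p + 1 / 4 * s * p ^ 2 - 1 / 2 * k ^ 2 * R₁ + 1 / 2 * p ^ 2 + 1 / 2
      ≤ -1 / 4 * s * k ^ 2 * p₀ ^ 2 := by
  set S := s * p ^ 2
  have hpp : p₀ ^ 2 ≤ p ^ 2 := by gcongr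
  have hp₀S : s * p₀ ^ 2 ≤ S := mul_le_mul_of_nonneg_left hpp (by linarith)
  have : 8 * C ^ 2 ≤ S := hsC.trans hp₀S
  have hS1 : 8 ≤ S := by nlinarith
  have hpS : p ^ 2 ≤ S := by nlinarith
  have ht2 : t ^ 2 ≤ S / 8 := by nlinarith [abs_le.1 ht, sq_nonneg t]
  have htp : t * p ≤ S / 8 := by nlinarith [abs_le.1 ht, sq_nonneg (t - p), hp₀.le.trans hp]
  have hR : -R₁ ≤ S / 8 := by nlinarith [abs_le.1 hR₁]
  have hk2 : 96 * k * S ≤ k ^ 2 * S := by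
    nlinarith [mul_nonneg (mul_nonneg (sub_nonneg.2 hk) (by linarith : 0 ≤ k))
      (by linarith : 0 ≤ S)]
  have hkt : k * t ^ 2 ≤ k * (S / 8) := by gcongr
  have hktp : k * (t * p) ≤ k * (S / 8) := by gcongr
  have hkR : k ^ 2 * -R₁ ≤ k ^ 2 * (S / 8) := by gcongr
  have hkp : k * p ^ 2 ≤ k * S := by gcongr
  have hkS : 96 * S ≤ k * S := by gcongr
  have hps : k ^ 2 * (s * p₀ ^ 2) ≤ k ^ 2 * S := by gcongr
  nlinarith

/-- The conditions on `s` and `k` express that the convexity parameter `s` is large compared with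
the coefficients, and the large parameter `k = τφ` is large independently of `s`. -/
lemma carleman_algebra (hC : 1 ≤ C) (hs : 1 ≤ s) (hp₀ : 0 < p₀) (hlam : 0 < lam) (hp : p₀ ≤ p)
    (hpC : p ≤ C) (hQ : lam * G ^ 2 ≤ Q) (hy : |y| ≤ C * G) (ha : |a| ≤ C * G)
    (hR : |R| ≤ C * G ^ 2) (hb : |b| ≤ C * G) (ht : |t| ≤ C) (hR₁ : |R₁| ≤ C)
    (h : 10 * C ^ 2 ≤ s * p₀ * lam) (hsC : 8 * C ^ 2 ≤ s * p₀ ^ 2) (hk : 96 ≤ k)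
    (hf : f = T - 2 * s * k * y + (s * k ^ 2 * p - s * k * p + 2 * k * t) * W) :
    1 / 4 * s * k ^ 2 * p₀ ^ 2 * W ^ 2
      + (-(y + p * W) * (T + a) - R - s * y ^ 2 - 1 / 2 * s * p * Q - s * p * W * y - W * b
        - 1 / 2 * k ^ 2 * (R₁ * W ^ 2 + 3 * s * p ^ 2 * W ^ 2 + 2 * s * p * W * y))
      ≤ f ^ 2 / k := by
  have hyoung := carleman_young (a := a) (R := R) (b := b) (R₁ := R₁) (Q := Q)
    (zero_lt_one.trans_le (by linarith)) hs hf
  have hgrad := carleman_absorb_gradient (W := W) hC hs hp₀ hlam hp hQ hy ha hR hb h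
  have hweight := mul_le_mul_of_nonneg_right
    (carleman_absorb_weight hC hs hp₀ hp hpC ht hR₁ hsC hk) (sq_nonneg W)
  nlinarith

end CarlemanAlgebra

section CarlemanPointwise

variable {E : Type*} [NormedAddCommGroup E] [InnerProductSpace ℝ E]

/-- `A` is a `C¹` field of symmetric operators with ellipticity constant `lam` and with `C¹` norm
controlled by `K`. -/
structure IsC1Elliptic (lam K : ℝ) (A : E → E →L[ℝ] E) : Prop where
  contDiff : ContDiff ℝ 1 A
  isSymmetric : ∀ x, (A x : E →ₗ[ℝ] E).IsSymmetric
  le_inner : ∀ x v, lam * ‖v‖ ^ 2 ≤ ⟪A x v, v⟫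
  norm_le : ∀ x, ‖A x‖ ≤ K
  norm_fderiv_le : ∀ x, ‖fderiv ℝ A x‖ ≤ K

/-- The conormal field `AN` of the level sets of the Carleman weight. -/
def conormalField (A : E → E →L[ℝ] E) (z x : E) : E := A x (radialField z x)

/-- The principal symbol `⟨AN, N⟩` of the weight. -/
def weightSymbol (A : E → E →L[ℝ] E) (z x : E) : ℝ := ⟪conormalField A z x, radialField z x⟫

lemma norm_radialField (z x : E) : ‖radialField z x‖ = 2 * ‖x - z‖ := by
  simp [radialField, norm_smul]

lemma abs_inner_clm_le (S : E →L[ℝ] E) (a b : E) : |⟪S a, b⟫| ≤ ‖S‖ * ‖a‖ * ‖b‖ :=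
  (abs_real_inner_le_norm _ _).trans (by gcongr; exact S.le_opNorm a)

variable {lam K K' ρ : ℝ} {A : E → E →L[ℝ] E} {w : E → ℝ} {z x : E} {s τ : ℝ}

/-- A common bound for all coefficients in the pointwise Carleman inequality in dimension `n`. -/
def carlemanConst (n : ℕ) (K : ℝ) : ℝ := 5 * (n + 1) * K ^ 5

lemma mul_pow_le_carlemanConst {n m : ℕ} {c : ℝ} (hK : 1 ≤ K) (hm : m ≤ 5)
    (hc : c ≤ 5 * (n + 1)) : c * K ^ m ≤ carlemanConst n K :=
  mul_le_mul hc (pow_le_pow_right₀ hK hm) (by positivity) (by positivity)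

namespace IsC1Elliptic

lemma mono (hA : IsC1Elliptic lam K A) (h : K ≤ K') : IsC1Elliptic lam K' A where
  contDiff := hA.contDiff
  isSymmetric := hA.isSymmetric
  le_inner := hA.le_inner
  norm_le x := (hA.norm_le x).trans h
  norm_fderiv_le x := (hA.norm_fderiv_le x).trans h

lemma hasFDerivAt_conormalField (hA : IsC1Elliptic lam K A) (z x : E) :
    HasFDerivAt (conormalField A z) ((-2 : ℝ) • A x + (fderiv ℝ A x).flip (radialField z x)) x := by
  refine ((hA.contDiff.differentiable one_ne_zero x).hasFDerivAt.clm_apply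
    (hasFDerivAt_radialField z x)).congr_fderiv ?_
  ext v; simp

lemma contDiff_conormalField (hA : IsC1Elliptic lam K A) (z : E) :
    ContDiff ℝ 1 (conormalField A z) :=
  hA.contDiff.clm_apply (contDiff_radialField z)

lemma contDiff_weightSymbol (hA : IsC1Elliptic lam K A) (z : E) :
    ContDiff ℝ 1 (weightSymbol A z) :=
  (hA.contDiff_conormalField z).inner ℝ (contDiff_radialField z)

lemma fderiv_weightSymbol (hA : IsC1Elliptic lam K A) (z x v : E) :
    fderiv ℝ (weightSymbol A z) x v
      = ⟪fderiv ℝ (conormalField A z) x v, radialField z x⟫ - 2 * ⟪conormalField A z x, v⟫ := by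
  have hβ := ((hA.contDiff_conormalField z).differentiable one_ne_zero x).hasFDerivAt
  have h := (hβ.inner ℝ (hasFDerivAt_radialField z x)).fderiv
  change fderiv ℝ (weightSymbol A z) x = _ at h
  rw [h]
  simp only [neg_smul, ContinuousLinearMap.comp_apply, ContinuousLinearMap.prod_apply, neg_apply,
    smul_apply, ContinuousLinearMap.id_apply, fderivInnerCLM_apply, inner_neg_right,
    inner_smul_right]
  ring

lemma le_weightSymbol (hA : IsC1Elliptic lam K A) (hlam : 0 ≤ lam) (hρ : 0 ≤ ρ)
    (hx : ρ ≤ ‖x - z‖) : 4 * lam * ρ ^ 2 ≤ weightSymbol A z x := by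
  refine le_trans ?_ (hA.le_inner x _)
  rw [norm_radialField]
  have : ρ ^ 2 ≤ ‖x - z‖ ^ 2 := by gcongr
  nlinarith

section Bounds

variable (hA : IsC1Elliptic lam K A) (hN : ‖radialField z x‖ ≤ K)
include hA hN

lemma norm_conormalField_le : ‖conormalField A z x‖ ≤ K ^ 2 := by
  have := (A x).le_of_opNorm_le_of_le (hA.norm_le x) hN
  rwa [← sq] at this

variable (hK : 1 ≤ K)
include hK

lemma weightSymbol_le (n : ℕ) : weightSymbol A z x ≤ carlemanConst n K := calc
  weightSymbol A z x ≤ ‖A x‖ * ‖radialField z x‖ * ‖radialField z x‖ :=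
    (le_abs_self _).trans (abs_inner_clm_le _ _ _)
  _ ≤ K * K * K := by gcongr; exact hA.norm_le x
  _ = 1 * K ^ 3 := by ring
  _ ≤ carlemanConst n K :=
    mul_pow_le_carlemanConst hK (by norm_num) (by linarith [n.cast_nonneg (α := ℝ)])

lemma abs_inner_conormalField_le (n : ℕ) (g : E) :
    |⟪conormalField A z x, g⟫| ≤ carlemanConst n K * ‖g‖ :=
  (abs_real_inner_le_norm _ _).trans (by
    gcongr
    exact (hA.norm_conormalField_le hN).trans (by
      simpa only [one_mul] using
        mul_pow_le_carlemanConst (m := 2) (c := 1) hK (by norm_num)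
          (by linarith [n.cast_nonneg (α := ℝ)])))

lemma norm_fderiv_conormalField_le : ‖fderiv ℝ (conormalField A z) x‖ ≤ 3 * K ^ 2 := by
  rw [(hA.hasFDerivAt_conormalField z x).fderiv]
  have h₁ : ‖(-2 : ℝ) • A x‖ ≤ 2 * K := by
    rw [norm_smul]; norm_num; exact hA.norm_le x
  have h₂ : ‖(fderiv ℝ A x).flip (radialField z x)‖ ≤ K * K := by
    refine ContinuousLinearMap.le_of_opNorm_le_of_le _ ?_ hN
    exact (ContinuousLinearMap.opNorm_flip _).trans_le (hA.norm_fderiv_le x)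
  nlinarith [norm_add_le ((-2 : ℝ) • A x) ((fderiv ℝ A x).flip (radialField z x))]

lemma abs_fderiv_weightSymbol_le (v : E) :
    |fderiv ℝ (weightSymbol A z) x v| ≤ 5 * K ^ 3 * ‖v‖ := by
  rw [hA.fderiv_weightSymbol]
  have h₁ : |⟪fderiv ℝ (conormalField A z) x v, radialField z x⟫| ≤ 3 * K ^ 2 * ‖v‖ * K :=
    (abs_inner_clm_le _ _ _).trans (by
      gcongr; exact hA.norm_fderiv_conormalField_le hN hK)
  have h₂ : |⟪conormalField A z x, v⟫| ≤ K ^ 2 * ‖v‖ :=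
    (abs_real_inner_le_norm _ _).trans (by gcongr; exact hA.norm_conormalField_le hN)
  have h₃ : K ^ 2 * ‖v‖ ≤ K ^ 3 * ‖v‖ := by gcongr; simp
  calc _ ≤ |⟪fderiv ℝ (conormalField A z) x v, radialField z x⟫|
        + |2 * ⟪conormalField A z x, v⟫| := abs_sub _ _
    _ = |⟪fderiv ℝ (conormalField A z) x v, radialField z x⟫|
        + 2 * |⟪conormalField A z x, v⟫| := by rw [abs_mul, abs_two]
    _ ≤ 3 * K ^ 2 * ‖v‖ * K + 2 * (K ^ 3 * ‖v‖) := by gcongr; exact h₂.trans h₃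
    _ = 5 * K ^ 3 * ‖v‖ := by ring

lemma abs_fderiv_weightSymbol_apply_le (n : ℕ) (g : E) :
    |fderiv ℝ (weightSymbol A z) x (A x g)| ≤ carlemanConst n K * ‖g‖ := calc
  _ ≤ 5 * K ^ 3 * (K * ‖g‖) := (hA.abs_fderiv_weightSymbol_le hN hK _).trans (by
        gcongr; exact (A x).le_of_opNorm_le (hA.norm_le x) g)
  _ = 5 * K ^ 4 * ‖g‖ := by ring
  _ ≤ carlemanConst n K * ‖g‖ := by
    gcongr
    exact mul_pow_le_carlemanConst hK (by norm_num) (by linarith [n.cast_nonneg (α := ℝ)])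

variable [FiniteDimensional ℝ E]

lemma abs_opTrace_fderiv_conormalField_le :
    |opTrace (fderiv ℝ (conormalField A z) x)| ≤ Module.finrank ℝ E * (3 * K ^ 2) :=
  (abs_opTrace_le _).trans (by gcongr; exact hA.norm_fderiv_conormalField_le hN hK)

omit hN in
lemma abs_opTrace_le_carlemanConst :
    |opTrace (A x)| ≤ carlemanConst (Module.finrank ℝ E) K := calc
  |opTrace (A x)| ≤ Module.finrank ℝ E * K ^ 1 := by
    rw [pow_one]
    exact (abs_opTrace_le _).trans (by gcongr; exact hA.norm_le x)
  _ ≤ carlemanConst (Module.finrank ℝ E) K :=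
    mul_pow_le_carlemanConst hK (by norm_num)
      (by linarith [(Module.finrank ℝ E).cast_nonneg (α := ℝ)])

omit hN in
lemma abs_opTrace_flip_fderiv_le (g : E) :
    |opTrace ((fderiv ℝ A x).flip g)| ≤ carlemanConst (Module.finrank ℝ E) K * ‖g‖ := calc
  |opTrace ((fderiv ℝ A x).flip g)| ≤ Module.finrank ℝ E * (K * ‖g‖) :=
    (abs_opTrace_le _).trans (by
      gcongr
      exact ContinuousLinearMap.le_of_opNorm_le _
        ((ContinuousLinearMap.opNorm_flip _).trans_le (hA.norm_fderiv_le x)) g)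
  _ = Module.finrank ℝ E * K ^ 1 * ‖g‖ := by ring
  _ ≤ carlemanConst (Module.finrank ℝ E) K * ‖g‖ := by
    gcongr
    exact mul_pow_le_carlemanConst hK (by norm_num)
      (by linarith [(Module.finrank ℝ E).cast_nonneg (α := ℝ)])

lemma abs_rellich_remainder_le (g : E) :
    |⟪fderiv ℝ (conormalField A z) x (A x g), g⟫
        - 1 / 2 * ⟪fderiv ℝ A x (conormalField A z x) g, g⟫
        - 1 / 2 * ⟪A x g, g⟫ * opTrace (fderiv ℝ (conormalField A z) x)|
      ≤ 5 * (Module.finrank ℝ E + 1) * K ^ 3 * ‖g‖ ^ 2 := by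
  have hAg : ‖A x g‖ ≤ K * ‖g‖ := (A x).le_of_opNorm_le (hA.norm_le x) g
  have h₁ : |⟪fderiv ℝ (conormalField A z) x (A x g), g⟫| ≤ 3 * K ^ 2 * (K * ‖g‖) * ‖g‖ :=
    (abs_inner_clm_le _ _ _).trans (by
      gcongr; exact hA.norm_fderiv_conormalField_le hN hK)
  have h₂ : |⟪fderiv ℝ A x (conormalField A z x) g, g⟫| ≤ K * K ^ 2 * ‖g‖ * ‖g‖ :=
    (abs_inner_clm_le _ _ _).trans (by
      gcongr
      exact ContinuousLinearMap.le_of_opNorm_le_of_le _ (hA.norm_fderiv_le x)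
        (hA.norm_conormalField_le hN))
  have h₃ : |⟪A x g, g⟫ * opTrace (fderiv ℝ (conormalField A z) x)|
      ≤ K * ‖g‖ * ‖g‖ * (Module.finrank ℝ E * (3 * K ^ 2)) := by
    rw [abs_mul]
    gcongr
    · exact (abs_inner_clm_le _ _ _).trans (by gcongr; exact hA.norm_le x)
    · exact hA.abs_opTrace_fderiv_conormalField_le hN hK
  have hn : (0 : ℝ) ≤ Module.finrank ℝ E * (K ^ 3 * ‖g‖ ^ 2) := by positivity
  have hK3 : 0 ≤ K ^ 3 * ‖g‖ ^ 2 := by positivity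
  rw [abs_le] at *
  constructor <;> nlinarith

lemma abs_weightSymbol_mul_opTrace_add_le :
    |weightSymbol A z x * opTrace (fderiv ℝ (conormalField A z) x)
        + fderiv ℝ (weightSymbol A z) x (conormalField A z x)|
      ≤ carlemanConst (Module.finrank ℝ E) K := by
  have h₁ : |weightSymbol A z x * opTrace (fderiv ℝ (conormalField A z) x)|
      ≤ K * K * K * (Module.finrank ℝ E * (3 * K ^ 2)) := by
    rw [abs_mul]
    gcongr
    · exact (abs_inner_clm_le _ _ _).trans (by gcongr; exact hA.norm_le x)
    · exact hA.abs_opTrace_fderiv_conormalField_le hN hK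
  have h₂ : |fderiv ℝ (weightSymbol A z) x (conormalField A z x)| ≤ 5 * K ^ 3 * K ^ 2 :=
    (hA.abs_fderiv_weightSymbol_le hN hK _).trans (by gcongr; exact hA.norm_conormalField_le hN)
  refine (abs_add_le _ _).trans ((add_le_add h₁ h₂).trans ?_)
  have hn : (0 : ℝ) ≤ Module.finrank ℝ E * K ^ 5 := by positivity
  rw [carlemanConst]
  nlinarith

lemma carleman_pointwise (hlam : 0 < lam) (hρ : 0 < ρ) (hx : ρ ≤ ‖x - z‖) (hs : 1 ≤ s)
    (hs₁ : 10 * (carlemanConst (Module.finrank ℝ E) K) ^ 2 ≤ s * (4 * lam * ρ ^ 2) * lam)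
    (hs₂ : 8 * (carlemanConst (Module.finrank ℝ E) K) ^ 2 ≤ s * (4 * lam * ρ ^ 2) ^ 2)
    (hτ : 0 < τ) (hk : 96 ≤ τ * gaussWeight s z x) {v : E → ℝ} (hv : ContDiff ℝ 2 v)
    (hw : ∀ y, w y = exp (τ * gaussWeight s z y) * v y) :
    1 / 4 * (4 * lam * ρ ^ 2) ^ 2 * τ ^ 2 * (s * gaussWeight s z x) ^ 3 * w x ^ 2
        + divergence
          (carlemanFlux A (conormalField A z) (gaussWeight s z) (weightSymbol A z) w s τ) x
      ≤ (exp (τ * gaussWeight s z x) * nonDivOp A v x) ^ 2 / τ := by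
  have hφ := gaussWeight_pos s z x
  have hw2 : ContDiff ℝ 2 w := by
    rw [funext hw]; exact (contDiff_exp_mul_gaussWeight τ s z).mul hv
  rw [divergence_carlemanFlux (hA.isSymmetric x)
    (hA.contDiff.differentiable one_ne_zero x).hasFDerivAt
    ((hA.contDiff_conormalField z).differentiable one_ne_zero x).hasFDerivAt rfl
    ((hA.contDiff_weightSymbol z).differentiable one_ne_zero x).hasFDerivAt rfl
    (hasFDerivAt_gaussWeight s z x) hw2]
  have hC : 1 ≤ carlemanConst (Module.finrank ℝ E) K := by
    simpa using mul_pow_le_carlemanConst (n := Module.finrank ℝ E) (m := 0) (c := 1) hK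
      (by norm_num) (by linarith [(Module.finrank ℝ E).cast_nonneg (α := ℝ)])
  set g := ∇ w x
  have hR := (hA.abs_rellich_remainder_le hN hK g).trans
    (mul_le_mul_of_nonneg_right (mul_pow_le_carlemanConst hK (by norm_num) le_rfl) (sq_nonneg _))
  have halg := mul_le_mul_of_nonneg_left (carleman_algebra hC hs (by positivity) hlam
    (hA.le_weightSymbol hlam.le hρ.le hx) (hA.weightSymbol_le hN hK _) (hA.le_inner x g)
    (hA.abs_inner_conormalField_le hN hK _ g) (hA.abs_opTrace_flip_fderiv_le (x := x) hK g) hR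
    (hA.abs_fderiv_weightSymbol_apply_le hN hK _ g) (hA.abs_opTrace_le_carlemanConst (x := x) hK)
    (hA.abs_weightSymbol_mul_opTrace_add_le hN hK) hs₁ hs₂ hk
    (exp_mul_nonDivOp (hA.isSymmetric x) hv s τ z hw)) hφ.le
  rw [mul_add] at halg
  refine (le_of_eq ?_).trans (halg.trans_eq ?_)
  · ring
  · field_simp

end Bounds

end IsC1Elliptic

end CarlemanPointwise

section CarlemanEstimate

variable {E : Type*} [NormedAddCommGroup E] [InnerProductSpace ℝ E] [FiniteDimensional ℝ E]
  {A : E → E →L[ℝ] E} {β : E → E} {φ p w v : E → ℝ} {z x : E} {s τ lam K ρ : ℝ}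

lemma contDiff_carlemanFlux (hA : ContDiff ℝ 1 A) (hβ : ContDiff ℝ 1 β) (hφ : ContDiff ℝ 1 φ)
    (hp : ContDiff ℝ 1 p) (hw : ContDiff ℝ 2 w) : ContDiff ℝ 1 (carlemanFlux A β φ p w s τ) := by
  have hg : ContDiff ℝ 1 (∇ w) := contDiff_gradient hw one_add_one_eq_two.le
  have hAg : ContDiff ℝ 1 fun y => A y (∇ w y) := hA.clm_apply hg
  have hφβ : ContDiff ℝ 1 fun y => φ y • β y := hφ.smul hβ
  have hw1 : ContDiff ℝ 1 w := hw.of_le one_le_two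
  have hrel : ContDiff ℝ 1 (rellichFlux A (fun y => φ y • β y) w) :=
    ((hφβ.inner ℝ hg).smul hAg).sub ((contDiff_const.mul (hAg.inner ℝ hg)).smul hφβ)
  exact (hrel.neg.sub ((contDiff_const.mul (hφ.mul (hp.mul hw1))).smul hAg)).sub
    ((contDiff_const.mul ((hφ.pow 3).mul (hp.mul (hw1.pow 2)))).smul hβ)

lemma tsupport_carlemanFlux_subset :
    tsupport (carlemanFlux A β φ p w s τ) ⊆ tsupport w := by
  refine closure_minimal (Function.support_subset_iff'.2 fun x hx => ?_) (isClosed_tsupport w)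
  have hg : ∇ w x = 0 := gradient_of_notMem_tsupport hx
  have hw : w x = 0 := image_eq_zero_of_notMem_tsupport hx
  simp [carlemanFlux, rellichFlux, hg, hw, -inner_gradient_left, -inner_gradient_right]

lemma exists_carleman_pointwise (hlam : 0 < lam) (hρ : 0 < ρ) (K R : ℝ) :
    ∃ s τ₀ c : ℝ, 1 ≤ s ∧ 1 ≤ τ₀ ∧ 0 < c ∧ ∀ (A : E → E →L[ℝ] E) (z x : E) (v : E → ℝ) (τ : ℝ),
      IsC1Elliptic lam K A → ContDiff ℝ 2 v → ρ ≤ ‖x - z‖ → ‖x - z‖ ≤ R →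
      τ₀ ≤ τ →
        c * τ ^ 2 * (exp (τ * gaussWeight s z x) * v x) ^ 2
          + divergence (carlemanFlux A (conormalField A z) (gaussWeight s z) (weightSymbol A z)
              (fun y => exp (τ * gaussWeight s z y) * v y) s τ) x
        ≤ (exp (τ * gaussWeight s z x) * nonDivOp A v x) ^ 2 / τ := by
  set K' := max 1 (max K (2 * R))
  set C := carlemanConst (Module.finrank ℝ E) K'
  set p₀ := 4 * lam * ρ ^ 2
  have : 0 < p₀ := by positivity
  set s := 10 * C ^ 2 / (p₀ * lam) + 8 * C ^ 2 / p₀ ^ 2 + 1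
  have hs : 1 ≤ s := le_add_of_nonneg_left (by positivity)
  have hs₁ : 10 * C ^ 2 ≤ s * p₀ * lam := by
    rw [mul_assoc, ← div_le_iff₀ (by positivity)]
    have : 0 ≤ 8 * C ^ 2 / p₀ ^ 2 := by positivity
    linarith
  have hs₂ : 8 * C ^ 2 ≤ s * p₀ ^ 2 := by
    rw [← div_le_iff₀ (by positivity)]
    have : 0 ≤ 10 * C ^ 2 / (p₀ * lam) := by positivity
    linarith
  refine ⟨s, 96 * exp (s * R ^ 2), 1 / 4 * p₀ ^ 2 * exp (-(s * R ^ 2)) ^ 3, hs,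
    by linarith [one_le_exp (by positivity : 0 ≤ s * R ^ 2)], by positivity,
    fun A z x v τ hA hv hρx hxR hτ => ?_⟩
  have hτ₀ : 0 < τ := lt_of_lt_of_le (by positivity) hτ
  have hφ := exp_neg_le_gaussWeight (zero_le_one.trans hs) hxR
  have hN : ‖radialField z x‖ ≤ K' := by
    rw [norm_radialField]
    exact (by gcongr : 2 * ‖x - z‖ ≤ 2 * R).trans ((le_max_right _ _).trans (le_max_right _ _))
  have hk : 96 ≤ τ * gaussWeight s z x := calc
    (96 : ℝ) = 96 * exp (s * R ^ 2) * exp (-(s * R ^ 2)) := by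
      rw [mul_assoc, ← exp_add, add_neg_cancel, exp_zero, mul_one]
    _ ≤ τ * gaussWeight s z x := by gcongr
  refine le_trans (add_le_add_left ?_ _) <|
    (hA.mono ((le_max_left K _).trans (le_max_right _ _))).carleman_pointwise hN (le_max_left _ _)
    hlam hρ hρx hs hs₁ hs₂ hτ₀ hk hv (fun _ => rfl)
  calc _ = 1 / 4 * p₀ ^ 2 * τ ^ 2 * (1 * exp (-(s * R ^ 2))) ^ 3
        * (exp (τ * gaussWeight s z x) * v x) ^ 2 := by ring
    _ ≤ _ := by gcongr

variable [MeasurableSpace E] [BorelSpace E]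

lemma integral_sq_le_of_carleman_pointwise {c : ℝ} (hA : IsC1Elliptic lam K A)
    (hv : ContDiff ℝ 2 v) (hc : HasCompactSupport v)
    (h : ∀ x ∈ tsupport v, c * τ ^ 2 * (exp (τ * gaussWeight s z x) * v x) ^ 2
          + divergence (carlemanFlux A (conormalField A z) (gaussWeight s z) (weightSymbol A z)
              (fun y => exp (τ * gaussWeight s z y) * v y) s τ) x
        ≤ (exp (τ * gaussWeight s z x) * nonDivOp A v x) ^ 2 / τ) :
    c * τ ^ 2 * ∫ x, (exp (τ * gaussWeight s z x) * v x) ^ 2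
      ≤ (∫ x, (exp (τ * gaussWeight s z x) * nonDivOp A v x) ^ 2) / τ := by
  set e := fun x => exp (τ * gaussWeight s z x)
  have he : Continuous e := (contDiff_exp_mul_gaussWeight τ s z (n := 0)).continuous
  set F := carlemanFlux A (conormalField A z) (gaussWeight s z) (weightSymbol A z)
    (fun y => e y * v y) s τ
  have hsub : tsupport F ⊆ tsupport v :=
    tsupport_carlemanFlux_subset.trans (tsupport_mul_subset_right (f := e))
  have hF : ContDiff ℝ 1 F := contDiff_carlemanFlux hA.contDiff (hA.contDiff_conormalField z)
    (contDiff_gaussWeight s z) (hA.contDiff_weightSymbol z)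
    ((contDiff_exp_mul_gaussWeight τ s z).mul hv)
  have hFc : HasCompactSupport F := hc.of_isClosed_subset (isClosed_tsupport F) hsub
  have hint₁ : Integrable fun x => (e x * v x) ^ 2 :=
    ((he.mul hv.continuous).pow 2).integrable_of_hasCompactSupport
      (.intro hc fun x hx => by simp [image_eq_zero_of_notMem_tsupport hx])
  have hint₂ : Integrable fun x => (e x * nonDivOp A v x) ^ 2 :=
    ((he.mul (continuous_nonDivOp hA.contDiff.continuous hv)).pow 2).integrable_of_hasCompactSupport
      (.intro hc fun x hx => by simp [nonDivOp_of_notMem_tsupport hx])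
  have hdiv := integrable_divergence hF hFc
  have hsum := (hint₁.const_mul (c * τ ^ 2)).add hdiv
  have hmono := integral_mono hsum (hint₂.div_const τ) fun x => by
    by_cases hx : x ∈ tsupport v
    · exact h x hx
    · simp [image_eq_zero_of_notMem_tsupport hx, nonDivOp_of_notMem_tsupport hx,
        divergence_of_notMem_tsupport fun hx' => hx (hsub hx')]
  rwa [integral_add' (hint₁.const_mul _) hdiv, integral_divergence_eq_zero hF hFc, add_zero,
    integral_const_mul, integral_div] at hmono

lemma exp_mul_mul_sq (a t b : ℝ) : (exp (a * t) * b) ^ 2 = exp (2 * a * t) * b ^ 2 := by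
  rw [mul_pow, ← exp_nat_mul]
  congr 2
  push_cast
  ring

theorem carleman_estimate (hlam : 0 < lam) (hρ : 0 < ρ) (K R : ℝ) :
    ∃ s τ₀ C : ℝ, 1 ≤ s ∧ 1 ≤ τ₀ ∧ 0 < C ∧ ∀ (A : E → E →L[ℝ] E) (z : E) (v : E → ℝ) (τ : ℝ),
      IsC1Elliptic lam K A → ContDiff ℝ 2 v → HasCompactSupport v →
      (∀ x ∈ tsupport v, ρ ≤ ‖x - z‖ ∧ ‖x - z‖ ≤ R) → τ₀ ≤ τ →
        τ ^ 3 * ∫ x, exp (2 * τ * gaussWeight s z x) * v x ^ 2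
          ≤ C * ∫ x, exp (2 * τ * gaussWeight s z x) * nonDivOp A v x ^ 2 := by
  obtain ⟨s, τ₀, c, hs, hτ₀, hc, h⟩ := exists_carleman_pointwise (E := E) hlam hρ K R
  refine ⟨s, τ₀, c⁻¹, hs, hτ₀, inv_pos.2 hc, fun A z v τ hA hv hvc hsupp hτ => ?_⟩
  have hτ' : 0 < τ := by linarith
  have := integral_sq_le_of_carleman_pointwise hA hv hvc fun x hx =>
    h A z x v τ hA hv (hsupp x hx).1 (hsupp x hx).2 hτ
  simp_rw [exp_mul_mul_sq] at this
  rw [le_div_iff₀ hτ'] at this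
  rw [le_inv_mul_iff₀ hc]
  linarith

end CarlemanEstimate

section HalfSpace

variable {d : ℕ}

lemma measurableSet_upperHalf : MeasurableSet (upperHalf d) :=
  measurableSet_lt measurable_const (by fun_prop)

lemma measurableSet_Bplus (r : ℝ) : MeasurableSet (Bplus d r) :=
  measurableSet_ball.inter measurableSet_upperHalf

lemma measurableSet_hyperplane : MeasurableSet {x : Euc d | x (Fin.last d) = 0} :=
  measurableSet_eq_fun (by fun_prop) measurable_const

lemma measurableSet_Gam (r : ℝ) : MeasurableSet (Gam d r) :=
  measurableSet_ball.inter measurableSet_hyperplane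

lemma volume_hyperplane : volume {x : Euc d | x (Fin.last d) = 0} = 0 :=
  Measure.addHaar_submodule volume
    (LinearMap.ker (EuclideanSpace.proj (Fin.last d) : Euc d →L[ℝ] ℝ).toLinearMap) fun h => by
      have := congrArg (fun g => g (EuclideanSpace.single (Fin.last d) (1 : ℝ)))
        (LinearMap.ker_eq_top.1 h)
      simp at this

/-- The isometric embedding of `ℝ^d` onto the hyperplane `x_d = 0`. -/
def flatEmb (d : ℕ) (y : EuclideanSpace ℝ (Fin d)) : Euc d :=
  WithLp.toLp 2 ((Fin.last d).insertNth (0 : ℝ) (WithLp.ofLp y))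

lemma isometry_flatEmb (d : ℕ) : Isometry (flatEmb d) := by
  refine Isometry.of_dist_eq fun x y => ?_
  rw [EuclideanSpace.dist_eq, EuclideanSpace.dist_eq, Fin.sum_univ_castSucc]
  simp [flatEmb, Fin.insertNth_last']

lemma range_flatEmb (d : ℕ) : Set.range (flatEmb d) = {x : Euc d | x (Fin.last d) = 0} := by
  ext x
  refine ⟨?_, fun hx => ⟨WithLp.toLp 2 fun i => x i.castSucc, ?_⟩⟩
  · rintro ⟨y, rfl⟩
    simp [flatEmb]
  · ext i
    refine Fin.lastCases ?_ (fun j => ?_) i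
    · simpa [flatEmb] using hx.symm
    · simp [flatEmb]

lemma flatEmb_zero (d : ℕ) : flatEmb d 0 = 0 := by
  ext i
  refine Fin.lastCases ?_ (fun j => ?_) i <;> simp [flatEmb]

/-- The ratio of `d`-dimensional Lebesgue measure to the Hausdorff measure `μH[d]`. -/
def flatDensity (d : ℕ) : ℝ :=
  (Measure.addHaarScalarFactor (volume : Measure (EuclideanSpace ℝ (Fin d))) (μH[d]) : ℝ)

lemma flatDensity_nonneg (d : ℕ) : 0 ≤ flatDensity d := NNReal.coe_nonneg _

lemma integral_flatEmb (f : Euc d → ℝ) :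
    ∫ y, f (flatEmb d y)
      = flatDensity d * ∫ x in {x : Euc d | x (Fin.last d) = 0}, f x ∂(surf d) := by
  have h := (isometry_flatEmb d).isClosedEmbedding.measurableEmbedding.integral_map
    (μ := (μH[d] : Measure (EuclideanSpace ℝ (Fin d)))) f
  rw [(isometry_flatEmb d).map_hausdorffMeasure (Or.inl (by positivity)), range_flatEmb] at h
  rw [← EuclideanSpace.euclideanHausdorffMeasure_eq_volume,
    Measure.euclideanHausdorffMeasure_def, integral_smul_nnreal_measure, ← h]
  rfl

lemma surf_Gam_lt_top (r : ℝ) : surf d (Gam d r) < ⊤ := by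
  have h := (isometry_flatEmb d).hausdorffMeasure_preimage (d := (d : ℝ))
    (Or.inl (by positivity)) (ball (0 : Euc d) r)
  rw [range_flatEmb, ← flatEmb_zero, (isometry_flatEmb d).preimage_ball, flatEmb_zero] at h
  exact h ▸ measure_ball_lt_top

end HalfSpace

section DivergenceTheorem

variable {d : ℕ} {f g : Euc d → ℝ}

/-- The lower corner of a box containing `Bplus d 2`, with one face in the hyperplane `x_d = 0`. -/
def halfBoxLower (d : ℕ) (i : Fin (d + 1)) : ℝ := if i = Fin.last d then 0 else -2

/-- A box containing `Bplus d 2`, with one face in the hyperplane `x_d = 0`. -/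
def halfBox (d : ℕ) : Set (Euc d) := WithLp.ofLp ⁻¹' Set.Icc (halfBoxLower d) fun _ => 2

lemma measurableSet_halfBox : MeasurableSet (halfBox d) :=
  (by fun_prop : Measurable (WithLp.ofLp : Euc d → _)) measurableSet_Icc

lemma Bplus_ae_eq_halfBox_inter : Bplus d 2 =ᵐ[volume] (halfBox d ∩ ball 0 2 : Set (Euc d)) := by
  have h₀ : ∀ᵐ x : Euc d, x (Fin.last d) ≠ 0 := by
    rw [ae_iff]; simpa using volume_hyperplane
  filter_upwards [h₀] with x hx
  refine propext ⟨fun ⟨hb, hu⟩ => ⟨?_, hb⟩, fun ⟨hb, hball⟩ => ⟨hball, ?_⟩⟩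
  · have hx2 (i) : |x i| ≤ 2 :=
      (PiLp.norm_apply_le x i).trans (mem_ball_zero_iff.1 hb).le
    refine ⟨fun i => ?_, fun i => (abs_le.1 (hx2 i)).2⟩
    rw [halfBoxLower]
    split_ifs with h
    · exact h ▸ (show 0 < x (Fin.last d) from hu).le
    · exact (abs_le.1 (hx2 i)).1
  · have := hb.1 (Fin.last d)
    rw [halfBoxLower, if_pos rfl] at this
    exact lt_of_le_of_ne this hx.symm

lemma setIntegral_Bplus_eq_halfBox (hg : ∀ x ∉ ball (0 : Euc d) 2, g x = 0) :
    ∫ x in Bplus d 2, g x = ∫ x in halfBox d, g x := by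
  rw [setIntegral_congr_set Bplus_ae_eq_halfBox_inter]
  exact (setIntegral_eq_of_subset_of_forall_sdiff_eq_zero measurableSet_halfBox
    Set.inter_subset_left fun x hx => hg x fun h => hx.2 ⟨hx.1, h⟩).symm

lemma integrableOn_halfBox (hg : ∀ x ∉ ball (0 : Euc d) 2, g x = 0)
    (hi : IntegrableOn g (Bplus d 2)) : IntegrableOn g (halfBox d) :=
  (hi.congr_set_ae Bplus_ae_eq_halfBox_inter.symm).of_forall_sdiff_eq_zero measurableSet_halfBox
    fun x hx => hg x fun h => hx.2 ⟨hx.1, h⟩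

lemma sum_apply_mul_single (L : Euc d →L[ℝ] ℝ) (v : Euc d) :
    ∑ i, v i * L (EuclideanSpace.single i 1) = L v := by
  conv_rhs => rw [← (EuclideanSpace.basisFun _ ℝ).sum_repr v, map_sum]
  simp

lemma exists_two_le_abs_of_notMem_face {y : Fin d → ℝ}
    (hy : y ∉ Set.Icc (halfBoxLower d ∘ (Fin.last d).succAbove) fun _ => 2) : ∃ j, 2 ≤ |y j| := by
  by_contra! hcon
  exact hy ⟨fun j => by simpa [halfBoxLower] using (abs_lt.1 (hcon j)).1.le,
    fun j => (abs_lt.1 (hcon j)).2.le⟩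

/-- Only the face in `x_d = 0` contributes to the boundary integral. -/
lemma integral_halfBox_fderiv (hf : Differentiable ℝ f)
    (hz : ∀ (x : Euc d) i, 2 ≤ |x i| → f x = 0) (v : Euc d)
    (hi : IntegrableOn (fun x => fderiv ℝ f x v) (halfBox d)) :
    ∫ x in halfBox d, fderiv ℝ f x v
      = -(v (Fin.last d) * ∫ y : Fin d → ℝ, f (flatEmb d (WithLp.toLp 2 y))) := by
  have mp := EuclideanSpace.volume_preserving_symm_measurableEquiv_toLp (Fin (d + 1))
  have hemb := (MeasurableEquiv.toLp 2 (Fin (d + 1) → ℝ)).symm.measurableEmbedding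
  let L : (Fin (d + 1) → ℝ) →L[ℝ] Euc d :=
    (PiLp.continuousLinearEquiv 2 ℝ (fun _ : Fin (d + 1) => ℝ)).symm
  have hsum (x : Fin (d + 1) → ℝ) :
      ∑ i, (v i • (fderiv ℝ f (L x)).comp L) (Pi.single i 1) = fderiv ℝ f (L x) v :=
    sum_apply_mul_single (fderiv ℝ f (L x)) v
  have key := integral_divergence_of_hasFDerivAt_off_countable' (halfBoxLower d) (fun _ => 2)
    (fun i => by rw [halfBoxLower]; split_ifs <;> norm_num) (fun i x => v i * f (L x))
    (fun i x => v i • (fderiv ℝ f (L x)).comp L) ∅ Set.countable_empty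
    (fun i => (continuous_const.mul (hf.continuous.comp L.continuous)).continuousOn)
    (fun x _ i => ((hf (L x)).hasFDerivAt.comp x L.hasFDerivAt).const_mul (v i))
    (by
      simp_rw [hsum]
      exact (mp.integrableOn_comp_preimage hemb (f := fun x => fderiv ℝ f (L x) v)).1 hi)
  simp_rw [hsum] at key
  have hpre : ∫ x in halfBox d, fderiv ℝ f x v
      = ∫ x in Set.Icc (halfBoxLower d) fun _ => 2, fderiv ℝ f (L x) v :=
    mp.setIntegral_preimage_emb hemb (fun x => fderiv ℝ f (L x) v) _
  rw [hpre, key, Finset.sum_eq_single (Fin.last d)]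
  · have hup (y : Fin d → ℝ) : f (L ((Fin.last d).insertNth 2 y)) = 0 :=
      hz _ (Fin.last d) (by simp [L])
    rw [halfBoxLower, if_pos rfl]
    simp only [hup, mul_zero, integral_zero, zero_sub]
    rw [← integral_const_mul, setIntegral_eq_integral_of_forall_compl_eq_zero]
    · rfl
    · intro y hy
      obtain ⟨j, hj⟩ := exists_two_le_abs_of_notMem_face hy
      rw [hz _ j.castSucc (by simpa [L, Fin.insertNth_last'] using hj), mul_zero]
  · intro i _ hi
    have hup (y : Fin d → ℝ) : f (L (i.insertNth 2 y)) = 0 := hz _ i (by simp [L])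
    have hlow (y : Fin d → ℝ) : f (L (i.insertNth (halfBoxLower d i) y)) = 0 :=
      hz _ i (by simp [L, halfBoxLower, hi])
    simp [hup, hlow]
  · simp

lemma integral_Bplus_fderiv (hf : Differentiable ℝ f) (hs : tsupport f ⊆ ball 0 2) (v : Euc d)
    (hi : IntegrableOn (fun x => fderiv ℝ f x v) (Bplus d 2)) :
    ∫ x in Bplus d 2, fderiv ℝ f x v
      = -(flatDensity d * v (Fin.last d) * ∫ x in Gam d 2, f x ∂(surf d)) := by
  have hz (x) (hx : x ∉ ball (0 : Euc d) 2) : f x = 0 :=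
    image_eq_zero_of_notMem_tsupport fun h => hx (hs h)
  have hz' (x) (hx : x ∉ ball (0 : Euc d) 2) : fderiv ℝ f x v = 0 := by
    rw [fderiv_of_notMem_tsupport ℝ fun h => hx (hs h)]; rfl
  have hbox (x : Euc d) (i) (h : 2 ≤ |x i|) : f x = 0 := hz x fun hx =>
    (h.trans (PiLp.norm_apply_le x i)).not_gt (mem_ball_zero_iff.1 hx)
  have hflat : ∫ y : Fin d → ℝ, f (flatEmb d (WithLp.toLp 2 y)) = ∫ y, f (flatEmb d y) :=
    (EuclideanSpace.volume_preserving_symm_measurableEquiv_toLp (Fin d)).symm.integral_comp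
      (MeasurableEquiv.measurableEmbedding _) fun y => f (flatEmb d y)
  have hGam : ∫ x in {x : Euc d | x (Fin.last d) = 0}, f x ∂(surf d)
      = ∫ x in Gam d 2, f x ∂(surf d) :=
    setIntegral_eq_of_subset_of_forall_sdiff_eq_zero measurableSet_hyperplane
      Set.inter_subset_right fun x hx => hz x fun h => hx.2 ⟨h, hx.1⟩
  rw [setIntegral_Bplus_eq_halfBox hz', integral_halfBox_fderiv hf hbox v
    (integrableOn_halfBox hz' hi), hflat, integral_flatEmb, hGam]
  ring

end DivergenceTheorem

section Mollifier

variable {d : ℕ} {ε : ℝ}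

/-- The inward unit normal `e_d` of the half space. -/
def inwardNormal (d : ℕ) : Euc d := EuclideanSpace.single (Fin.last d) 1

lemma norm_inwardNormal : ‖inwardNormal d‖ = 1 := by simp [inwardNormal]

lemma abs_last_le_norm (x : Euc d) : |x (Fin.last d)| ≤ ‖x‖ := PiLp.norm_apply_le x _

/-- The unscaled profile of `mollifier`: a normalized bump supported around `e_d`. -/
def mollifierProfile (d : ℕ) : Euc d → ℝ :=
  (⟨1 / 4, 1 / 2, by norm_num, by norm_num⟩ : ContDiffBump (inwardNormal d)).normed volume

/-- The one-sided mollifier at scale `ε`. It is supported in the lower half space, so that a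
convolution with it samples a function at `x` only at points lying strictly above `x`. -/
def mollifier (d : ℕ) (ε : ℝ) (x : Euc d) : ℝ :=
  (ε ^ (d + 1))⁻¹ * mollifierProfile d (-(ε⁻¹ • x))

lemma contDiff_mollifierProfile {n : ℕ∞} : ContDiff ℝ n (mollifierProfile d) :=
  ContDiffBump.contDiff_normed _

lemma tsupport_mollifierProfile :
    tsupport (mollifierProfile d) = closedBall (inwardNormal d) (1 / 2) :=
  ContDiffBump.tsupport_normed_eq _

lemma mollifier_nonneg (hε : 0 < ε) (x : Euc d) : 0 ≤ mollifier d ε x :=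
  mul_nonneg (by positivity) (ContDiffBump.nonneg_normed _ _)

lemma contDiff_mollifier {n : ℕ∞} : ContDiff ℝ n (mollifier d ε) :=
  contDiff_const.mul (contDiff_mollifierProfile.comp (contDiff_id.const_smul _).neg)

lemma continuous_mollifier : Continuous (mollifier d ε) := (contDiff_mollifier (n := 0)).continuous

lemma continuous_gradient_mollifier : Continuous (∇ (mollifier d ε)) :=
  continuous_gradient (contDiff_mollifier (n := 1))

lemma tsupport_mollifier_subset (hε : 0 < ε) :
    tsupport (mollifier d ε) ⊆ {x | ‖x‖ < 2 * ε ∧ x (Fin.last d) < 0} := by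
  intro x hx
  have hsub : tsupport (mollifier d ε) ⊆
      (fun x => -(ε⁻¹ • x)) ⁻¹' closedBall (inwardNormal d) (1 / 2) := by
    refine closure_minimal (fun y hy => ?_) (isClosed_closedBall.preimage (by fun_prop))
    rw [← tsupport_mollifierProfile]
    exact subset_tsupport _ fun h => hy (by simp [mollifier, h])
  have hx' : ‖-(ε⁻¹ • x) - inwardNormal d‖ ≤ 1 / 2 := by
    simpa only [Set.mem_preimage, mem_closedBall, dist_eq_norm] using hsub hx
  constructor
  · have h : ‖-(ε⁻¹ • x)‖ ≤ 3 / 2 := by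
      linarith [norm_le_norm_add_norm_sub' (-(ε⁻¹ • x)) (inwardNormal d),
        norm_inwardNormal (d := d)]
    rw [norm_neg, norm_smul, norm_inv, Real.norm_of_nonneg hε.le, inv_mul_le_iff₀ hε] at h
    linarith
  · have h := (abs_le.1 ((abs_last_le_norm _).trans hx')).1
    simp only [inwardNormal, PiLp.sub_apply, PiLp.neg_apply, PiLp.smul_apply, smul_eq_mul,
      PiLp.single_apply, if_true] at h
    exact (pos_iff_neg_of_mul_neg (show ε⁻¹ * x (Fin.last d) < 0 by linarith)).1 (by positivity)

lemma hasCompactSupport_mollifier (hε : 0 < ε) : HasCompactSupport (mollifier d ε) :=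
  .of_support_subset_isCompact (isCompact_closedBall 0 (2 * ε)) fun x hx => by
    simpa using (tsupport_mollifier_subset hε (subset_tsupport _ hx)).1.le

lemma integrable_mollifier (hε : 0 < ε) : Integrable (mollifier d ε) :=
  continuous_mollifier.integrable_of_hasCompactSupport (hasCompactSupport_mollifier hε)

lemma integral_comp_neg_inv_smul (hε : 0 < ε) (f : Euc d → ℝ) :
    ∫ x, f (-(ε⁻¹ • x)) = ε ^ (d + 1) * ∫ x, f x := by
  have h := Measure.integral_comp_smul (volume : Measure (Euc d)) f (-ε⁻¹)
  simp only [neg_smul, finrank_euclideanSpace, Fintype.card_fin, smul_eq_mul] at h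
  rw [h, abs_inv, abs_pow, abs_neg, abs_inv, abs_of_pos hε, inv_pow, inv_inv]

lemma integral_mollifier (hε : 0 < ε) : ∫ x, mollifier d ε x = 1 := by
  simp only [mollifier]
  rw [integral_const_mul, integral_comp_neg_inv_smul hε, mollifierProfile,
    ContDiffBump.integral_normed, mul_one, inv_mul_cancel₀ (by positivity)]

lemma gradient_mollifier (ε : ℝ) (x : Euc d) :
    ∇ (mollifier d ε) x =
      -((ε ^ (d + 1))⁻¹ * ε⁻¹) • ∇ (mollifierProfile d) (-(ε⁻¹ • x)) := by
  have hprofile : HasFDerivAt (mollifierProfile d)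
      (innerSL ℝ (∇ (mollifierProfile d) (-(ε⁻¹ • x)))) (-(ε⁻¹ • x)) :=
    ((contDiff_mollifierProfile (n := 1)).differentiable (by simp) _).hasGradientAt.hasFDerivAt
  refine (hasGradientAt_of_hasFDerivAt ((hprofile.comp x
    ((hasFDerivAt_id x).const_smul ε⁻¹).neg).const_mul ((ε ^ (d + 1))⁻¹)) fun v => ?_).gradient
  simp only [ContinuousLinearMap.comp_neg, ContinuousLinearMap.comp_smulₛₗ, map_inv₀,
    ringHom_apply, ContinuousLinearMap.comp_id, smul_neg, neg_apply, smul_apply,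
    coe_innerSL_apply, inner_gradient_left, smul_eq_mul, neg_smul, inner_neg_left,
    inner_smul_left, neg_inj]
  ring

lemma exists_mollifier_le (hε : 0 < ε) :
    ∃ C, ∀ x : Euc d, mollifier d ε x ≤ C ∧ ‖∇ (mollifier d ε) x‖ ≤ C := by
  obtain ⟨a, ha⟩ := (hasCompactSupport_mollifier (d := d) hε).exists_bound_of_continuous
    continuous_mollifier
  obtain ⟨b, hb⟩ := (hasCompactSupport_gradient
    (hasCompactSupport_mollifier (d := d) hε)).exists_bound_of_continuous
    continuous_gradient_mollifier
  exact ⟨max a b, fun x => ⟨(le_abs_self _).trans ((ha x).trans (le_max_left _ _)),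
    (hb x).trans (le_max_right _ _)⟩⟩

/-- A kernel dominating both `mollifier d ε` and `ε` times its gradient, of total mass independent
of `ε`; it controls mollification and its commutators simultaneously. -/
def mollifierMajorant (d : ℕ) (ε : ℝ) (x : Euc d) : ℝ :=
  mollifier d ε x + ε * ‖∇ (mollifier d ε) x‖

/-- The total mass of `mollifierMajorant d ε`, for every `ε > 0`. -/
def majorantMass (d : ℕ) : ℝ := 1 + ∫ x, ‖∇ (mollifierProfile d) x‖

lemma majorantMass_pos : 0 < majorantMass d :=
  add_pos_of_pos_of_nonneg one_pos (integral_nonneg fun _ => norm_nonneg _)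

lemma mollifierMajorant_nonneg (hε : 0 < ε) (x : Euc d) : 0 ≤ mollifierMajorant d ε x :=
  add_nonneg (mollifier_nonneg hε x) (by positivity)

lemma mollifier_le_majorant (hε : 0 < ε) (x : Euc d) : mollifier d ε x ≤ mollifierMajorant d ε x :=
  le_add_of_nonneg_right (by positivity)

lemma norm_gradient_mollifier_le_majorant (hε : 0 < ε) (x : Euc d) :
    ε * ‖∇ (mollifier d ε) x‖ ≤ mollifierMajorant d ε x :=
  le_add_of_nonneg_left (mollifier_nonneg hε x)

lemma continuous_mollifierMajorant : Continuous (mollifierMajorant d ε) :=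
  continuous_mollifier.add (continuous_const.mul continuous_gradient_mollifier.norm)

lemma mollifierMajorant_of_notMem_tsupport {x : Euc d} (hx : x ∉ tsupport (mollifier d ε)) :
    mollifierMajorant d ε x = 0 := by
  rw [mollifierMajorant, gradient_of_notMem_tsupport hx, image_eq_zero_of_notMem_tsupport hx]
  simp

lemma integrable_mollifierMajorant (hε : 0 < ε) : Integrable (mollifierMajorant d ε) :=
  continuous_mollifierMajorant.integrable_of_hasCompactSupport
    (.intro (hasCompactSupport_mollifier hε) fun _ => mollifierMajorant_of_notMem_tsupport)

lemma integral_mollifierMajorant (hε : 0 < ε) : ∫ x, mollifierMajorant d ε x = majorantMass d := by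
  have hi : Integrable fun x => ε * ‖∇ (mollifier d ε) x‖ :=
    (continuous_gradient_mollifier.norm.integrable_of_hasCompactSupport
      (hasCompactSupport_gradient (hasCompactSupport_mollifier hε)).norm).const_mul ε
  simp only [mollifierMajorant]
  rw [integral_add (integrable_mollifier hε) hi, integral_mollifier hε, majorantMass]
  congr 1
  simp only [gradient_mollifier, norm_smul, norm_neg]
  rw [integral_const_mul, integral_const_mul,
    integral_comp_neg_inv_smul hε fun x => ‖∇ (mollifierProfile d) x‖,
    Real.norm_of_nonneg (by positivity)]
  field_simp

end Mollifier

section MollifiedCoefficients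

variable {F : Type*} [NormedAddCommGroup F] [NormedSpace ℝ F] {d : ℕ} {ε K : ℝ} {A : Euc d → F}

/-- The mollification of a coefficient field by `mollifier d ε`. -/
def mollify (ε : ℝ) (A : Euc d → F) (x : Euc d) : F := ∫ t, mollifier d ε t • A (x - t)

lemma integrable_mollifier_smul (hε : 0 < ε) (hA : Continuous A) (x : Euc d) :
    Integrable fun t => mollifier d ε t • A (x - t) := by
  have hK := continuous_mollifier (d := d) (ε := ε)
  exact Continuous.integrable_of_hasCompactSupport (by fun_prop)
    (hasCompactSupport_mollifier hε).smul_right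

lemma contDiff_mollify (hε : 0 < ε) (hA : Continuous A) :
    ContDiff ℝ 1 (mollify ε A) :=
  (hasCompactSupport_mollifier hε).contDiff_convolution_left (ContinuousLinearMap.lsmul ℝ ℝ)
    (contDiff_mollifier (n := 1)) hA.locallyIntegrable

lemma norm_integral_mollifier_smul_le (hε : 0 < ε) {G : Euc d → F} {c : ℝ}
    (h : ∀ t, ‖t‖ < 2 * ε → ‖G t‖ ≤ c) : ‖∫ t, mollifier d ε t • G t‖ ≤ c := by
  refine (norm_integral_le_of_norm_le ((integrable_mollifier hε).mul_const c)
    (.of_forall fun t => ?_)).trans_eq ?_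
  · rw [norm_smul, Real.norm_of_nonneg (mollifier_nonneg hε t)]
    by_cases ht : t ∈ tsupport (mollifier d ε)
    · exact mul_le_mul_of_nonneg_left (h t (tsupport_mollifier_subset hε ht).1)
        (mollifier_nonneg hε t)
    · simp [image_eq_zero_of_notMem_tsupport ht]
  · rw [integral_mul_const, integral_mollifier hε, one_mul]

lemma mollify_sub [CompleteSpace F] (hε : 0 < ε) (hA : Continuous A) (x : Euc d) (B : F) :
    mollify ε A x - B = ∫ t, mollifier d ε t • (A (x - t) - B) := by
  simp_rw [smul_sub]
  rw [integral_sub (integrable_mollifier_smul hε hA x) ((integrable_mollifier hε).smul_const B),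
    integral_smul_const, integral_mollifier hε, one_smul, mollify]

lemma norm_mollify_le (hε : 0 < ε) (hA : ∀ x, ‖A x‖ ≤ K) (x : Euc d) :
    ‖mollify ε A x‖ ≤ K :=
  norm_integral_mollifier_smul_le hε fun _ _ => hA _

omit [NormedSpace ℝ F] in
lemma norm_sub_le_of_lipschitzWith (hK : 0 ≤ K) (h : LipschitzWith K.toNNReal A) (x y : Euc d) :
    ‖A x - A y‖ ≤ K * ‖x - y‖ := by
  simpa only [Real.coe_toNNReal _ hK] using h.norm_sub_le x y

lemma norm_mollify_sub_le [CompleteSpace F] (hε : 0 < ε) (hK : 0 ≤ K)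
    (h : LipschitzWith K.toNNReal A) {x y : Euc d} (hxy : ‖x - y‖ ≤ 2 * ε) :
    ‖mollify ε A x - A y‖ ≤ 4 * K * ε := by
  rw [mollify_sub hε h.continuous]
  refine norm_integral_mollifier_smul_le hε fun t ht => ?_
  have hdist : ‖x - t - y‖ ≤ 4 * ε := by
    rw [sub_right_comm]
    linarith [norm_sub_le (x - y) t]
  calc ‖A (x - t) - A y‖ ≤ K * ‖x - t - y‖ := norm_sub_le_of_lipschitzWith hK h _ _
    _ ≤ K * (4 * ε) := by gcongr
    _ = 4 * K * ε := by ring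

lemma lipschitzWith_mollify (hε : 0 < ε) (hK : 0 ≤ K) (h : LipschitzWith K.toNNReal A) :
    LipschitzWith K.toNNReal (mollify ε A) := by
  refine .of_dist_le_mul fun x y => ?_
  rw [dist_eq_norm, dist_eq_norm, Real.coe_toNNReal _ hK, mollify, mollify,
    ← integral_sub (integrable_mollifier_smul hε h.continuous x)
      (integrable_mollifier_smul hε h.continuous y)]
  simp_rw [← smul_sub]
  refine norm_integral_mollifier_smul_le hε fun t _ => ?_
  exact (norm_sub_le_of_lipschitzWith hK h _ _).trans_eq (by rw [sub_sub_sub_cancel_right])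

lemma inner_mollify_apply (hε : 0 < ε) {A : Euc d → Euc d →L[ℝ] Euc d} (hA : Continuous A)
    (x v w : Euc d) :
    ⟪mollify ε A x v, w⟫ = ∫ t, mollifier d ε t * ⟪A (x - t) v, w⟫ := by
  have hi := integrable_mollifier_smul hε hA x
  rw [mollify, ContinuousLinearMap.integral_apply hi, real_inner_comm,
    ← integral_inner (f := fun t => (mollifier d ε t • A (x - t)) v)
      ((ContinuousLinearMap.apply ℝ (Euc d) v).integrable_comp hi)]
  simp only [smul_apply, inner_smul_right, real_inner_comm w]

lemma isC1Elliptic_mollify (hε : 0 < ε) (hK : 0 ≤ K) {lam : ℝ} {A : Euc d → Euc d →L[ℝ] Euc d}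
    (hsymm : IsSymmA d A) (hell : ∀ x v, lam * ‖v‖ ^ 2 ≤ ⟪A x v, v⟫) (hbdd : ∀ x, ‖A x‖ ≤ K)
    (hlip : LipschitzWith K.toNNReal A) : IsC1Elliptic lam K (mollify ε A) where
  contDiff := contDiff_mollify hε hlip.continuous
  isSymmetric x v w := by
    simp only [ContinuousLinearMap.coe_coe]
    rw [real_inner_comm (mollify ε A x w), inner_mollify_apply hε hlip.continuous,
      inner_mollify_apply hε hlip.continuous]
    exact integral_congr_ae (.of_forall fun t => by simp only [hsymm _ v w, real_inner_comm])
  le_inner x v := by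
    have hA := hlip.continuous
    have hM := continuous_mollifier (d := d) (ε := ε)
    rw [inner_mollify_apply hε hA, ← one_mul (lam * _), ← integral_mollifier (d := d) hε,
      ← integral_mul_const]
    refine integral_mono ((integrable_mollifier hε).mul_const _) ?_ fun t =>
      mul_le_mul_of_nonneg_left (hell _ _) (mollifier_nonneg hε t)
    exact Continuous.integrable_of_hasCompactSupport (by fun_prop)
      (hasCompactSupport_mollifier hε).mul_right
  norm_le := norm_mollify_le hε hbdd
  norm_fderiv_le x := by
    simpa only [Real.coe_toNNReal _ hK] using
      norm_fderiv_le_of_lipschitz ℝ (lipschitzWith_mollify hε hK hlip) (x₀ := x)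

end MollifiedCoefficients

section HalfBallMeasures

variable {d : ℕ}

/-- Lebesgue measure on the half ball `B_2^+`. -/
abbrev bulkMeasure (d : ℕ) : Measure (Euc d) := volume.restrict (Bplus d 2)

/-- Surface measure on the flat boundary part `Γ_2`. -/
abbrev flatMeasure (d : ℕ) : Measure (Euc d) := (surf d).restrict (Gam d 2)

instance : IsFiniteMeasure (bulkMeasure d) :=
  isFiniteMeasure_restrict.2
    ((measure_mono Set.inter_subset_left).trans_lt measure_ball_lt_top).ne

instance : IsFiniteMeasure (flatMeasure d) := isFiniteMeasure_restrict.2 (surf_Gam_lt_top 2).ne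

lemma ae_bulkMeasure {p : Euc d → Prop} (h : ∀ x ∈ Bplus d 2, p x) : ∀ᵐ x ∂bulkMeasure d, p x :=
  ae_restrict_of_forall_mem (measurableSet_Bplus 2) h

lemma ae_flatMeasure {p : Euc d → Prop} (h : ∀ x ∈ Gam d 2, p x) : ∀ᵐ x ∂flatMeasure d, p x :=
  ae_restrict_of_forall_mem (measurableSet_Gam 2) h

variable {E F G : Type*} [NormedAddCommGroup E] [NormedAddCommGroup F] [NormedSpace ℝ F]
  [NormedAddCommGroup G] [NormedSpace ℝ G]

lemma exists_norm_le_on_closedBall {f : Euc d → E} (hf : Continuous f) (R : ℝ) :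
    ∃ C, ∀ x ∈ closedBall (0 : Euc d) R, ‖f x‖ ≤ C :=
  (isCompact_closedBall 0 R).exists_bound_of_continuousOn hf.continuousOn

lemma integrable_flatMeasure_of_continuous {f : Euc d → E} (hf : Continuous f) :
    Integrable f (flatMeasure d) := by
  obtain ⟨C, hC⟩ := exists_norm_le_on_closedBall hf 2
  exact (integrable_const C).mono' hf.aestronglyMeasurable
    (ae_flatMeasure fun x hx => hC x (ball_subset_closedBall hx.1))

lemma integrable_bulkMeasure_of_continuous {f : Euc d → E} (hf : Continuous f) :
    Integrable f (bulkMeasure d) := by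
  obtain ⟨C, hC⟩ := exists_norm_le_on_closedBall hf 2
  exact (integrable_const C).mono' hf.aestronglyMeasurable
    (ae_bulkMeasure fun x hx => hC x (ball_subset_closedBall hx.1))

lemma integrable_bilin_of_continuous [NormedSpace ℝ E] (L : E →L[ℝ] F →L[ℝ] G) {k : Euc d → E}
    {f : Euc d → F} (hk : Continuous k) (hf : Integrable f (bulkMeasure d)) :
    Integrable (fun y => L (k y) (f y)) (bulkMeasure d) := by
  obtain ⟨C, hC⟩ := exists_norm_le_on_closedBall (L.continuous.comp hk) 2
  refine (hf.norm.const_mul C).mono'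
    (L.aestronglyMeasurable_comp₂ hk.aestronglyMeasurable hf.aestronglyMeasurable)
    (ae_bulkMeasure fun y hy => ((L (k y)).le_opNorm _).trans ?_)
  gcongr
  exact hC y (ball_subset_closedBall hy.1)

end HalfBallMeasures

section Energy

variable {d : ℕ} {u : Euc d → ℝ}

lemma measurable_gradient (u : Euc d → ℝ) : Measurable (∇ u) :=
  (InnerProductSpace.toDual ℝ (Euc d)).symm.continuous.measurable.comp (measurable_fderiv ℝ u)

lemma integrable_norm_gradient_sq (hu : MemW12 d u) :
    Integrable (fun y => ‖∇ u y‖ ^ 2) (bulkMeasure d) :=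
  ((show Integrable _ (bulkMeasure d) from hu.2.1).sub
    (integrable_bulkMeasure_of_continuous (hu.1.continuous.pow 2))).congr
    (.of_forall fun _ => add_sub_cancel_left _ _)

lemma integrable_gradient (hu : MemW12 d u) : Integrable (∇ u) (bulkMeasure d) :=
  (((memLp_two_iff_integrable_sq_norm (measurable_gradient u).aestronglyMeasurable).2
    (integrable_norm_gradient_sq hu)).integrable one_le_two)

end Energy

section HalfConvolution

variable {d : ℕ} {u h : Euc d → ℝ} {ρ : ℝ}

/-- The convolution of `h` with the extension of `u` by zero from `B_2^+`. -/
def halfConv (u h : Euc d → ℝ) (x : Euc d) : ℝ := ∫ y, u y * h (x - y) ∂bulkMeasure d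

lemma halfConv_eq_convolution (u h : Euc d → ℝ) :
    halfConv u h =
      convolution ((Bplus d 2).indicator u) h (ContinuousLinearMap.lsmul ℝ ℝ) volume := by
  ext x
  rw [halfConv, convolution, ← integral_indicator (measurableSet_Bplus 2)]
  congr 1 with y
  by_cases hy : y ∈ Bplus d 2 <;> simp [hy]

lemma locallyIntegrable_indicator_Bplus (hu : Continuous u) :
    LocallyIntegrable ((Bplus d 2).indicator u) volume :=
  ((integrable_indicator_iff (measurableSet_Bplus 2)).2
    (integrable_bulkMeasure_of_continuous hu)).locallyIntegrable

lemma contDiff_halfConv (hu : Continuous u) {n : ℕ∞} (hh : ContDiff ℝ n h)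
    (hc : HasCompactSupport h) : ContDiff ℝ n (halfConv u h) := by
  rw [halfConv_eq_convolution]
  exact hc.contDiff_convolution_right _ (locallyIntegrable_indicator_Bplus hu) hh

lemma fderiv_halfConv (hu : Continuous u) (hh : ContDiff ℝ 1 h) (hc : HasCompactSupport h)
    (x a : Euc d) : fderiv ℝ (halfConv u h) x a = halfConv u (fun t => fderiv ℝ h t a) x := by
  have hloc := locallyIntegrable_indicator_Bplus hu
  rw [halfConv_eq_convolution, (hc.hasFDerivAt_convolution_right _ hloc hh x).fderiv,
    convolution_precompR_apply _ hloc (hc.fderiv (𝕜 := ℝ)) (hh.continuous_fderiv (by simp)),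
    halfConv_eq_convolution]

lemma hasFDerivAt_comp_const_sub (hh : Differentiable ℝ h) (x y : Euc d) :
    HasFDerivAt (fun y => h (x - y)) (-fderiv ℝ h (x - y)) y := by
  refine ((hh (x - y)).hasFDerivAt.comp y ((hasFDerivAt_id y).const_sub x)).congr_fderiv ?_
  ext
  simp

lemma gradient_comp_const_sub (hh : Differentiable ℝ h) (x y : Euc d) :
    ∇ (fun y => h (x - y)) y = -∇ h (x - y) :=
  (hasGradientAt_of_hasFDerivAt (hasFDerivAt_comp_const_sub hh x y) fun v => by
    rw [neg_apply, inner_neg_left, inner_gradient_left]).gradient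

lemma tsupport_comp_const_sub_subset (x : Euc d) (hs : tsupport h ⊆ ball 0 ρ)
    (hx : ‖x‖ + ρ ≤ 2) : tsupport (fun y => h (x - y)) ⊆ ball 0 2 := by
  intro y hy
  have hxy : x - y ∈ tsupport h :=
    closure_minimal (t := (fun y => x - y) ⁻¹' tsupport h) (fun z hz => subset_tsupport h hz)
      ((isClosed_tsupport h).preimage (by fun_prop)) hy
  have h1 : ‖x - y‖ < ρ := by simpa using hs hxy
  have h2 := norm_sub_le x (x - y)
  rw [sub_sub_cancel] at h2
  simpa using (by linarith : ‖y‖ < 2)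

lemma hasCompactSupport_of_tsupport_subset_ball (hs : tsupport h ⊆ ball 0 ρ) :
    HasCompactSupport h :=
  .of_support_subset_isCompact (isCompact_closedBall 0 ρ)
    ((subset_tsupport h).trans (hs.trans ball_subset_closedBall))

lemma gradient_halfConv (hu : MemW12 d u) (hh : ContDiff ℝ 1 h) (hs : tsupport h ⊆ ball 0 ρ)
    (x : Euc d) (hx : ‖x‖ + ρ ≤ 2) :
    ∇ (halfConv u h) x = ∫ y, h (x - y) • ∇ u y ∂bulkMeasure d +
      (flatDensity d * ∫ y, u y * h (x - y) ∂flatMeasure d) • inwardNormal d := by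
  have hc := hasCompactSupport_of_tsupport_subset_ball hs
  have hsub : Continuous fun y => h (x - y) :=
    hh.continuous.comp (continuous_const.sub continuous_id)
  have hint : Integrable (fun y => h (x - y) • ∇ u y) (bulkMeasure d) :=
    integrable_bilin_of_continuous (ContinuousLinearMap.lsmul ℝ ℝ) hsub (integrable_gradient hu)
  refine ext_inner_right ℝ fun a => ?_
  have hcont : Continuous fun y => u y * fderiv ℝ h (x - y) a :=
    hu.1.continuous.mul (((hh.continuous_fderiv (by simp)).comp
      (continuous_const.sub continuous_id)).clm_apply continuous_const)
  have hD : ∀ y, HasFDerivAt (fun y => u y * h (x - y))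
      (u y • -fderiv ℝ h (x - y) + h (x - y) • fderiv ℝ u y) y := fun y =>
    (hu.1 y).hasFDerivAt.mul (hasFDerivAt_comp_const_sub (hh.differentiable (by simp)) x y)
  have hDa : ∀ y, fderiv ℝ (fun y => u y * h (x - y)) y a =
      ⟪h (x - y) • ∇ u y, a⟫ - u y * fderiv ℝ h (x - y) a := fun y => by
    rw [(hD y).fderiv, real_inner_smul_left, inner_gradient_left]
    simp only [add_apply, smul_apply, neg_apply, smul_eq_mul]
    ring
  have hibp := integral_Bplus_fderiv (fun y => (hD y).differentiableAt)
    (closure_mono (Function.support_mul_subset_right u _) |>.trans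
      (tsupport_comp_const_sub_subset x hs hx)) a
    (by simp_rw [hDa]; exact (hint.inner_const a).sub (integrable_bulkMeasure_of_continuous hcont))
  simp_rw [hDa] at hibp
  rw [integral_sub (hint.inner_const a) (integrable_bulkMeasure_of_continuous hcont)] at hibp
  rw [inner_gradient_left, fderiv_halfConv hu.1.continuous hh hc, halfConv, inner_add_left,
    real_inner_comm, ← integral_inner hint, real_inner_smul_left, inwardNormal,
    EuclideanSpace.inner_single_left]
  simp_rw [real_inner_comm _ a]
  simp only [map_one, one_mul]
  linarith

lemma fderiv_gradient_halfConv_apply (hu : Continuous u) (hh : ContDiff ℝ 2 h)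
    (hc : HasCompactSupport h) (x a : Euc d) :
    fderiv ℝ (∇ (halfConv u h)) x a = ∇ (halfConv u fun t => fderiv ℝ h t a) x := by
  have hw : ContDiff ℝ 2 (halfConv u h) := contDiff_halfConv (n := 2) hu hh hc
  have ha : (halfConv u fun t => fderiv ℝ h t a) = fun y => fderiv ℝ (halfConv u h) y a :=
    funext fun y => (fderiv_halfConv hu (hh.of_le one_le_two) hc y a).symm
  refine ext_inner_right ℝ fun b => ?_
  have hsymm := isSymmetric_fderiv_gradient hw x a b
  simp only [ContinuousLinearMap.coe_coe] at hsymm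
  rw [hsymm, real_inner_comm, inner_fderiv_gradient hw, inner_gradient_left, ha,
    fderiv_clm_apply ((hw.fderiv_right (m := 1) (by norm_num)).differentiable (by simp) x)
      (differentiableAt_const a)]
  simp

lemma continuous_innerSL_gradient_const_sub (hh : ContDiff ℝ 1 h) (x : Euc d) :
    Continuous fun y => innerSL ℝ (∇ h (x - y)) :=
  (innerSL ℝ).continuous.comp ((continuous_gradient hh).comp (continuous_const.sub continuous_id))

lemma integrable_smulRight_gradient (hu : MemW12 d u) (hh : ContDiff ℝ 1 h) (x : Euc d) :
    Integrable (fun y => (innerSL ℝ (∇ h (x - y))).smulRight (∇ u y)) (bulkMeasure d) :=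
  integrable_bilin_of_continuous (ContinuousLinearMap.smulRightL ℝ (Euc d) (Euc d))
    (continuous_innerSL_gradient_const_sub hh x) (integrable_gradient hu)

lemma integrable_flat_smul_innerSL_gradient (hu : Continuous u) (hh : ContDiff ℝ 1 h) (x : Euc d) :
    Integrable (fun y => u y • innerSL ℝ (∇ h (x - y))) (flatMeasure d) :=
  integrable_flatMeasure_of_continuous (hu.smul (continuous_innerSL_gradient_const_sub hh x))

lemma fderiv_gradient_halfConv (hu : MemW12 d u) (hh : ContDiff ℝ 2 h)
    (hs : tsupport h ⊆ ball 0 ρ) (x : Euc d) (hx : ‖x‖ + ρ ≤ 2) :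
    fderiv ℝ (∇ (halfConv u h)) x =
      ∫ y, (innerSL ℝ (∇ h (x - y))).smulRight (∇ u y) ∂bulkMeasure d +
      (flatDensity d • ∫ y, u y • innerSL ℝ (∇ h (x - y)) ∂flatMeasure d).smulRight
        (inwardNormal d) := by
  have hh1 := hh.of_le one_le_two
  ext1 a
  rw [fderiv_gradient_halfConv_apply hu.1.continuous hh
      (hasCompactSupport_of_tsupport_subset_ball hs),
    gradient_halfConv hu ((hh.fderiv_right (m := 1) (by norm_num)).clm_apply contDiff_const)
      ((tsupport_fderiv_apply_subset ℝ a).trans hs) x hx, add_apply,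
    ContinuousLinearMap.integral_apply (integrable_smulRight_gradient hu hh1 x),
    ContinuousLinearMap.smulRight_apply, smul_apply,
    ContinuousLinearMap.integral_apply
      (integrable_flat_smul_innerSL_gradient hu.1.continuous hh1 x)]
  simp only [ContinuousLinearMap.smulRight_apply, smul_apply, innerSL_apply_apply,
    inner_gradient_left, smul_eq_mul]

lemma opTrace_comp_integral {B : Euc d →L[ℝ] Euc d} {μ : Measure (Euc d)}
    {T : Euc d → Euc d →L[ℝ] Euc d} (hT : Integrable T μ) :
    opTrace (B ∘L ∫ y, T y ∂μ) = ∫ y, opTrace (B ∘L T y) ∂μ :=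
  ((LinearMap.toContinuousLinearMap (opTrace (E := Euc d))).comp
    (ContinuousLinearMap.compL ℝ (Euc d) (Euc d) (Euc d) B)).integral_comp_comm hT |>.symm

lemma nonDivOp_halfConv (hu : MemW12 d u) (hh : ContDiff ℝ 2 h) (hs : tsupport h ⊆ ball 0 ρ)
    (B : Euc d → Euc d →L[ℝ] Euc d) (x : Euc d) (hx : ‖x‖ + ρ ≤ 2) :
    nonDivOp B (halfConv u h) x = ∫ y, ⟪∇ h (x - y), B x (∇ u y)⟫ ∂bulkMeasure d +
      flatDensity d * ∫ y, u y * ⟪∇ h (x - y), B x (inwardNormal d)⟫ ∂flatMeasure d := by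
  have hh1 := hh.of_le one_le_two
  rw [nonDivOp, fderiv_gradient_halfConv hu hh hs x hx, ContinuousLinearMap.comp_add, map_add,
    opTrace_comp_integral (integrable_smulRight_gradient hu hh1 x), opTrace_comp_smulRight,
    smul_apply, ContinuousLinearMap.integral_apply
      (integrable_flat_smul_innerSL_gradient hu.1.continuous hh1 x)]
  simp only [opTrace_comp_smulRight, smul_apply, innerSL_apply_apply, smul_eq_mul]

end HalfConvolution

section MollifiedSolution

variable {d : ℕ} {lam K M Mη ε C : ℝ} {A : Euc d → Euc d →L[ℝ] Euc d} {V η u : Euc d → ℝ}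
  {x : Euc d}

/-- Weak solutions of the Robin problem with Lipschitz elliptic leading part and merely measurable
bounded lower-order coefficients; the constants `lam, K, M, Mη` quantify the data. -/
structure IsRobinSolution (lam K M Mη : ℝ) (A : Euc d → Euc d →L[ℝ] Euc d)
    (V η u : Euc d → ℝ) : Prop where
  isSymm : IsSymmA d A
  le_inner : ∀ x v, lam * ‖v‖ ^ 2 ≤ ⟪A x v, v⟫
  norm_le : ∀ x, ‖A x‖ ≤ K
  lipschitzWith : LipschitzWith K.toNNReal A
  measurable_potential : Measurable V
  abs_potential_le : ∀ x, |V x| ≤ M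
  measurable_robin : Measurable η
  abs_robin_le : ∀ x, |η x| ≤ Mη
  isWeakSol : IsWeakSol d A V η u

namespace IsRobinSolution

lemma memW12 (h : IsRobinSolution lam K M Mη A V η u) : MemW12 d u := h.isWeakSol.1

lemma continuous_sol (h : IsRobinSolution lam K M Mη A V η u) : Continuous u :=
  h.memW12.1.continuous

lemma K_nonneg (h : IsRobinSolution lam K M Mη A V η u) : 0 ≤ K :=
  (norm_nonneg _).trans (h.norm_le 0)

lemma M_nonneg (h : IsRobinSolution lam K M Mη A V η u) : 0 ≤ M :=
  (abs_nonneg _).trans (h.abs_potential_le 0)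

lemma Mη_nonneg (h : IsRobinSolution lam K M Mη A V η u) : 0 ≤ Mη :=
  (abs_nonneg _).trans (h.abs_robin_le 0)

lemma integrable_flux (h : IsRobinSolution lam K M Mη A V η u) :
    Integrable (fun y => A y (∇ u y)) (bulkMeasure d) :=
  integrable_bilin_of_continuous (ContinuousLinearMap.id ℝ _) h.lipschitzWith.continuous
    (integrable_gradient h.memW12)

lemma integrable_potential_mul (h : IsRobinSolution lam K M Mη A V η u) {g : Euc d → ℝ}
    (hg : Continuous g) : Integrable (fun y => V y * u y * g y) (bulkMeasure d) := by
  simp_rw [mul_assoc]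
  exact (integrable_bulkMeasure_of_continuous (h.continuous_sol.mul hg)).bdd_mul
    h.measurable_potential.aestronglyMeasurable (.of_forall h.abs_potential_le)

end IsRobinSolution

/-- The mollification of `u` extended by zero from `B_2^+`. -/
def mollifiedSol (ε : ℝ) (u : Euc d → ℝ) : Euc d → ℝ := halfConv u (mollifier d ε)

lemma tsupport_mollifier_subset_ball (hε : 0 < ε) : tsupport (mollifier d ε) ⊆ ball 0 (2 * ε) :=
  fun _ hx => by simpa using (tsupport_mollifier_subset hε hx).1

lemma contDiff_mollifiedSol (hu : Continuous u) (hε : 0 < ε) {n : ℕ∞} :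
    ContDiff ℝ n (mollifiedSol ε u) :=
  contDiff_halfConv hu contDiff_mollifier (hasCompactSupport_mollifier hε)

lemma continuous_mollifierMajorant_const_sub (x : Euc d) :
    Continuous fun y => mollifierMajorant d ε (x - y) :=
  continuous_mollifierMajorant.comp (continuous_const.sub continuous_id)

lemma continuous_mollifier_const_sub (x : Euc d) : Continuous fun y => mollifier d ε (x - y) :=
  continuous_mollifier.comp (continuous_const.sub continuous_id)

/-- The local average of `|u| + |∇u|` against the majorant kernel, which bounds the mollified
solution, its gradient and the interior part of the mollified equation. -/
def localAverage (ε : ℝ) (u : Euc d → ℝ) (x : Euc d) : ℝ :=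
  ∫ y, mollifierMajorant d ε (x - y) * (|u y| + ‖∇ u y‖) ∂bulkMeasure d

/-- The `L¹` norm of `u` on the flat boundary part. -/
def boundaryMass (u : Euc d → ℝ) : ℝ := ∫ y, |u y| ∂flatMeasure d

lemma integrable_majorant_mul {f : Euc d → ℝ} (hf : Integrable f (bulkMeasure d)) (x : Euc d) :
    Integrable (fun y => mollifierMajorant d ε (x - y) * f y) (bulkMeasure d) :=
  integrable_bilin_of_continuous (ContinuousLinearMap.mul ℝ ℝ)
    (continuous_mollifierMajorant_const_sub x) hf

lemma integrable_localAverage (hu : MemW12 d u) (x : Euc d) :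
    Integrable (fun y => mollifierMajorant d ε (x - y) * (|u y| + ‖∇ u y‖)) (bulkMeasure d) :=
  integrable_majorant_mul
    ((integrable_bulkMeasure_of_continuous hu.1.continuous).abs.add (integrable_gradient hu).norm) x

lemma localAverage_nonneg (hε : 0 < ε) (x : Euc d) : 0 ≤ localAverage ε u x :=
  integral_nonneg fun _ => mul_nonneg (mollifierMajorant_nonneg hε _) (by positivity)

lemma norm_integral_le_localAverage {F : Type*} [NormedAddCommGroup F] [NormedSpace ℝ F]
    (hu : MemW12 d u) {f : Euc d → F}
    (hf : ∀ y, ‖f y‖ ≤ C * (mollifierMajorant d ε (x - y) * (|u y| + ‖∇ u y‖))) :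
    ‖∫ y, f y ∂bulkMeasure d‖ ≤ C * localAverage ε u x := by
  rw [localAverage, ← integral_const_mul]
  exact norm_integral_le_of_norm_le ((integrable_localAverage hu x).const_mul C) (.of_forall hf)

lemma abs_flat_integral_le (hu : Continuous u) {f : Euc d → ℝ} (h : ∀ y, |f y| ≤ C) :
    |∫ y, u y * f y ∂flatMeasure d| ≤ C * boundaryMass u := by
  rw [boundaryMass, ← integral_const_mul, ← Real.norm_eq_abs]
  refine norm_integral_le_of_norm_le
    ((integrable_flatMeasure_of_continuous hu.abs).const_mul C) (.of_forall fun y => ?_)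
  rw [norm_mul, mul_comm]
  exact mul_le_mul_of_nonneg_right (h y) (abs_nonneg _)

lemma abs_mollifiedSol_le (hu : MemW12 d u) (hε : 0 < ε) (x : Euc d) :
    |mollifiedSol ε u x| ≤ localAverage ε u x := by
  rw [← one_mul (localAverage ε u x), ← Real.norm_eq_abs]
  refine norm_integral_le_localAverage (F := ℝ) hu fun y => ?_
  rw [norm_mul, Real.norm_of_nonneg (mollifier_nonneg hε _), Real.norm_eq_abs, mul_comm, one_mul]
  exact mul_le_mul (mollifier_le_majorant hε _) (le_add_of_nonneg_right (norm_nonneg _))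
    (abs_nonneg _) (mollifierMajorant_nonneg hε _)

lemma norm_gradient_mollifiedSol_le (hu : MemW12 d u) (hε : 0 < ε)
    (hC : ∀ x, mollifier d ε x ≤ C) (hx : ‖x‖ + 2 * ε ≤ 2) :
    ‖∇ (mollifiedSol ε u) x‖ ≤ localAverage ε u x + flatDensity d * C * boundaryMass u := by
  rw [mollifiedSol, gradient_halfConv hu (contDiff_mollifier (n := 1))
    (tsupport_mollifier_subset_ball hε) x hx]
  refine (norm_add_le _ _).trans (add_le_add ?_ ?_)
  · rw [← one_mul (localAverage ε u x)]
    refine norm_integral_le_localAverage hu fun y => ?_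
    rw [norm_smul, Real.norm_of_nonneg (mollifier_nonneg hε _), one_mul]
    exact mul_le_mul (mollifier_le_majorant hε _) (le_add_of_nonneg_left (abs_nonneg _))
      (norm_nonneg _) (mollifierMajorant_nonneg hε _)
  · have hflat := abs_flat_integral_le (C := C) hu.1.continuous
      (f := fun y => mollifier d ε (x - y)) fun y => by
        rw [abs_of_nonneg (mollifier_nonneg hε _)]
        exact hC _
    rw [norm_smul, norm_inwardNormal, mul_one, norm_mul, Real.norm_of_nonneg (flatDensity_nonneg d),
      mul_assoc]
    exact mul_le_mul_of_nonneg_left hflat (flatDensity_nonneg d)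

lemma IsRobinSolution.integral_inner_gradient_mollifier (h : IsRobinSolution lam K M Mη A V η u)
    (hε : 0 < ε) (hx : ‖x‖ + 2 * ε ≤ 2) :
    ∫ y, ⟪∇ (mollifier d ε) (x - y), A y (∇ u y)⟫ ∂bulkMeasure d =
      ∫ y, V y * u y * mollifier d ε (x - y) ∂bulkMeasure d -
        ∫ y, u y * (η y * mollifier d ε (x - y)) ∂flatMeasure d := by
  have hV := h.integrable_potential_mul (continuous_mollifier_const_sub (ε := ε) x)
  have hA : Integrable (fun y => ⟪A y (∇ u y), -∇ (mollifier d ε) (x - y)⟫) (bulkMeasure d) := by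
    simp only [inner_neg_right, real_inner_comm (∇ (mollifier d ε) _)]
    exact (integrable_bilin_of_continuous (innerSL ℝ) (continuous_gradient_mollifier.comp
      (continuous_const.sub continuous_id)) h.integrable_flux).neg
  have hweak := h.isWeakSol.2 (fun y => mollifier d ε (x - y))
    (contDiff_mollifier.comp (contDiff_const.sub contDiff_id))
    ((hasCompactSupport_mollifier hε).comp_homeomorph (Homeomorph.subLeft x))
    (tsupport_comp_const_sub_subset x (tsupport_mollifier_subset_ball hε) hx)
  simp_rw [gradient_comp_const_sub ((contDiff_mollifier (n := 1)).differentiable (by simp)) x]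
    at hweak
  rw [integral_add hA hV] at hweak
  simp only [inner_neg_right, real_inner_comm (∇ (mollifier d ε) _), integral_neg] at hweak
  simp_rw [fun y => mul_left_comm (u y) (η y) (mollifier d ε (x - y)), ← mul_assoc]
  linarith

/-- The Friedrichs commutator: the difference of coefficients gains the factor `ε` lost by the
gradient of the mollifier. -/
lemma IsRobinSolution.norm_commutator_le (h : IsRobinSolution lam K M Mη A V η u) (hε : 0 < ε)
    (x y : Euc d) :
    ‖⟪∇ (mollifier d ε) (x - y), (mollify ε A x - A y) (∇ u y)⟫‖ ≤
      4 * K * (mollifierMajorant d ε (x - y) * (|u y| + ‖∇ u y‖)) := by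
  have hK := h.K_nonneg
  by_cases hy : x - y ∈ tsupport (mollifier d ε)
  · have hclose := norm_mollify_sub_le hε hK h.lipschitzWith
      (tsupport_mollifier_subset hε hy).1.le
    calc ‖⟪∇ (mollifier d ε) (x - y), (mollify ε A x - A y) (∇ u y)⟫‖
        ≤ ‖∇ (mollifier d ε) (x - y)‖ * (4 * K * ε * ‖∇ u y‖) :=
          (norm_inner_le_norm _ _).trans (mul_le_mul_of_nonneg_left
            (((mollify ε A x - A y).le_opNorm _).trans (by gcongr)) (norm_nonneg _))
      _ = 4 * K * (ε * ‖∇ (mollifier d ε) (x - y)‖ * ‖∇ u y‖) := by ring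
      _ ≤ 4 * K * (mollifierMajorant d ε (x - y) * (|u y| + ‖∇ u y‖)) := by
          gcongr
          · exact mollifierMajorant_nonneg hε _
          · exact norm_gradient_mollifier_le_majorant hε _
          · exact le_add_of_nonneg_left (abs_nonneg _)
  · rw [gradient_of_notMem_tsupport hy, mollifierMajorant_of_notMem_tsupport hy]
    simp

lemma IsRobinSolution.norm_potential_mul_le (h : IsRobinSolution lam K M Mη A V η u) (hε : 0 < ε)
    (x y : Euc d) :
    ‖V y * u y * mollifier d ε (x - y)‖ ≤
      M * (mollifierMajorant d ε (x - y) * (|u y| + ‖∇ u y‖)) := by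
  have hM := h.M_nonneg
  have hρ := mollifier_nonneg hε (x - y)
  have hJ := mollifierMajorant_nonneg hε (x - y)
  calc ‖V y * u y * mollifier d ε (x - y)‖ = |V y| * (mollifier d ε (x - y) * |u y|) := by
        rw [norm_mul, norm_mul, Real.norm_of_nonneg (mollifier_nonneg hε _), Real.norm_eq_abs,
          Real.norm_eq_abs]
        ring
    _ ≤ M * (mollifierMajorant d ε (x - y) * (|u y| + ‖∇ u y‖)) := by
        gcongr
        · exact h.abs_potential_le y
        · exact mollifier_le_majorant hε _
        · exact le_add_of_nonneg_right (norm_nonneg _)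

lemma IsRobinSolution.nonDivOp_mollifiedSol (h : IsRobinSolution lam K M Mη A V η u) (hε : 0 < ε)
    (hx : ‖x‖ + 2 * ε ≤ 2) :
    nonDivOp (mollify ε A) (mollifiedSol ε u) x =
      ∫ y, ⟪∇ (mollifier d ε) (x - y), (mollify ε A x - A y) (∇ u y)⟫ ∂bulkMeasure d +
      ∫ y, V y * u y * mollifier d ε (x - y) ∂bulkMeasure d -
      ∫ y, u y * (η y * mollifier d ε (x - y)) ∂flatMeasure d +
      flatDensity d *
        ∫ y, u y * ⟪∇ (mollifier d ε) (x - y), mollify ε A x (inwardNormal d)⟫ ∂flatMeasure d := by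
  have hgrad : Continuous fun y => ∇ (mollifier d ε) (x - y) :=
    continuous_gradient_mollifier.comp (continuous_const.sub continuous_id)
  rw [mollifiedSol, nonDivOp_halfConv h.memW12 (contDiff_mollifier (n := 2))
    (tsupport_mollifier_subset_ball hε) _ x hx, add_sub_assoc,
    ← h.integral_inner_gradient_mollifier hε hx, ← integral_add]
  · simp only [sub_apply, inner_sub_right, sub_add_cancel]
  · simp only [sub_apply, inner_sub_right]
    exact (integrable_bilin_of_continuous (innerSL ℝ) hgrad
      ((mollify ε A x).integrable_comp (integrable_gradient h.memW12))).sub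
      (integrable_bilin_of_continuous (innerSL ℝ) hgrad h.integrable_flux)
  · exact integrable_bilin_of_continuous (innerSL ℝ) hgrad h.integrable_flux

lemma IsRobinSolution.abs_nonDivOp_mollifiedSol_le (h : IsRobinSolution lam K M Mη A V η u)
    (hε : 0 < ε) (hC : ∀ x, mollifier d ε x ≤ C ∧ ‖∇ (mollifier d ε) x‖ ≤ C)
    (hx : ‖x‖ + 2 * ε ≤ 2) :
    |nonDivOp (mollify ε A) (mollifiedSol ε u) x| ≤
      (4 * K + M) * localAverage ε u x + (Mη + flatDensity d * K) * C * boundaryMass u := by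
  have hC0 : 0 ≤ C := (norm_nonneg _).trans (hC 0).2
  have hcomm := norm_integral_le_localAverage (x := x) h.memW12 (h.norm_commutator_le hε x)
  have hpot := norm_integral_le_localAverage (x := x) h.memW12 (h.norm_potential_mul_le hε x)
  have hrobin := abs_flat_integral_le (C := Mη * C) h.continuous_sol
    (f := fun y => η y * mollifier d ε (x - y)) fun y => by
      rw [abs_mul, abs_of_nonneg (mollifier_nonneg hε _)]
      exact mul_le_mul (h.abs_robin_le y) (hC _).1 (mollifier_nonneg hε _) h.Mη_nonneg
  have hnormal := abs_flat_integral_le (C := C * K) h.continuous_sol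
    (f := fun y => ⟪∇ (mollifier d ε) (x - y), mollify ε A x (inwardNormal d)⟫) fun y => by
      refine (abs_real_inner_le_norm _ _).trans
        (mul_le_mul (hC _).2 (((mollify ε A x).le_opNorm _).trans ?_) (norm_nonneg _) hC0)
      rw [norm_inwardNormal, mul_one]
      exact norm_mollify_le hε h.norm_le x
  have hnormal' := mul_le_mul_of_nonneg_left hnormal (flatDensity_nonneg d)
  rw [← abs_of_nonneg (flatDensity_nonneg d), ← abs_mul, abs_of_nonneg (flatDensity_nonneg d)]
    at hnormal'
  rw [h.nonDivOp_mollifiedSol hε hx]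
  rw [Real.norm_eq_abs] at hcomm hpot
  refine (abs_add_le _ _).trans ((add_le_add ((abs_sub _ _).trans
    (add_le_add ((abs_add_le _ _).trans (add_le_add hcomm hpot)) hrobin)) hnormal').trans_eq ?_)
  ring

end MollifiedSolution

section GaussWeightBounds

variable {E : Type*} [NormedAddCommGroup E] {s : ℝ}

lemma gaussWeight_le_one (hs : 0 ≤ s) (z x : E) : gaussWeight s z x ≤ 1 := by
  rw [gaussWeight, exp_le_one_iff, neg_mul, neg_nonpos]
  positivity

lemma gaussWeight_mul_norm_le_one (hs : 1 ≤ s) (z x : E) : gaussWeight s z x * ‖x - z‖ ≤ 1 := by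
  rw [gaussWeight, neg_mul, exp_neg, inv_mul_le_iff₀ (exp_pos _)]
  nlinarith [add_one_le_exp (s * ‖x - z‖ ^ 2), sq_nonneg (‖x - z‖ - 1), sq_nonneg ‖x - z‖]

lemma abs_gaussWeight_sub_le [InnerProductSpace ℝ E] (hs : 1 ≤ s) (z x y : E) :
    |gaussWeight s z x - gaussWeight s z y| ≤ 2 * s * ‖x - y‖ := by
  refine convex_univ.norm_image_sub_le_of_norm_hasFDerivWithin_le (𝕜 := ℝ)
    (fun x _ => (hasFDerivAt_gaussWeight s z x).hasFDerivWithinAt) (fun x _ => ?_)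
    (Set.mem_univ y) (Set.mem_univ x)
  rw [norm_smul, innerSL_apply_norm, norm_radialField,
    Real.norm_of_nonneg (mul_nonneg (by linarith) (gaussWeight_pos s z x).le)]
  nlinarith [gaussWeight_mul_norm_le_one hs z x]

end GaussWeightBounds

section CarlemanWeight

variable {d : ℕ} {s τ ε : ℝ}

/-- The centre `-e_d / 4` of the Carleman weight, below the flat boundary. -/
def carlemanCenter (d : ℕ) : Euc d := (-(1 / 4) : ℝ) • inwardNormal d

/-- The Carleman weight `exp (2τφ)` centred at `carlemanCenter d`. -/
def carlemanWeight (s τ : ℝ) (x : Euc d) : ℝ := exp (2 * τ * gaussWeight s (carlemanCenter d) x)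

lemma norm_carlemanCenter : ‖carlemanCenter d‖ = 1 / 4 := by
  rw [carlemanCenter, norm_smul, norm_inwardNormal]
  norm_num

lemma last_add_le_norm_sub_carlemanCenter (x : Euc d) :
    x (Fin.last d) + 1 / 4 ≤ ‖x - carlemanCenter d‖ := by
  have := (le_abs_self _).trans (abs_last_le_norm (x - carlemanCenter d))
  simpa [carlemanCenter, inwardNormal] using this

lemma norm_le_norm_sub_carlemanCenter_add (x : Euc d) : ‖x‖ ≤ ‖x - carlemanCenter d‖ + 1 / 4 := by
  simpa [norm_carlemanCenter] using norm_add_le (x - carlemanCenter d) (carlemanCenter d)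

lemma contDiff_carlemanWeight {n : WithTop ℕ∞} : ContDiff ℝ n (carlemanWeight (d := d) s τ) :=
  contDiff_exp_mul_gaussWeight (2 * τ) s (carlemanCenter d)

lemma continuous_carlemanWeight : Continuous (carlemanWeight (d := d) s τ) :=
  (contDiff_carlemanWeight (n := 0)).continuous

lemma carlemanWeight_pos (x : Euc d) : 0 < carlemanWeight s τ x := exp_pos _

lemma carlemanWeight_le (hs : 0 ≤ s) (hτ : 0 ≤ τ) (x : Euc d) :
    carlemanWeight s τ x ≤ exp (2 * τ) :=
  exp_le_exp.2 (mul_le_of_le_one_right (by positivity) (gaussWeight_le_one hs _ x))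

lemma carlemanWeight_le_two_mul (hs : 1 ≤ s) (hτ : 0 ≤ τ) (hε : 8 * τ * s * ε ≤ 2 / 3)
    {x y : Euc d} (h : ‖x - y‖ ≤ 2 * ε) : carlemanWeight s τ x ≤ 2 * carlemanWeight s τ y := by
  set φ := gaussWeight s (carlemanCenter d)
  have hφ : φ x - φ y ≤ 2 * s * (2 * ε) :=
    (abs_le.1 (abs_gaussWeight_sub_le hs _ x y)).2.trans (by gcongr)
  have hexponent : 2 * τ * φ x ≤ 2 / 3 + 2 * τ * φ y := by
    nlinarith [mul_le_mul_of_nonneg_left hφ hτ]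
  have htwo : exp (2 / 3) ≤ 2 := by
    rw [← Real.le_log_iff_exp_le (by norm_num)]
    linarith [Real.log_two_gt_d9]
  calc carlemanWeight s τ x ≤ exp (2 / 3 + 2 * τ * φ y) := exp_le_exp.2 hexponent
    _ = exp (2 / 3) * exp (2 * τ * φ y) := exp_add _ _
    _ ≤ 2 * exp (2 * τ * φ y) := by gcongr

/-- The smooth cutoff, equal to `1` on `ball (carlemanCenter d) (13/10)`. -/
def carlemanCutoff (d : ℕ) : ContDiffBump (carlemanCenter d) :=
  ⟨13 / 10, 14 / 10, by norm_num, by norm_num⟩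

lemma contDiff_carlemanCutoff {n : ℕ∞} : ContDiff ℝ n (carlemanCutoff d) :=
  (carlemanCutoff d).contDiff

lemma tsupport_carlemanCutoff :
    tsupport (carlemanCutoff d) = closedBall (carlemanCenter d) (14 / 10) :=
  (carlemanCutoff d).tsupport_eq

lemma exists_carlemanCutoff_le (d : ℕ) : ∃ C, ∀ x : Euc d,
    ‖∇ (carlemanCutoff d) x‖ ≤ C ∧ ‖fderiv ℝ (∇ (carlemanCutoff d)) x‖ ≤ C := by
  have hsmooth : ContDiff ℝ 1 (∇ (carlemanCutoff d)) :=
    contDiff_gradient (n := 2) contDiff_carlemanCutoff one_add_one_eq_two.le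
  have hsupp := hasCompactSupport_gradient (carlemanCutoff d).hasCompactSupport
  obtain ⟨C₁, h₁⟩ := hsupp.exists_bound_of_continuous hsmooth.continuous
  obtain ⟨C₂, h₂⟩ := (hsupp.fderiv (𝕜 := ℝ)).exists_bound_of_continuous
    (hsmooth.continuous_fderiv one_ne_zero)
  exact ⟨max C₁ C₂, fun x => ⟨(h₁ x).trans (le_max_left _ _), (h₂ x).trans (le_max_right _ _)⟩⟩

/-- The part of `B_2^+` within distance `ρ` of the Carleman centre. -/
def carlemanRegion (d : ℕ) (ρ : ℝ) : Set (Euc d) := Bplus d 2 ∩ ball (carlemanCenter d) ρ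

lemma measurableSet_carlemanRegion (ρ : ℝ) : MeasurableSet (carlemanRegion d ρ) :=
  (measurableSet_Bplus 2).inter measurableSet_ball

lemma integrableOn_carlemanRegion {f : Euc d → ℝ} (hf : Integrable f (bulkMeasure d)) (ρ : ℝ) :
    IntegrableOn f (carlemanRegion d ρ) :=
  IntegrableOn.mono_set (show IntegrableOn f (Bplus d 2) volume from hf) Set.inter_subset_left

end CarlemanWeight

section EnergyDensity

lemma sq_integral_mul_le {α : Type*} [MeasurableSpace α] {μ : Measure α} {w f : α → ℝ}
    (hw : ∀ x, 0 ≤ w x) (h0 : Integrable w μ) (h1 : Integrable (fun x => w x * f x) μ)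
    (h2 : Integrable (fun x => w x * f x ^ 2) μ) :
    (∫ x, w x * f x ∂μ) ^ 2 ≤ (∫ x, w x ∂μ) * ∫ x, w x * f x ^ 2 ∂μ := by
  have hquad (t : ℝ) : 0 ≤ (∫ x, w x ∂μ) * (t * t) + (-2 * ∫ x, w x * f x ∂μ) * t
      + ∫ x, w x * f x ^ 2 ∂μ :=
    calc 0 ≤ ∫ x, w x * (f x - t) ^ 2 ∂μ := integral_nonneg fun x => mul_nonneg (hw x) (sq_nonneg _)
      _ = ∫ x, (w x * (t * t) + w x * f x * (-2 * t) + w x * f x ^ 2) ∂μ := by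
        congr 1 with x
        ring
      _ = _ := by
        rw [integral_add (by exact (h0.mul_const _).add (h1.mul_const _)) h2,
          integral_add (h0.mul_const _) (h1.mul_const _), integral_mul_const, integral_mul_const]
        ring
  have hdiscrim := discrim_le_zero hquad
  rw [discrim] at hdiscrim
  linarith

variable {d : ℕ} {u : Euc d → ℝ} {ε : ℝ}

/-- The energy density `u² + |∇u|²`. -/
def energyDensity (u : Euc d → ℝ) (y : Euc d) : ℝ := u y ^ 2 + ‖∇ u y‖ ^ 2

lemma energyDensity_nonneg (y : Euc d) : 0 ≤ energyDensity u y :=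
  add_nonneg (sq_nonneg _) (sq_nonneg _)

lemma integrable_energyDensity (hu : MemW12 d u) : Integrable (energyDensity u) (bulkMeasure d) :=
  hu.2.1

lemma sq_add_norm_gradient_le (y : Euc d) : (|u y| + ‖∇ u y‖) ^ 2 ≤ 2 * energyDensity u y := by
  rw [energyDensity, ← sq_abs (u y)]
  exact add_sq_le

lemma localAverage_sq_le (hu : MemW12 d u) (hε : 0 < ε) (x : Euc d) :
    localAverage ε u x ^ 2 ≤ 2 * majorantMass d *
      ∫ y, mollifierMajorant d ε (x - y) * energyDensity u y ∂bulkMeasure d := by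
  have hJ (y) : 0 ≤ mollifierMajorant d ε (x - y) := mollifierMajorant_nonneg hε _
  have hsq : Integrable (fun y => (|u y| + ‖∇ u y‖) ^ 2) (bulkMeasure d) := by
    refine ((integrable_energyDensity hu).const_mul 2).mono'
      (((hu.1.continuous.abs.measurable.add (measurable_gradient u).norm).pow_const
        2).aestronglyMeasurable) (.of_forall fun y => ?_)
    rw [Real.norm_of_nonneg (sq_nonneg _)]
    exact sq_add_norm_gradient_le y
  have hmass : ∫ y, mollifierMajorant d ε (x - y) ∂bulkMeasure d ≤ majorantMass d := by
    rw [← integral_mollifierMajorant hε,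
      ← integral_sub_left_eq_self (mollifierMajorant d ε) volume x]
    exact setIntegral_le_integral ((integrable_mollifierMajorant hε).comp_sub_left x)
      (.of_forall hJ)
  calc localAverage ε u x ^ 2
      ≤ (∫ y, mollifierMajorant d ε (x - y) ∂bulkMeasure d) *
          ∫ y, mollifierMajorant d ε (x - y) * (|u y| + ‖∇ u y‖) ^ 2 ∂bulkMeasure d :=
        sq_integral_mul_le hJ
          (integrable_bulkMeasure_of_continuous (continuous_mollifierMajorant_const_sub x))
          (integrable_localAverage hu x) (integrable_majorant_mul hsq x)
    _ ≤ majorantMass d *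
          ∫ y, mollifierMajorant d ε (x - y) * (2 * energyDensity u y) ∂bulkMeasure d := by
        refine mul_le_mul hmass (integral_mono (integrable_majorant_mul hsq x)
          (integrable_majorant_mul ((integrable_energyDensity hu).const_mul 2) x) fun y =>
            mul_le_mul_of_nonneg_left (sq_add_norm_gradient_le y) (hJ y))
          (integral_nonneg fun y => mul_nonneg (hJ y) (sq_nonneg _)) majorantMass_pos.le
    _ = _ := by
        simp_rw [mul_left_comm _ (2 : ℝ)]
        rw [integral_const_mul]
        ring

lemma boundaryMass_sq_le (hu : Continuous u) :
    boundaryMass u ^ 2 ≤ (flatMeasure d).real Set.univ * ∫ y, u y ^ 2 ∂flatMeasure d := by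
  simpa [boundaryMass] using sq_integral_mul_le (μ := flatMeasure d) (w := fun _ => 1)
    (f := fun y => |u y|) (fun _ => zero_le_one) (integrable_const _)
    (by simpa using integrable_flatMeasure_of_continuous hu.abs)
    (by simpa using integrable_flatMeasure_of_continuous (f := fun y => u y ^ 2) (hu.pow 2))

end EnergyDensity

section WeightedResidual

variable {d : ℕ} {lam K M Mη ε s τ C : ℝ} {A : Euc d → Euc d →L[ℝ] Euc d} {V η u : Euc d → ℝ}
  {x : Euc d}

/-- The mollified solution times the Carleman cutoff, to which the Carleman estimate applies. -/
def cutoffSol (ε : ℝ) (u : Euc d → ℝ) (x : Euc d) : ℝ := carlemanCutoff d x * mollifiedSol ε u x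

lemma contDiff_cutoffSol (hu : Continuous u) (hε : 0 < ε) : ContDiff ℝ 2 (cutoffSol ε u) :=
  (contDiff_carlemanCutoff (n := 2)).mul (contDiff_mollifiedSol hu hε (n := 2))

lemma tsupport_cutoffSol_subset :
    tsupport (cutoffSol ε u) ⊆ closedBall (carlemanCenter d) (14 / 10) :=
  tsupport_carlemanCutoff (d := d) ▸ tsupport_mul_subset_left

lemma hasCompactSupport_cutoffSol : HasCompactSupport (cutoffSol (d := d) ε u) :=
  (isCompact_closedBall _ _).of_isClosed_subset (isClosed_tsupport _) tsupport_cutoffSol_subset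

lemma mollifiedSol_eq_zero (hε : 0 < ε) (hx : x (Fin.last d) < -(2 * ε)) :
    mollifiedSol ε u x = 0 := by
  refine integral_eq_zero_of_ae (ae_bulkMeasure fun y hy => ?_)
  have hy' : 0 < y (Fin.last d) := hy.2
  have hxy : x - y ∉ tsupport (mollifier d ε) := fun h => by
    have hlast := (abs_lt.1 ((abs_last_le_norm (x - y)).trans_lt
      (tsupport_mollifier_subset hε h).1)).1
    rw [PiLp.sub_apply] at hlast
    linarith
  simp [image_eq_zero_of_notMem_tsupport hxy]

lemma tsupport_cutoffSol_subset_last (hε : 0 < ε) :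
    tsupport (cutoffSol ε u) ⊆ {x | -(2 * ε) ≤ x (Fin.last d)} := by
  refine closure_minimal (fun x hx => Set.mem_ofPred.2 (not_lt.1 fun hlt => hx ?_))
    (isClosed_le continuous_const (by fun_prop))
  rw [cutoffSol, mollifiedSol_eq_zero hε hlt, mul_zero]

/-- The constant in front of `localAverage` in the equation for `cutoffSol`; `D` bounds the
derivatives of the cutoff. -/
def residualConst (d : ℕ) (K M D : ℝ) : ℝ := 4 * K + M + (d + 1) * K * D + 2 * K * D

/-- The constant in front of `boundaryMass` in the equation for `cutoffSol`; `C` bounds the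
mollifier and its gradient, hence depends on `ε`. -/
def boundaryConst (d : ℕ) (K Mη D C : ℝ) : ℝ :=
  (Mη + flatDensity d * K) * C + 2 * K * D * flatDensity d * C

lemma IsRobinSolution.abs_nonDivOp_cutoffSol_le (h : IsRobinSolution lam K M Mη A V η u)
    (hε : 0 < ε) (hε' : ε ≤ 1 / 40) {D : ℝ}
    (hC : ∀ x, mollifier d ε x ≤ C ∧ ‖∇ (mollifier d ε) x‖ ≤ C)
    (hD : ∀ x, ‖∇ (carlemanCutoff d) x‖ ≤ D ∧ ‖fderiv ℝ (∇ (carlemanCutoff d)) x‖ ≤ D)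
    (hx : ‖x - carlemanCenter d‖ ≤ 14 / 10) :
    |nonDivOp (mollify ε A) (cutoffSol ε u) x| ≤
      residualConst d K M D * localAverage ε u x + boundaryConst d K Mη D C * boundaryMass u := by
  have hx2 : ‖x‖ + 2 * ε ≤ 2 := by linarith [norm_le_norm_sub_carlemanCenter_add x]
  have hAx : ‖mollify ε A x‖ ≤ K := norm_mollify_le hε h.norm_le x
  have hK := h.K_nonneg
  have hleading : |carlemanCutoff d x * nonDivOp (mollify ε A) (mollifiedSol ε u) x| ≤
      (4 * K + M) * localAverage ε u x + (Mη + flatDensity d * K) * C * boundaryMass u := by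
    rw [abs_mul, abs_of_nonneg (carlemanCutoff d).nonneg]
    exact (mul_le_of_le_one_left (abs_nonneg _) (carlemanCutoff d).le_one).trans
      (h.abs_nonDivOp_mollifiedSol_le hε hC hx2)
  have hzeroth : |mollifiedSol ε u x * nonDivOp (mollify ε A) (carlemanCutoff d) x| ≤
      localAverage ε u x * ((d + 1) * (K * D)) := by
    rw [abs_mul]
    refine mul_le_mul (abs_mollifiedSol_le h.memW12 hε x) ((abs_opTrace_le _).trans ?_)
      (abs_nonneg _) (localAverage_nonneg hε x)
    rw [finrank_euclideanSpace_fin, Nat.cast_succ]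
    gcongr
    exact (ContinuousLinearMap.opNorm_comp_le _ _).trans
      (mul_le_mul hAx (hD x).2 (norm_nonneg _) hK)
  have hcross : |2 * ⟪mollify ε A x (∇ (carlemanCutoff d) x), ∇ (mollifiedSol ε u) x⟫| ≤
      2 * (K * D * (localAverage ε u x + flatDensity d * C * boundaryMass u)) := by
    rw [abs_mul, abs_two]
    gcongr
    refine (abs_inner_clm_le _ _ _).trans (mul_le_mul (mul_le_mul hAx (hD x).1 (norm_nonneg _) hK)
      (norm_gradient_mollifiedSol_le h.memW12 hε (fun x => (hC x).1) hx2) (norm_nonneg _)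
      (mul_nonneg hK ((norm_nonneg _).trans (hD x).1)))
  have hprod := nonDivOp_mul (A := mollify ε A) (x := x)
    ((isC1Elliptic_mollify hε hK h.isSymm h.le_inner h.norm_le h.lipschitzWith).isSymmetric x)
    (contDiff_carlemanCutoff (n := 2)) (contDiff_mollifiedSol h.continuous_sol hε (n := 2))
  unfold cutoffSol
  rw [hprod]
  refine (abs_add_three _ _ _).trans ((add_le_add (add_le_add hleading hzeroth) hcross).trans_eq ?_)
  rw [residualConst, boundaryConst]
  ring

/-- The weighted energy density on a Carleman region slightly larger than the support of
`cutoffSol`. -/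
def weightedEnergy (s τ : ℝ) (u : Euc d → ℝ) : Euc d → ℝ :=
  (carlemanRegion d (29 / 20)).indicator fun y => carlemanWeight s τ y * energyDensity u y

lemma weightedEnergy_nonneg (y : Euc d) : 0 ≤ weightedEnergy s τ u y :=
  Set.indicator_nonneg
    (fun y _ => mul_nonneg (carlemanWeight_pos y).le (energyDensity_nonneg y)) y

lemma integrable_weight_mul {f : Euc d → ℝ} (hf : Integrable f (bulkMeasure d)) :
    Integrable (fun y => carlemanWeight s τ y * f y) (bulkMeasure d) :=
  integrable_bilin_of_continuous (ContinuousLinearMap.mul ℝ ℝ) continuous_carlemanWeight hf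

lemma integrable_weightedEnergy (hu : MemW12 d u) : Integrable (weightedEnergy s τ u) :=
  (integrable_indicator_iff (measurableSet_carlemanRegion _)).2 (integrableOn_carlemanRegion
    (integrable_weight_mul (integrable_energyDensity hu)) _)

lemma integral_weightedEnergy :
    ∫ y, weightedEnergy s τ u y =
      ∫ y in carlemanRegion d (29 / 20), carlemanWeight s τ y * energyDensity u y :=
  integral_indicator (measurableSet_carlemanRegion _)

/-- The weight is almost constant at scale `ε`, so it passes under the average. -/
lemma weight_mul_average_le (hu : MemW12 d u) (hε : 0 < ε) (hε' : ε ≤ 1 / 40) (hs : 1 ≤ s)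
    (hτ : 0 ≤ τ) (hsmall : 8 * τ * s * ε ≤ 2 / 3) (hx : ‖x - carlemanCenter d‖ ≤ 14 / 10) :
    carlemanWeight s τ x * ∫ y, mollifierMajorant d ε (x - y) * energyDensity u y ∂bulkMeasure d ≤
      2 * ∫ y, weightedEnergy s τ u y * mollifierMajorant d ε (x - y) := by
  have henergy := integrable_majorant_mul (ε := ε) (integrable_energyDensity hu) x
  have hoff : ∀ y ∈ Bplus d 2 \ carlemanRegion d (29 / 20),
      mollifierMajorant d ε (x - y) * energyDensity u y = 0 := by
    rintro y ⟨hy2, hy⟩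
    rw [mollifierMajorant_of_notMem_tsupport fun h => hy ⟨hy2, ?_⟩, zero_mul]
    rw [mem_ball, dist_eq_norm]
    have := norm_sub_le (x - carlemanCenter d) (x - y)
    rw [sub_sub_sub_cancel_left] at this
    linarith [(tsupport_mollifier_subset hε h).1]
  have hregion : ∫ y, weightedEnergy s τ u y * mollifierMajorant d ε (x - y) =
      ∫ y in carlemanRegion d (29 / 20),
        carlemanWeight s τ y * (mollifierMajorant d ε (x - y) * energyDensity u y) := by
    rw [← integral_indicator (measurableSet_carlemanRegion _)]
    congr 1 with y
    simp only [weightedEnergy, Set.indicator]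
    split_ifs <;> ring
  rw [hregion, setIntegral_eq_of_subset_of_forall_sdiff_eq_zero (measurableSet_Bplus 2)
    Set.inter_subset_left hoff, ← integral_const_mul, ← integral_const_mul]
  refine integral_mono ((integrableOn_carlemanRegion henergy _).const_mul _)
    ((integrableOn_carlemanRegion (integrable_weight_mul henergy) _).const_mul 2) fun y => ?_
  by_cases hy : x - y ∈ tsupport (mollifier d ε)
  · calc carlemanWeight s τ x * (mollifierMajorant d ε (x - y) * energyDensity u y)
        ≤ 2 * carlemanWeight s τ y * (mollifierMajorant d ε (x - y) * energyDensity u y) :=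
          mul_le_mul_of_nonneg_right (carlemanWeight_le_two_mul hs hτ hsmall
            (tsupport_mollifier_subset hε hy).1.le)
            (mul_nonneg (mollifierMajorant_nonneg hε _) (energyDensity_nonneg y))
      _ = _ := mul_assoc _ _ _
  · simp [mollifierMajorant_of_notMem_tsupport hy]

lemma integral_convolution_weightedEnergy (hu : MemW12 d u) (hε : 0 < ε) :
    Integrable (fun x => ∫ y, weightedEnergy s τ u y * mollifierMajorant d ε (x - y)) ∧
      ∫ x, ∫ y, weightedEnergy s τ u y * mollifierMajorant d ε (x - y) =
        majorantMass d * ∫ y, weightedEnergy s τ u y := by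
  have hE := integrable_weightedEnergy (s := s) (τ := τ) hu
  have hJ := integrable_mollifierMajorant (d := d) hε
  refine ⟨hE.integrable_convolution (ContinuousLinearMap.lsmul ℝ ℝ) hJ, ?_⟩
  refine (integral_convolution (ContinuousLinearMap.lsmul ℝ ℝ) hE hJ).trans ?_
  rw [integral_mollifierMajorant hε]
  exact mul_comm _ _

lemma IsRobinSolution.weight_mul_nonDivOp_cutoffSol_sq_le
    (h : IsRobinSolution lam K M Mη A V η u) (hε : 0 < ε) (hε' : ε ≤ 1 / 40) (hs : 1 ≤ s)
    (hτ : 0 ≤ τ) (hsmall : 8 * τ * s * ε ≤ 2 / 3) {D : ℝ}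
    (hC : ∀ x, mollifier d ε x ≤ C ∧ ‖∇ (mollifier d ε) x‖ ≤ C)
    (hD : ∀ x, ‖∇ (carlemanCutoff d) x‖ ≤ D ∧ ‖fderiv ℝ (∇ (carlemanCutoff d)) x‖ ≤ D)
    (x : Euc d) :
    carlemanWeight s τ x * nonDivOp (mollify ε A) (cutoffSol ε u) x ^ 2 ≤
      8 * residualConst d K M D ^ 2 * majorantMass d *
          (∫ y, weightedEnergy s τ u y * mollifierMajorant d ε (x - y)) +
        (closedBall (carlemanCenter d) (14 / 10)).indicator (fun _ =>
          2 * boundaryConst d K Mη D C ^ 2 * exp (2 * τ) * boundaryMass u ^ 2) x := by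
  have hmass := majorantMass_pos (d := d)
  by_cases hx : x ∈ closedBall (carlemanCenter d) (14 / 10)
  · have hx' : ‖x - carlemanCenter d‖ ≤ 14 / 10 := by rwa [mem_closedBall, dist_eq_norm] at hx
    have hres := h.abs_nonDivOp_cutoffSol_le hε hε' hC hD hx'
    have havg := weight_mul_average_le h.memW12 hε hε' hs hτ hsmall hx'
    have hw := (carlemanWeight_pos (s := s) (τ := τ) x).le
    rw [Set.indicator_of_mem hx]
    set c₁ := residualConst d K M D
    set c₂ := boundaryConst d K Mη D C
    set w := carlemanWeight s τ x
    calc w * nonDivOp (mollify ε A) (cutoffSol ε u) x ^ 2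
        ≤ w * (c₁ * localAverage ε u x + c₂ * boundaryMass u) ^ 2 :=
          mul_le_mul_of_nonneg_left (sq_le_sq' (abs_le.1 hres).1 (abs_le.1 hres).2) hw
      _ ≤ w * (2 * ((c₁ * localAverage ε u x) ^ 2 + (c₂ * boundaryMass u) ^ 2)) :=
          mul_le_mul_of_nonneg_left add_sq_le hw
      _ = 2 * c₁ ^ 2 * (w * localAverage ε u x ^ 2) + 2 * c₂ ^ 2 * w * boundaryMass u ^ 2 := by
          ring
      _ ≤ 2 * c₁ ^ 2 * (w * (2 * majorantMass d *
            ∫ y, mollifierMajorant d ε (x - y) * energyDensity u y ∂bulkMeasure d)) +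
            2 * c₂ ^ 2 * exp (2 * τ) * boundaryMass u ^ 2 := by
          gcongr
          · exact localAverage_sq_le h.memW12 hε x
          · exact carlemanWeight_le (by linarith) hτ x
      _ = 4 * c₁ ^ 2 * majorantMass d * (w *
            ∫ y, mollifierMajorant d ε (x - y) * energyDensity u y ∂bulkMeasure d) +
            2 * c₂ ^ 2 * exp (2 * τ) * boundaryMass u ^ 2 := by ring
      _ ≤ 4 * c₁ ^ 2 * majorantMass d *
            (2 * ∫ y, weightedEnergy s τ u y * mollifierMajorant d ε (x - y)) +
            2 * c₂ ^ 2 * exp (2 * τ) * boundaryMass u ^ 2 := by gcongr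
      _ = _ := by ring
  · rw [nonDivOp_of_notMem_tsupport fun h => hx (tsupport_cutoffSol_subset h),
      Set.indicator_of_notMem hx, zero_pow two_ne_zero, mul_zero, add_zero]
    exact mul_nonneg (by positivity) (integral_nonneg fun y =>
      mul_nonneg (weightedEnergy_nonneg y) (mollifierMajorant_nonneg hε _))

lemma IsRobinSolution.integrable_weight_mul_nonDivOp_cutoffSol_sq
    (h : IsRobinSolution lam K M Mη A V η u) (hε : 0 < ε) :
    Integrable fun x => carlemanWeight s τ x * nonDivOp (mollify ε A) (cutoffSol ε u) x ^ 2 :=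
  (continuous_carlemanWeight.mul ((continuous_nonDivOp
      (contDiff_mollify hε h.lipschitzWith.continuous).continuous
      (contDiff_cutoffSol h.continuous_sol hε)).pow 2)).integrable_of_hasCompactSupport <|
    .intro (hasCompactSupport_cutoffSol (ε := ε) (u := u)) fun x hx => by
      simp [nonDivOp_of_notMem_tsupport hx]

theorem exists_integral_weight_mul_nonDivOp_sq_le (d : ℕ) (K M Mη : ℝ) :
    ∃ C, 0 ≤ C ∧ ∀ ε s τ : ℝ, 0 < ε → ε ≤ 1 / 40 → 1 ≤ s → 0 ≤ τ → 8 * τ * s * ε ≤ 2 / 3 →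
      ∃ C', 0 ≤ C' ∧ ∀ lam (A : Euc d → Euc d →L[ℝ] Euc d) V η u,
        IsRobinSolution lam K M Mη A V η u →
        ∫ x, carlemanWeight s τ x * nonDivOp (mollify ε A) (cutoffSol ε u) x ^ 2 ≤
          C * (∫ y in carlemanRegion d (29 / 20), carlemanWeight s τ y * energyDensity u y) +
            C' * ∫ y, u y ^ 2 ∂flatMeasure d := by
  obtain ⟨D, hD⟩ := exists_carlemanCutoff_le d
  have hmass := majorantMass_pos (d := d)
  set c₀ := 8 * residualConst d K M D ^ 2 * majorantMass d
  refine ⟨c₀ * majorantMass d, by positivity, ?_⟩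
  intro ε s τ hε hε' hs hτ hsmall
  obtain ⟨C, hC⟩ := exists_mollifier_le (d := d) hε
  set B := closedBall (carlemanCenter d) (14 / 10)
  set c := 2 * boundaryConst d K Mη D C ^ 2 * exp (2 * τ)
  refine ⟨volume.real B * (c * (flatMeasure d).real Set.univ), by positivity, ?_⟩
  intro lam A V η u h
  obtain ⟨hconv, hconv_eq⟩ :=
    integral_convolution_weightedEnergy (s := s) (τ := τ) h.memW12 hε
  have hbdry : Integrable (B.indicator fun _ => c * boundaryMass u ^ 2) :=
    (integrable_indicator_iff measurableSet_closedBall).2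
      (integrableOn_const measure_closedBall_lt_top.ne)
  calc ∫ x, carlemanWeight s τ x * nonDivOp (mollify ε A) (cutoffSol ε u) x ^ 2
      ≤ ∫ x, (c₀ * (∫ y, weightedEnergy s τ u y * mollifierMajorant d ε (x - y)) +
          B.indicator (fun _ => c * boundaryMass u ^ 2) x) :=
        integral_mono (h.integrable_weight_mul_nonDivOp_cutoffSol_sq hε)
          ((hconv.const_mul _).add hbdry)
          (h.weight_mul_nonDivOp_cutoffSol_sq_le hε hε' hs hτ hsmall hC hD)
    _ = c₀ * majorantMass d *
          (∫ y in carlemanRegion d (29 / 20), carlemanWeight s τ y * energyDensity u y) +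
            volume.real B * (c * boundaryMass u ^ 2) := by
        rw [integral_add (hconv.const_mul _) hbdry, integral_const_mul, hconv_eq,
          integral_weightedEnergy, integral_indicator measurableSet_closedBall, setIntegral_const,
          smul_eq_mul]
        ring
    _ ≤ _ := by
        rw [mul_assoc (volume.real B), mul_assoc c]
        gcongr
        exact boundaryMass_sq_le h.continuous_sol

end WeightedResidual

section MollifierLimits

open Filter

variable {d : ℕ} {ε C : ℝ} {x : Euc d}
  {F : Type*} [NormedAddCommGroup F] [InnerProductSpace ℝ F]

lemma eventually_mollifier_lt {r : ℝ} (hr : 0 < r) : ∀ᶠ ε in 𝓝[>] (0 : ℝ), 0 < ε ∧ 2 * ε < r := by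
  filter_upwards [Ioo_mem_nhdsGT (half_pos hr)] with ε hε
  exact ⟨hε.1, by linarith [hε.2]⟩

lemma tendsto_mollify [CompleteSpace F] {f : Euc d → F} (hf : Continuous f) (x : Euc d) :
    Tendsto (fun ε => mollify ε f x) (𝓝[>] 0) (𝓝 (f x)) := by
  rw [Metric.tendsto_nhds]
  intro θ hθ
  obtain ⟨r, hr, hfr⟩ := Metric.continuousAt_iff.1 (hf.continuousAt (x := x)) (θ / 2) (half_pos hθ)
  filter_upwards [eventually_mollifier_lt hr] with ε hε
  rw [dist_eq_norm, mollify_sub hε.1 hf]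
  refine (norm_integral_mollifier_smul_le hε.1 fun t ht => ?_).trans_lt (half_lt_self hθ)
  rw [← dist_eq_norm]
  exact (hfr (by simpa using ht.trans hε.2)).le

lemma continuous_integral_inner_translate {f g : Euc d → F} (hf : MemLp f 2) (hg : MemLp g 2) :
    Continuous fun t => ∫ x, ⟪f x, g (x + t)⟫ := by
  have : Fact ((2 : ℝ≥0∞) ≠ ⊤) := ⟨by norm_num⟩
  have htranslate : (fun t => ∫ x, ⟪f x, g (x + t)⟫) =
      fun t : Euc d => ⟪hf.toLp f, DomAddAct.mk t +ᵥ hg.toLp g⟫ := by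
    ext t
    rw [DomAddAct.mk_vadd_toLp, L2.inner_def]
    refine integral_congr_ae ?_
    filter_upwards [hf.coeFn_toLp,
      (hg.comp_measurePreserving (measurePreserving_vadd t volume)).coeFn_toLp] with x hfx hgx
    rw [hfx, add_comm x t]
    exact congrArg (inner ℝ (f x)) hgx.symm
  rw [htranslate]
  exact continuous_const.inner (DomAddAct.continuous_mk.vadd continuous_const)

lemma integrable_prod_mollifier_inner (hε : 0 < ε) {f g : Euc d → F} (hf : Integrable f)
    (hg : Integrable g) :
    Integrable (fun p : Euc d × Euc d => mollifier d ε p.2 * ⟪f p.1, g (p.1 - p.2)⟫)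
      (volume.prod volume) := by
  obtain ⟨C, hC⟩ := (hasCompactSupport_mollifier (d := d) hε).exists_bound_of_continuous
    continuous_mollifier
  have hconv := (hf.convolution_integrand (innerSL ℝ) hg.comp_neg).swap
  simp only [Function.comp_def, neg_sub, Prod.fst_swap, Prod.snd_swap] at hconv
  exact hconv.bdd_mul (continuous_mollifier.comp continuous_snd).aestronglyMeasurable
    (.of_forall fun p => hC p.2)

lemma integral_inner_mollify [CompleteSpace F] (hε : 0 < ε) {f g : Euc d → F} (hf : Integrable f)
    (hg : Integrable g) :
    ∫ x, ⟪f x, mollify ε g x⟫ = mollify ε (fun t => ∫ x, ⟪f x, g (x + t)⟫) 0 := by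
  obtain ⟨C, hC⟩ := (hasCompactSupport_mollifier (d := d) hε).exists_bound_of_continuous
    continuous_mollifier
  have hslice : ∀ x, Integrable fun t => mollifier d ε t • g (x - t) := fun x =>
    (hg.comp_sub_left x).bdd_smul C continuous_mollifier.aestronglyMeasurable (.of_forall hC)
  calc ∫ x, ⟪f x, mollify ε g x⟫
      = ∫ x, ∫ t, mollifier d ε t * ⟪f x, g (x - t)⟫ := by
        simp_rw [mollify, ← integral_inner (hslice _), real_inner_smul_right]
    _ = ∫ t, ∫ x, mollifier d ε t * ⟪f x, g (x - t)⟫ :=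
        integral_integral_swap (integrable_prod_mollifier_inner hε hf hg)
    _ = _ := by
        simp_rw [mollify, integral_const_mul, smul_eq_mul, zero_sub, sub_eq_add_neg]

lemma tendsto_integral_inner_mollify [CompleteSpace F] {f g : Euc d → F} (hf : Integrable f)
    (hf2 : MemLp f 2) (hg : Integrable g) (hg2 : MemLp g 2) :
    Tendsto (fun ε => ∫ x, ⟪f x, mollify ε g x⟫) (𝓝[>] 0) (𝓝 (∫ x, ⟪f x, g x⟫)) := by
  have hlim := tendsto_mollify (continuous_integral_inner_translate hf2 hg2) 0
  simp only [add_zero] at hlim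
  refine hlim.congr' ?_
  filter_upwards [self_mem_nhdsWithin] with ε hε
  exact (integral_inner_mollify hε hf hg).symm

end MollifierLimits

section MollifiedSolutionLimits

open Filter

variable {d : ℕ} {ε C : ℝ} {u : Euc d → ℝ} {x : Euc d}

lemma integral_smul_eq_mollify_indicator {F : Type*} [NormedAddCommGroup F] [NormedSpace ℝ F]
    (f : Euc d → F) (x : Euc d) :
    ∫ y, mollifier d ε (x - y) • f y ∂bulkMeasure d = mollify ε ((Bplus d 2).indicator f) x := by
  rw [mollify, ← integral_sub_left_eq_self _ volume x, ← integral_indicator (measurableSet_Bplus 2)]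
  simp only [sub_sub_cancel]
  congr 1 with y
  by_cases hy : y ∈ Bplus d 2 <;> simp [hy]

lemma mollifiedSol_eq_mollify_indicator (u : Euc d → ℝ) (x : Euc d) :
    mollifiedSol ε u x = mollify ε ((Bplus d 2).indicator u) x := by
  rw [← integral_smul_eq_mollify_indicator, mollifiedSol, halfConv]
  simp_rw [smul_eq_mul, mul_comm]

lemma sub_mem_Bplus (hε : 0 < ε) (hx : ‖x‖ + 2 * ε ≤ 2) (hx0 : 0 ≤ x (Fin.last d)) {t : Euc d}
    (ht : t ∈ tsupport (mollifier d ε)) : x - t ∈ Bplus d 2 := by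
  obtain ⟨htnorm, htlast⟩ := tsupport_mollifier_subset hε ht
  refine ⟨?_, ?_⟩
  · rw [mem_ball_zero_iff]
    linarith [norm_sub_le x t]
  · change 0 < (x - t) (Fin.last d)
    rw [PiLp.sub_apply]
    linarith

lemma mollifiedSol_eq_mollify (hε : 0 < ε) (hx : ‖x‖ + 2 * ε ≤ 2) (hx0 : 0 ≤ x (Fin.last d)) :
    mollifiedSol ε u x = mollify ε u x := by
  rw [mollifiedSol_eq_mollify_indicator]
  refine integral_congr_ae (.of_forall fun t => ?_)
  by_cases ht : t ∈ tsupport (mollifier d ε)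
  · simp [sub_mem_Bplus hε hx hx0 ht]
  · simp [image_eq_zero_of_notMem_tsupport ht]

-- The one-sided kernel vanishes on differences with a point of `Γ_2`, so no boundary term appears.
lemma gradient_mollifiedSol (hu : MemW12 d u) (hε : 0 < ε) (hx : ‖x‖ + 2 * ε ≤ 2)
    (hx0 : 0 ≤ x (Fin.last d)) :
    ∇ (mollifiedSol ε u) x = mollify ε ((Bplus d 2).indicator (∇ u)) x := by
  have hflat : ∫ y, u y * mollifier d ε (x - y) ∂flatMeasure d = 0 := by
    refine integral_eq_zero_of_ae (ae_flatMeasure fun y hy => ?_)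
    have hy0 : y (Fin.last d) = 0 := hy.2
    have hxy : x - y ∉ tsupport (mollifier d ε) := fun h => by
      have := (tsupport_mollifier_subset hε h).2
      rw [PiLp.sub_apply] at this
      linarith
    simp [image_eq_zero_of_notMem_tsupport hxy]
  rw [mollifiedSol, gradient_halfConv hu (contDiff_mollifier (n := 1))
    (tsupport_mollifier_subset_ball hε) x hx, hflat, mul_zero, zero_smul, add_zero,
    integral_smul_eq_mollify_indicator]

lemma tendsto_mollifiedSol (hu : Continuous u) (hx : ‖x‖ < 2) (hx0 : 0 ≤ x (Fin.last d)) :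
    Tendsto (fun ε => mollifiedSol ε u x) (𝓝[>] 0) (𝓝 (u x)) := by
  refine (tendsto_mollify hu x).congr' ?_
  filter_upwards [eventually_mollifier_lt (sub_pos.2 hx)] with ε hε
  exact (mollifiedSol_eq_mollify hε.1 (by linarith) hx0).symm

lemma exists_abs_mollifiedSol_le (hu : Continuous u) :
    ∃ C, ∀ ε > 0, ∀ x, |mollifiedSol ε u x| ≤ C := by
  obtain ⟨C, hC⟩ := exists_norm_le_on_closedBall hu 2
  have hC0 : 0 ≤ C := (norm_nonneg _).trans (hC 0 (mem_closedBall_self zero_le_two))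
  refine ⟨C, fun ε hε x => ?_⟩
  rw [mollifiedSol_eq_mollify_indicator, ← Real.norm_eq_abs]
  refine norm_mollify_le hε (fun y => ?_) x
  by_cases hy : y ∈ Bplus d 2
  · simpa [hy] using hC y (ball_subset_closedBall hy.1)
  · simpa [hy] using hC0

lemma tendsto_integral_mul_mollifiedSol {μ : Measure (Euc d)}
    (hμ : ∀ᵐ x ∂μ, ‖x‖ < 2 ∧ 0 ≤ x (Fin.last d)) {f : Euc d → ℝ} (hf : Integrable f μ)
    (hu : Continuous u) :
    Tendsto (fun ε => ∫ x, f x * mollifiedSol ε u x ∂μ) (𝓝[>] 0) (𝓝 (∫ x, f x * u x ∂μ)) := by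
  obtain ⟨C, hC⟩ := exists_abs_mollifiedSol_le hu
  refine tendsto_integral_filter_of_dominated_convergence (fun x => ‖f x‖ * C) ?_ ?_
    (hf.norm.mul_const C) ?_
  · filter_upwards [self_mem_nhdsWithin] with ε hε
    exact hf.aestronglyMeasurable.mul
      (contDiff_mollifiedSol (n := 0) hu hε).continuous.aestronglyMeasurable
  · filter_upwards [self_mem_nhdsWithin] with ε hε
    refine .of_forall fun x => ?_
    rw [norm_mul]
    exact mul_le_mul_of_nonneg_left (hC ε hε x) (norm_nonneg _)
  · filter_upwards [hμ] with x hx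
    exact (tendsto_mollifiedSol hu hx.1 hx.2).const_mul _

end MollifiedSolutionLimits

section EnergyIdentity

open Filter

variable {d : ℕ} {lam K M Mη : ℝ} {A : Euc d → Euc d →L[ℝ] Euc d} {V η u ζ : Euc d → ℝ}

lemma memLp_gradient (hu : MemW12 d u) : MemLp (∇ u) 2 (bulkMeasure d) :=
  (memLp_two_iff_integrable_sq_norm (measurable_gradient u).aestronglyMeasurable).2
    (integrable_norm_gradient_sq hu)

namespace IsRobinSolution

variable (h : IsRobinSolution lam K M Mη A V η u)
include h

lemma measurable_flux : Measurable fun y => A y (∇ u y) :=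
  (continuous_fst.clm_apply continuous_snd).measurable.comp
    (h.lipschitzWith.continuous.measurable.prodMk (measurable_gradient u))

lemma norm_flux_le (y : Euc d) : ‖A y (∇ u y)‖ ≤ K * ‖∇ u y‖ :=
  ((A y).le_opNorm _).trans (mul_le_mul_of_nonneg_right (h.norm_le y) (norm_nonneg _))

lemma memLp_flux : MemLp (fun y => A y (∇ u y)) 2 (bulkMeasure d) :=
  (memLp_gradient h.memW12).of_le_mul h.measurable_flux.aestronglyMeasurable
    (.of_forall h.norm_flux_le)

lemma memLp_smul_flux (hζ : Continuous ζ) :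
    MemLp (fun y => ζ y • A y (∇ u y)) 2 (bulkMeasure d) := by
  obtain ⟨C, hC⟩ := exists_norm_le_on_closedBall hζ 2
  refine h.memLp_flux.of_le_mul (c := C)
    (hζ.measurable.smul h.measurable_flux).aestronglyMeasurable (ae_bulkMeasure fun y hy => ?_)
  rw [norm_smul]
  exact mul_le_mul_of_nonneg_right (hC y (ball_subset_closedBall hy.1)) (norm_nonneg _)

lemma integrable_flux_inner {X : Euc d → Euc d} (hX : Continuous X) :
    Integrable (fun y => ⟪A y (∇ u y), X y⟫) (bulkMeasure d) := by
  simp_rw [← real_inner_comm (A _ _)]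
  exact integrable_bilin_of_continuous (innerSL ℝ) hX h.integrable_flux

lemma tendsto_flux_gradient_mollifiedSol (hζ : Continuous ζ)
    (hζs : tsupport ζ ⊆ closedBall 0 (7 / 4)) :
    Tendsto (fun ε => ∫ x, ζ x * ⟪A x (∇ u x), ∇ (mollifiedSol ε u) x⟫ ∂bulkMeasure d) (𝓝[>] 0)
      (𝓝 (∫ x, ζ x * ⟪A x (∇ u x), ∇ u x⟫ ∂bulkMeasure d)) := by
  have hB := measurableSet_Bplus (d := d) 2
  have hflux := h.memLp_smul_flux hζ
  have hgrad := memLp_gradient h.memW12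
  have hpair : ∀ X : Euc d → Euc d,
      ∫ x, ⟪(Bplus d 2).indicator (fun y => ζ y • A y (∇ u y)) x, X x⟫ =
        ∫ x, ζ x * ⟪A x (∇ u x), X x⟫ ∂bulkMeasure d := fun X => by
    rw [← integral_indicator hB]
    congr 1 with x
    by_cases hx : x ∈ Bplus d 2 <;> simp [hx, real_inner_smul_left, -inner_gradient_right]
  have hlim := tendsto_integral_inner_mollify
    ((integrable_indicator_iff hB).2 (hflux.integrable one_le_two))
    ((memLp_indicator_iff_restrict hB).2 hflux)
    ((integrable_indicator_iff hB).2 (hgrad.integrable one_le_two))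
    ((memLp_indicator_iff_restrict hB).2 hgrad)
  simp_rw [hpair] at hlim
  convert hlim.congr' ?_ using 2
  · refine integral_congr_ae (ae_bulkMeasure fun x hx => ?_)
    simp only [Set.indicator_of_mem hx]
  filter_upwards [eventually_mollifier_lt (r := 1 / 4) (by norm_num)] with ε hε
  refine integral_congr_ae (ae_bulkMeasure fun x hx => ?_)
  by_cases hxζ : x ∈ tsupport ζ
  · have hxnorm : ‖x‖ ≤ 7 / 4 := by simpa using hζs hxζ
    simp only [gradient_mollifiedSol h.memW12 hε.1 (x := x) (by linarith) hx.2.le]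
  · simp [image_eq_zero_of_notMem_tsupport hxζ]

lemma weak_equation_mul_mollifiedSol (hζ : ContDiff ℝ (⊤ : ℕ∞) ζ) (hζc : HasCompactSupport ζ)
    (hζs : tsupport ζ ⊆ closedBall 0 (7 / 4)) {ε : ℝ} (hε : 0 < ε) :
    ∫ x, ζ x * ⟪A x (∇ u x), ∇ (mollifiedSol ε u) x⟫ ∂bulkMeasure d +
      ∫ x, ⟪A x (∇ u x), ∇ ζ x⟫ * mollifiedSol ε u x ∂bulkMeasure d +
      ∫ x, V x * u x * ζ x * mollifiedSol ε u x ∂bulkMeasure d =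
    ∫ x, η x * u x * ζ x * mollifiedSol ε u x ∂flatMeasure d := by
  have hw : ContDiff ℝ (⊤ : ℕ∞) (mollifiedSol ε u) := contDiff_mollifiedSol h.continuous_sol hε
  have hone : (1 : WithTop ℕ∞) ≤ (⊤ : ℕ∞) := mod_cast le_top
  have hψ := h.isWeakSol.2 (fun x => ζ x * mollifiedSol ε u x) (hζ.mul hw) hζc.mul_right
    ((tsupport_mul_subset_left.trans hζs).trans (closedBall_subset_ball (by norm_num)))
  have hgrad : ∀ x, ⟪A x (∇ u x), ∇ (fun x => ζ x * mollifiedSol ε u x) x⟫ =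
      ζ x * ⟪A x (∇ u x), ∇ (mollifiedSol ε u) x⟫ +
        ⟪A x (∇ u x), ∇ ζ x⟫ * mollifiedSol ε u x := fun x => by
    rw [gradient_fun_mul (hζ.differentiable (by simp) x) (hw.differentiable (by simp) x),
      inner_add_right, real_inner_smul_right, real_inner_smul_right,
      mul_comm _ (mollifiedSol ε u x)]
  have hgw : Integrable (fun x => ζ x * ⟪A x (∇ u x), ∇ (mollifiedSol ε u) x⟫) (bulkMeasure d) := by
    simp_rw [← real_inner_smul_right]
    exact h.integrable_flux_inner
      (hζ.continuous.smul (continuous_gradient (hw.of_le hone)))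
  have hgζ : Integrable (fun x => ⟪A x (∇ u x), ∇ ζ x⟫ * mollifiedSol ε u x) (bulkMeasure d) := by
    simp_rw [mul_comm _ (mollifiedSol ε u _)]
    exact integrable_bilin_of_continuous (ContinuousLinearMap.mul ℝ ℝ) hw.continuous
      (h.integrable_flux_inner (continuous_gradient (hζ.of_le hone)))
  have hpot := h.integrable_potential_mul (g := fun x => ζ x * mollifiedSol ε u x)
    (hζ.continuous.mul hw.continuous)
  simp_rw [hgrad] at hψ
  simp_rw [mul_assoc _ (ζ _)]
  rw [← integral_add hgw hgζ, ← integral_add (by exact hgw.add hgζ) hpot]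
  exact hψ

/-- Testing with `ζ u`, which is only admissible after mollifying `u`. -/
lemma energy_identity (hζ : ContDiff ℝ (⊤ : ℕ∞) ζ) (hζc : HasCompactSupport ζ)
    (hζs : tsupport ζ ⊆ closedBall 0 (7 / 4)) :
    ∫ x, ζ x * ⟪A x (∇ u x), ∇ u x⟫ ∂bulkMeasure d +
      ∫ x, ⟪A x (∇ u x), ∇ ζ x⟫ * u x ∂bulkMeasure d + ∫ x, V x * u x * ζ x * u x ∂bulkMeasure d =
    ∫ x, η x * u x * ζ x * u x ∂flatMeasure d := by
  have hu := h.continuous_sol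
  have hbulk : ∀ᵐ x ∂bulkMeasure d, ‖x‖ < 2 ∧ 0 ≤ x (Fin.last d) :=
    ae_bulkMeasure fun x hx => ⟨by simpa using hx.1, hx.2.le⟩
  have hflat : ∀ᵐ x ∂flatMeasure d, ‖x‖ < 2 ∧ 0 ≤ x (Fin.last d) :=
    ae_flatMeasure fun x hx => ⟨by simpa using hx.1, hx.2.ge⟩
  have hη : Integrable (fun x => η x * u x * ζ x) (flatMeasure d) := by
    simp_rw [mul_assoc]
    exact (integrable_flatMeasure_of_continuous (hu.mul hζ.continuous)).bdd_mul
      h.measurable_robin.aestronglyMeasurable (.of_forall h.abs_robin_le)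
  have hgζ := h.integrable_flux_inner (continuous_gradient (hζ.of_le (mod_cast le_top)))
  refine tendsto_nhds_unique (((h.tendsto_flux_gradient_mollifiedSol hζ.continuous hζs).add
    (tendsto_integral_mul_mollifiedSol hbulk hgζ hu)).add (tendsto_integral_mul_mollifiedSol hbulk
      (h.integrable_potential_mul hζ.continuous) hu)) ?_
  refine (tendsto_integral_mul_mollifiedSol hflat hη hu).congr' ?_
  filter_upwards [self_mem_nhdsWithin] with ε hε
  exact (h.weak_equation_mul_mollifiedSol hζ hζc hζs hε).symm

end IsRobinSolution

end EnergyIdentity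

section Caccioppoli

variable {d : ℕ} {lam K M Mη s τ : ℝ} {A : Euc d → Euc d →L[ℝ] Euc d} {V η u : Euc d → ℝ}

/-- The smooth cutoff of the energy estimate, equal to `1` on `ball (carlemanCenter d) (29/20)`,
a neighbourhood of the support of `carlemanCutoff d`. -/
def energyCutoff (d : ℕ) : ContDiffBump (carlemanCenter d) :=
  ⟨29 / 20, 3 / 2, by norm_num, by norm_num⟩

lemma contDiff_energyCutoff {n : ℕ∞} : ContDiff ℝ n (energyCutoff d) := (energyCutoff d).contDiff

lemma exists_norm_gradient_energyCutoff_le (d : ℕ) : ∃ D, ∀ x, ‖∇ (energyCutoff d) x‖ ≤ D :=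
  (hasCompactSupport_gradient (energyCutoff d).hasCompactSupport).exists_bound_of_continuous
    (continuous_gradient (contDiff_energyCutoff (n := 1)))

lemma norm_gradient_carlemanWeight_le (hs : 1 ≤ s) (hτ : 0 ≤ τ) (x : Euc d) :
    ‖∇ (carlemanWeight s τ) x‖ ≤ 4 * (s * τ) * carlemanWeight s τ x := by
  have hφ := gaussWeight_mul_norm_le_one hs (carlemanCenter d) x
  have hφ0 := gaussWeight_pos s (carlemanCenter d) x
  have hw := carlemanWeight_pos (s := s) (τ := τ) x
  calc ‖∇ (carlemanWeight s τ) x‖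
      = ‖(2 * τ * s * gaussWeight s (carlemanCenter d) x * carlemanWeight s τ x) •
          radialField (carlemanCenter d) x‖ :=
        congrArg norm (gradient_exp_mul_gaussWeight (2 * τ) s (carlemanCenter d) x)
    _ = 4 * (s * τ) * carlemanWeight s τ x *
          (gaussWeight s (carlemanCenter d) x * ‖x - carlemanCenter d‖) := by
        rw [norm_smul, Real.norm_of_nonneg (by positivity), norm_radialField]
        ring
    _ ≤ 4 * (s * τ) * carlemanWeight s τ x := mul_le_of_le_one_right (by positivity) hφ

/-- The test weight `χ² exp (2τφ)` of the weighted energy estimate. -/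
def energyTest (s τ : ℝ) (x : Euc d) : ℝ := energyCutoff d x ^ 2 * carlemanWeight s τ x

lemma contDiff_energyTest {n : ℕ∞} : ContDiff ℝ n (energyTest (d := d) s τ) :=
  (contDiff_energyCutoff.pow 2).mul contDiff_carlemanWeight

lemma continuous_energyTest : Continuous (energyTest (d := d) s τ) :=
  (contDiff_energyTest (n := 0)).continuous

lemma tsupport_energyTest_subset :
    tsupport (energyTest (d := d) s τ) ⊆ closedBall (carlemanCenter d) (3 / 2) := by
  refine closure_minimal (fun x hx => ?_) isClosed_closedBall
  by_contra hfar
  exact hx (by simp [energyTest,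
    (energyCutoff d).zero_of_le_dist (not_le.1 (mt mem_closedBall.2 hfar)).le])

lemma tsupport_energyTest_subset_closedBall :
    tsupport (energyTest (d := d) s τ) ⊆ closedBall 0 (7 / 4) := fun x hx => by
  have hcenter := tsupport_energyTest_subset hx
  rw [mem_closedBall_iff_norm] at hcenter
  rw [mem_closedBall_zero_iff]
  linarith [norm_le_norm_sub_carlemanCenter_add x]

lemma hasCompactSupport_energyTest : HasCompactSupport (energyTest (d := d) s τ) :=
  (isCompact_closedBall _ _).of_isClosed_subset (isClosed_tsupport _) tsupport_energyTest_subset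

lemma energyTest_nonneg (x : Euc d) : 0 ≤ energyTest s τ x :=
  mul_nonneg (sq_nonneg _) (carlemanWeight_pos x).le

lemma energyTest_le (hs : 0 ≤ s) (hτ : 0 ≤ τ) (x : Euc d) : energyTest s τ x ≤ exp (2 * τ) :=
  (mul_le_of_le_one_left (carlemanWeight_pos x).le
    (pow_le_one₀ (energyCutoff d).nonneg (energyCutoff d).le_one)).trans (carlemanWeight_le hs hτ x)

lemma norm_gradient_energyTest_le (hs : 1 ≤ s) (hτ : 1 ≤ τ) {D : ℝ}
    (hD : ∀ x, ‖∇ (energyCutoff d) x‖ ≤ D) (x : Euc d) :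
    ‖∇ (energyTest s τ) x‖
      ≤ energyCutoff d x * carlemanWeight s τ x * ((2 * D + 4) * (s * τ)) := by
  set χ := energyCutoff d x
  set w := carlemanWeight s τ x
  have hχ : DifferentiableAt ℝ (energyCutoff d) x :=
    (contDiff_energyCutoff (n := 1)).differentiable (by simp) x
  have hW : DifferentiableAt ℝ (carlemanWeight s τ) x :=
    (contDiff_carlemanWeight (n := 1)).differentiable (by simp) x
  have hχ0 : 0 ≤ χ := (energyCutoff d).nonneg
  have hχ1 : χ ≤ 1 := (energyCutoff d).le_one
  have hw0 : 0 ≤ w := (carlemanWeight_pos x).le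
  have hD0 : 0 ≤ D := (norm_nonneg _).trans (hD x)
  have hproduct : ∇ (energyTest s τ) x
      = (χ * χ) • ∇ (carlemanWeight s τ) x + (w * (2 * χ)) • ∇ (energyCutoff d) x := by
    have hdef : energyTest (d := d) s τ
        = fun y => energyCutoff d y * energyCutoff d y * carlemanWeight s τ y := by
      ext y
      rw [energyTest, sq]
    rw [hdef, gradient_fun_mul (hχ.fun_mul hχ) hW, gradient_fun_mul hχ hχ]
    module
  calc ‖∇ (energyTest s τ) x‖
      ≤ χ * χ * ‖∇ (carlemanWeight s τ) x‖ + w * (2 * χ) * ‖∇ (energyCutoff d) x‖ := by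
        rw [hproduct]
        refine (norm_add_le _ _).trans_eq ?_
        rw [norm_smul, norm_smul, Real.norm_of_nonneg (by positivity),
          Real.norm_of_nonneg (by positivity)]
    _ ≤ χ * 1 * (4 * (s * τ) * w) + w * (2 * χ) * D := by
        gcongr
        exacts [norm_gradient_carlemanWeight_le hs (by linarith) x, hD x]
    _ = χ * w * (2 * D * 1 + 4 * (s * τ)) := by ring
    _ ≤ χ * w * (2 * D * (s * τ) + 4 * (s * τ)) := by
        gcongr
        exact one_le_mul_of_one_le_of_one_le hs hτ
    _ = χ * w * ((2 * D + 4) * (s * τ)) := by ring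

lemma caccioppoli_pointwise {w χ p a b v U L : ℝ} (hlam : 0 < lam) (hw : 0 ≤ w) (hχ0 : 0 ≤ χ)
    (hχ1 : χ ≤ 1) (ha : lam * p ^ 2 ≤ a) (hb : |b| ≤ K * p * (χ * w * L)) (hv : |v| ≤ M) :
    lam / 2 * (χ ^ 2 * w * p ^ 2) - ((K * L) ^ 2 / (2 * lam) + M) * (w * U ^ 2)
      ≤ χ ^ 2 * w * a + b * U + v * U * (χ ^ 2 * w) * U := by
  have hleading : χ ^ 2 * w * (lam * p ^ 2) ≤ χ ^ 2 * w * a := by gcongr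
  have hcross : -(K * p * (χ * w * L) * |U|) ≤ b * U := by
    refine (neg_le_neg ?_).trans (neg_abs_le _)
    rw [abs_mul]
    gcongr
  have hpotential : -(M * (w * U ^ 2)) ≤ v * U * (χ ^ 2 * w) * U := by
    have hM : 0 ≤ M := (abs_nonneg v).trans hv
    refine (neg_le_neg ?_).trans (neg_abs_le _)
    calc |v * U * (χ ^ 2 * w) * U| = |v| * (χ ^ 2 * (w * U ^ 2)) := by
          rw [abs_mul, abs_mul, abs_mul, abs_of_nonneg (by positivity : 0 ≤ χ ^ 2 * w), ← sq_abs U]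
          ring
      _ ≤ M * (1 * (w * U ^ 2)) := by
          gcongr
          exact pow_le_one₀ hχ0 hχ1
      _ = M * (w * U ^ 2) := by ring
  have hyoung : K * p * (χ * w * L) * |U|
      ≤ lam / 2 * (χ ^ 2 * w * p ^ 2) + (K * L) ^ 2 / (2 * lam) * (w * U ^ 2) := by
    have hsq : 0 ≤ w * ((lam * (χ * p) - K * L * |U|) ^ 2 / (2 * lam)) := by positivity
    rw [← sq_abs U]
    convert sub_nonneg.1 (hsq.trans_eq _) using 1
    field_simp
    ring
  linarith

namespace IsRobinSolution

lemma integrable_flux_inner_gradient (h : IsRobinSolution lam K M Mη A V η u) {ζ : Euc d → ℝ}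
    (hζ : Continuous ζ) :
    Integrable (fun x => ζ x * ⟪A x (∇ u x), ∇ u x⟫) (bulkMeasure d) := by
  refine integrable_bilin_of_continuous (ContinuousLinearMap.mul ℝ ℝ) hζ ?_
  refine ((integrable_norm_gradient_sq h.memW12).const_mul K).mono'
    (h.measurable_flux.inner (measurable_gradient u)).aestronglyMeasurable (.of_forall fun x => ?_)
  exact (abs_real_inner_le_norm _ _).trans
    ((mul_le_mul_of_nonneg_right (h.norm_flux_le x) (norm_nonneg _)).trans_eq (by ring))

lemma integral_robin_energyTest_le (h : IsRobinSolution lam K M Mη A V η u) (hs : 0 ≤ s)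
    (hτ : 0 ≤ τ) :
    ∫ x, η x * u x * energyTest s τ x * u x ∂flatMeasure d
      ≤ Mη * exp (2 * τ) * ∫ x, u x ^ 2 ∂flatMeasure d := by
  have hu := h.continuous_sol
  rw [← integral_const_mul]
  refine integral_mono (f := fun x => η x * u x * energyTest s τ x * u x) ?_
    ((integrable_flatMeasure_of_continuous (hu.pow 2)).const_mul _) fun x => ?_
  · simp_rw [mul_assoc]
    exact (integrable_flatMeasure_of_continuous (hu.mul (continuous_energyTest.mul hu))).bdd_mul
      h.measurable_robin.aestronglyMeasurable (.of_forall h.abs_robin_le)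
  · have hη := (le_abs_self _).trans (h.abs_robin_le x)
    have hMη := h.Mη_nonneg
    have hζ0 := energyTest_nonneg (s := s) (τ := τ) x
    calc η x * u x * energyTest s τ x * u x = η x * energyTest s τ x * u x ^ 2 := by ring
      _ ≤ Mη * exp (2 * τ) * u x ^ 2 := by
        gcongr
        exact energyTest_le hs hτ x

lemma energyTest_pointwise (h : IsRobinSolution lam K M Mη A V η u) (hlam : 0 < lam) (hs : 1 ≤ s)
    (hτ : 1 ≤ τ) {D : ℝ} (hD : ∀ x, ‖∇ (energyCutoff d) x‖ ≤ D) (x : Euc d) :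
    lam / 2 * (energyTest s τ x * ‖∇ u x‖ ^ 2) -
        ((K * ((2 * D + 4) * (s * τ))) ^ 2 / (2 * lam) + M) *
          (ball (carlemanCenter d) (3 / 2)).indicator (fun y => carlemanWeight s τ y * u y ^ 2) x
      ≤ energyTest s τ x * ⟪A x (∇ u x), ∇ u x⟫ + ⟪A x (∇ u x), ∇ (energyTest s τ) x⟫ * u x +
        V x * u x * energyTest s τ x * u x := by
  have hcross : |⟪A x (∇ u x), ∇ (energyTest s τ) x⟫| ≤ K * ‖∇ u x‖ *
      (energyCutoff d x * carlemanWeight s τ x * ((2 * D + 4) * (s * τ))) :=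
    (abs_real_inner_le_norm _ _).trans (mul_le_mul (h.norm_flux_le x)
      (norm_gradient_energyTest_le hs hτ hD x) (norm_nonneg _)
      (mul_nonneg h.K_nonneg (norm_nonneg _)))
  by_cases hx : x ∈ ball (carlemanCenter d) (3 / 2)
  · rw [Set.indicator_of_mem hx]
    exact caccioppoli_pointwise hlam (carlemanWeight_pos x).le (energyCutoff d).nonneg
      (energyCutoff d).le_one (h.le_inner x _) hcross (h.abs_potential_le x)
  · have hχ : energyCutoff d x = 0 := (energyCutoff d).zero_of_le_dist (not_lt.1 hx)
    rw [hχ, zero_mul, zero_mul, mul_zero] at hcross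
    rw [Set.indicator_of_notMem hx, abs_nonpos_iff.1 hcross]
    simp [energyTest, hχ]

lemma integral_energyTest_le (h : IsRobinSolution lam K M Mη A V η u) (hlam : 0 < lam)
    (hs : 1 ≤ s) (hτ : 1 ≤ τ) {D : ℝ} (hD : ∀ x, ‖∇ (energyCutoff d) x‖ ≤ D) :
    lam / 2 * ∫ x, energyTest s τ x * ‖∇ u x‖ ^ 2 ∂bulkMeasure d
      ≤ ((K * ((2 * D + 4) * (s * τ))) ^ 2 / (2 * lam) + M) *
          (∫ x in carlemanRegion d (3 / 2), carlemanWeight s τ x * u x ^ 2) +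
        Mη * exp (2 * τ) * ∫ x, u x ^ 2 ∂flatMeasure d := by
  have hu := h.continuous_sol
  have hgradient : Integrable (fun x => energyTest s τ x * ‖∇ u x‖ ^ 2) (bulkMeasure d) :=
    integrable_bilin_of_continuous (ContinuousLinearMap.mul ℝ ℝ) continuous_energyTest
      (integrable_norm_gradient_sq h.memW12)
  have hweight : Integrable ((ball (carlemanCenter d) (3 / 2)).indicator
      fun x => carlemanWeight s τ x * u x ^ 2) (bulkMeasure d) :=
    (integrable_bulkMeasure_of_continuous (continuous_carlemanWeight.mul (hu.pow 2))).indicator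
      measurableSet_ball
  have hleading := h.integrable_flux_inner_gradient (continuous_energyTest (s := s) (τ := τ))
  have hcross := integrable_bilin_of_continuous (ContinuousLinearMap.mul ℝ ℝ).flip hu
    (h.integrable_flux_inner (continuous_gradient (contDiff_energyTest (s := s) (τ := τ) (n := 1))))
  have hpotential : Integrable (fun x => V x * u x * energyTest s τ x * u x) (bulkMeasure d) := by
    simp_rw [mul_assoc _ (energyTest s τ _)]
    exact h.integrable_potential_mul (continuous_energyTest.mul hu)
  have hmono := integral_mono ((hgradient.const_mul _).sub (hweight.const_mul _))
    ((hleading.add hcross).add hpotential) (h.energyTest_pointwise hlam hs hτ hD)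
  simp only [Pi.add_apply, ContinuousLinearMap.flip_apply, ContinuousLinearMap.mul_apply'] at hmono
  rw [integral_sub' (hgradient.const_mul _) (hweight.const_mul _), integral_const_mul,
    integral_const_mul, setIntegral_indicator measurableSet_ball, integral_add
      (by exact hleading.add hcross) hpotential, integral_add hleading (by exact hcross),
    h.energy_identity contDiff_energyTest hasCompactSupport_energyTest
      tsupport_energyTest_subset_closedBall] at hmono
  rw [carlemanRegion]
  linarith [h.integral_robin_energyTest_le (s := s) (τ := τ) (by linarith) (by linarith)]

lemma setIntegral_weight_mul_gradient_sq_le (h : IsRobinSolution lam K M Mη A V η u) :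
    ∫ x in carlemanRegion d (29 / 20), carlemanWeight s τ x * ‖∇ u x‖ ^ 2
      ≤ ∫ x, energyTest s τ x * ‖∇ u x‖ ^ 2 ∂bulkMeasure d := by
  rw [setIntegral_congr_fun (g := fun x => energyTest s τ x * ‖∇ u x‖ ^ 2)
    (measurableSet_carlemanRegion _) fun x hx => ?_]
  · exact setIntegral_mono_set (integrable_bilin_of_continuous (ContinuousLinearMap.mul ℝ ℝ)
        continuous_energyTest (integrable_norm_gradient_sq h.memW12))
      (.of_forall fun x => mul_nonneg (energyTest_nonneg x) (sq_nonneg _))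
      (.of_forall fun x hx => hx.1)
  · simp [energyTest, (energyCutoff d).one_of_mem_closedBall (ball_subset_closedBall hx.2)]

end IsRobinSolution

theorem exists_caccioppoli (hlam : 0 < lam) (d : ℕ) (K M Mη : ℝ) : ∃ C, 0 ≤ C ∧ ∀ s τ, 1 ≤ s →
    1 ≤ τ → ∀ A V η u, IsRobinSolution (d := d) lam K M Mη A V η u →
      ∫ x in carlemanRegion d (29 / 20), carlemanWeight s τ x * ‖∇ u x‖ ^ 2
        ≤ C * ((s * τ) ^ 2 * (∫ x in carlemanRegion d (3 / 2), carlemanWeight s τ x * u x ^ 2) +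
          exp (2 * τ) * ∫ x, u x ^ 2 ∂flatMeasure d) := by
  obtain ⟨D, hD⟩ := exists_norm_gradient_energyCutoff_le d
  set C₀ := (K * (2 * D + 4)) ^ 2 / (2 * lam)
  refine ⟨2 / lam * (C₀ + |M| + |Mη|), by positivity, fun s τ hs hτ A V η u h => ?_⟩
  set X := ∫ x in carlemanRegion d (3 / 2), carlemanWeight s τ x * u x ^ 2
  set G := ∫ x, u x ^ 2 ∂flatMeasure d
  have hX : 0 ≤ X := integral_nonneg fun x => mul_nonneg (carlemanWeight_pos x).le (sq_nonneg _)
  have : 0 ≤ G := integral_nonneg fun x => sq_nonneg _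
  have hsτ : 1 ≤ (s * τ) ^ 2 := one_le_pow₀ (one_le_mul_of_one_le_of_one_le hs hτ)
  have hM := h.M_nonneg
  have hMη := h.Mη_nonneg
  rw [abs_of_nonneg hM, abs_of_nonneg hMη]
  calc ∫ x in carlemanRegion d (29 / 20), carlemanWeight s τ x * ‖∇ u x‖ ^ 2
      ≤ ∫ x, energyTest s τ x * ‖∇ u x‖ ^ 2 ∂bulkMeasure d :=
        h.setIntegral_weight_mul_gradient_sq_le
    _ = 2 / lam * (lam / 2 * ∫ x, energyTest s τ x * ‖∇ u x‖ ^ 2 ∂bulkMeasure d) := by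
        field_simp
    _ ≤ 2 / lam * ((C₀ * (s * τ) ^ 2 + M * 1) * X + Mη * exp (2 * τ) * G) := by
        gcongr
        exact (h.integral_energyTest_le hlam hs hτ hD).trans_eq (by ring)
    _ ≤ 2 / lam * (((C₀ + M + Mη) * (s * τ) ^ 2) * X + (C₀ + M + Mη) * exp (2 * τ) * G) := by
        gcongr
        · nlinarith
        · linarith [show 0 ≤ C₀ by positivity]
    _ = 2 / lam * (C₀ + M + Mη) * ((s * τ) ^ 2 * X + exp (2 * τ) * G) := by ring

end Caccioppoli

section MollificationError

lemma ofReal_sub_sq_le_lintegral_deriv_sq {f : ℝ → ℝ} (hf : Differentiable ℝ f) :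
    ENNReal.ofReal ((f 1 - f 0) ^ 2)
      ≤ ∫⁻ θ in Set.Ioc (0 : ℝ) 1, ENNReal.ofReal (deriv f θ ^ 2) := by
  set μ : Measure ℝ := volume.restrict (Set.Ioc 0 1)
  have hμ : ∫ _, (1 : ℝ) ∂μ = 1 := by simp [μ]
  have hmeas := measurable_deriv f
  by_cases htop : ∫⁻ θ, ENNReal.ofReal (deriv f θ ^ 2) ∂μ = ⊤
  · exact htop.symm ▸ le_top
  have hsq : Integrable (fun θ => deriv f θ ^ 2) μ :=
    ⟨(hmeas.pow_const 2).aestronglyMeasurable, (hasFiniteIntegral_iff_ofReal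
      (.of_forall fun θ => sq_nonneg _)).2 (lt_top_iff_ne_top.2 htop)⟩
  have hderiv : Integrable (deriv f) μ :=
    ((memLp_two_iff_integrable_sq hmeas.aestronglyMeasurable).2 hsq).integrable one_le_two
  have hftc : f 1 - f 0 = ∫ θ, deriv f θ ∂μ := by
    rw [← intervalIntegral.integral_of_le zero_le_one, intervalIntegral.integral_deriv_eq_sub
      (fun θ _ => hf θ) ((intervalIntegrable_iff_integrableOn_Ioc_of_le zero_le_one).2 hderiv)]
  have hcs := sq_integral_mul_le (μ := μ) (w := fun _ => 1) (fun _ => zero_le_one)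
    (integrable_const 1) (by simpa using hderiv) (by simpa using hsq)
  simp only [one_mul, hμ, ← hftc] at hcs
  rw [← ofReal_integral_eq_lintegral_ofReal hsq (.of_forall fun θ => sq_nonneg _)]
  exact ENNReal.ofReal_le_ofReal hcs

lemma lintegral_lintegral_sub_smul {E : Type*} [NormedAddCommGroup E] [NormedSpace ℝ E]
    [MeasurableSpace E] [BorelSpace E] {μ : Measure E} [SFinite μ] [μ.IsAddRightInvariant]
    {F : E → ℝ≥0∞} (hF : Measurable F) (t : E) :
    ∫⁻ x, (∫⁻ θ in Set.Ioc (0 : ℝ) 1, F (x - θ • t)) ∂μ = ∫⁻ y, F y ∂μ := by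
  have hshift : Measurable fun p : E × ℝ => F (p.1 - p.2 • t) :=
    hF.comp (Continuous.measurable (by fun_prop))
  rw [lintegral_lintegral_swap hshift.aemeasurable]
  simp [lintegral_sub_right_eq_self F]

variable {d : ℕ} {u : Euc d → ℝ} {ε s τ : ℝ}

/-- The weighted gradient density `exp (2τφ) |∇u|²` on `carlemanRegion d (29/20)`, extended by zero
and valued in `ℝ≥0∞` so that Tonelli's theorem applies freely. -/
def weightedGradient (s τ : ℝ) (u : Euc d → ℝ) : Euc d → ℝ≥0∞ :=
  (carlemanRegion d (29 / 20)).indicator fun y =>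
    ENNReal.ofReal (carlemanWeight s τ y * ‖∇ u y‖ ^ 2)

lemma measurable_weightedGradient : Measurable (weightedGradient s τ u) :=
  ((continuous_carlemanWeight.measurable.mul
    ((measurable_gradient u).norm.pow_const 2)).ennreal_ofReal).indicator
    (measurableSet_carlemanRegion _)

lemma sub_smul_mem_carlemanRegion (hε : ε ≤ 1 / 40) {x t : Euc d}
    (hx : x ∈ carlemanRegion d (13 / 10)) (ht : ‖t‖ ≤ 2 * ε) (ht0 : t (Fin.last d) ≤ 0) {θ : ℝ}
    (hθ0 : 0 ≤ θ) (hθ1 : θ ≤ 1) : x - θ • t ∈ carlemanRegion d (29 / 20) := by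
  have hxc : ‖x - carlemanCenter d‖ < 13 / 10 := mem_ball_iff_norm.1 hx.2
  have hstep : ‖θ • t‖ ≤ 1 / 20 := by
    rw [norm_smul, Real.norm_of_nonneg hθ0]
    exact (mul_le_of_le_one_left (norm_nonneg t) hθ1).trans (by linarith)
  have hcenter : ‖x - θ • t - carlemanCenter d‖ ≤ ‖x - carlemanCenter d‖ + ‖θ • t‖ := by
    rw [sub_right_comm]
    exact norm_sub_le _ _
  refine ⟨⟨?_, ?_⟩, mem_ball_iff_norm.2 (by linarith)⟩
  · rw [mem_ball_zero_iff]
    linarith [norm_le_norm_sub_carlemanCenter_add (x - θ • t)]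
  · have hx0 : 0 < x (Fin.last d) := hx.1.2
    change 0 < x (Fin.last d) - θ * t (Fin.last d)
    linarith [mul_nonpos_of_nonneg_of_nonpos hθ0 ht0]

lemma hasDerivAt_comp_sub_smul (hu : Differentiable ℝ u) (x t : Euc d) (θ : ℝ) :
    HasDerivAt (fun θ : ℝ => u (x - θ • t)) (-⟪∇ u (x - θ • t), t⟫) θ := by
  have hline : HasDerivAt (fun θ : ℝ => x - θ • t) (-t) θ := by
    simpa using ((hasDerivAt_id θ).smul_const t).const_sub x
  rw [inner_gradient_left, ← map_neg]
  exact (hu (x - θ • t)).hasFDerivAt.comp_hasDerivAt θ hline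

lemma ofReal_weight_mul_sub_sq_le (hu : Differentiable ℝ u) (hs : 1 ≤ s) (hτ : 0 ≤ τ)
    (hε : ε ≤ 1 / 40) (hsmall : 8 * τ * s * ε ≤ 2 / 3) {x t : Euc d}
    (hx : x ∈ carlemanRegion d (13 / 10)) (ht : ‖t‖ ≤ 2 * ε) (ht0 : t (Fin.last d) ≤ 0) :
    ENNReal.ofReal (carlemanWeight s τ x * (u (x - t) - u x) ^ 2)
      ≤ ENNReal.ofReal (8 * ε ^ 2) *
        ∫⁻ θ in Set.Ioc (0 : ℝ) 1, weightedGradient s τ u (x - θ • t) := by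
  have hderiv := hasDerivAt_comp_sub_smul hu x t
  have hftc := ofReal_sub_sq_le_lintegral_deriv_sq fun θ => (hderiv θ).differentiableAt
  simp only [one_smul, zero_smul, sub_zero, (hderiv _).deriv, neg_sq] at hftc
  have hweight := (carlemanWeight_pos (s := s) (τ := τ) x).le
  rw [ENNReal.ofReal_mul hweight]
  refine (mul_le_mul_right hftc _).trans ?_
  rw [← lintegral_const_mul' _ _ ENNReal.ofReal_ne_top,
    ← lintegral_const_mul' _ _ ENNReal.ofReal_ne_top]
  refine setLIntegral_mono' measurableSet_Ioc fun θ hθ => ?_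
  set y := x - θ • t with hy
  have hyx : ‖x - y‖ ≤ 2 * ε := by
    rw [hy, sub_sub_cancel, norm_smul, Real.norm_of_nonneg hθ.1.le]
    exact (mul_le_of_le_one_left (norm_nonneg t) hθ.2).trans ht
  have hinner : ⟪∇ u y, t⟫ ^ 2 ≤ (‖∇ u y‖ * (2 * ε)) ^ 2 := by
    rw [← sq_abs]
    gcongr
    exact (abs_real_inner_le_norm _ _).trans (by gcongr)
  rw [weightedGradient,
    Set.indicator_of_mem (sub_smul_mem_carlemanRegion hε hx ht ht0 hθ.1.le hθ.2),
    ← ENNReal.ofReal_mul hweight, ← ENNReal.ofReal_mul (by positivity)]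
  refine ENNReal.ofReal_le_ofReal ?_
  calc carlemanWeight s τ x * ⟪∇ u y, t⟫ ^ 2
      ≤ 2 * carlemanWeight s τ y * (‖∇ u y‖ * (2 * ε)) ^ 2 :=
        mul_le_mul (carlemanWeight_le_two_mul hs hτ hsmall hyx) hinner (sq_nonneg _)
          (by linarith [carlemanWeight_pos (s := s) (τ := τ) y])
    _ = 8 * ε ^ 2 * (carlemanWeight s τ y * ‖∇ u y‖ ^ 2) := by ring

lemma lintegral_weight_mul_sub_sq_le (hu : Differentiable ℝ u) (hs : 1 ≤ s) (hτ : 0 ≤ τ)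
    (hε : ε ≤ 1 / 40) (hsmall : 8 * τ * s * ε ≤ 2 / 3) {t : Euc d} (ht : ‖t‖ ≤ 2 * ε)
    (ht0 : t (Fin.last d) ≤ 0) :
    ∫⁻ x in carlemanRegion d (13 / 10),
        ENNReal.ofReal (carlemanWeight s τ x * (u (x - t) - u x) ^ 2)
      ≤ ENNReal.ofReal (8 * ε ^ 2) * ∫⁻ y, weightedGradient s τ u y :=
  calc _ ≤ ∫⁻ x in carlemanRegion d (13 / 10), ENNReal.ofReal (8 * ε ^ 2) *
          ∫⁻ θ in Set.Ioc (0 : ℝ) 1, weightedGradient s τ u (x - θ • t) :=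
        setLIntegral_mono' (measurableSet_carlemanRegion _) fun x hx =>
          ofReal_weight_mul_sub_sq_le hu hs hτ hε hsmall hx ht ht0
    _ ≤ ∫⁻ x, ENNReal.ofReal (8 * ε ^ 2) *
          ∫⁻ θ in Set.Ioc (0 : ℝ) 1, weightedGradient s τ u (x - θ • t) :=
        setLIntegral_le_lintegral _ _
    _ = ENNReal.ofReal (8 * ε ^ 2) * ∫⁻ y, weightedGradient s τ u y := by
        rw [lintegral_const_mul' _ _ ENNReal.ofReal_ne_top,
          lintegral_lintegral_sub_smul measurable_weightedGradient]

lemma integrable_mollifier_mul_sub_sq (hu : Continuous u) (hε : 0 < ε) (x : Euc d) (b : ℝ) :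
    Integrable fun t => mollifier d ε t * (u (x - t) - b) ^ 2 := by
  have hK := continuous_mollifier (d := d) (ε := ε)
  exact Continuous.integrable_of_hasCompactSupport (by fun_prop)
    (hasCompactSupport_mollifier hε).mul_right

lemma mollify_sub_sq_le (hu : Continuous u) (hε : 0 < ε) (x : Euc d) (b : ℝ) :
    (mollify ε u x - b) ^ 2 ≤ ∫ t, mollifier d ε t * (u (x - t) - b) ^ 2 := by
  have hK := continuous_mollifier (d := d) (ε := ε)
  have hlinear : Integrable fun t => mollifier d ε t * (u (x - t) - b) :=
    Continuous.integrable_of_hasCompactSupport (by fun_prop)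
      (hasCompactSupport_mollifier hε).mul_right
  have hcs := sq_integral_mul_le (mollifier_nonneg hε) (integrable_mollifier hε) hlinear
    (integrable_mollifier_mul_sub_sq hu hε x b)
  rw [integral_mollifier hε, one_mul] at hcs
  simpa only [mollify_sub hε hu x b, smul_eq_mul] using hcs

lemma ofReal_mul_mollify_sub_sq_le (hu : Continuous u) (hε : 0 < ε) {c : ℝ} (hc : 0 ≤ c)
    (x : Euc d) (b : ℝ) :
    ENNReal.ofReal (c * (mollify ε u x - b) ^ 2)
      ≤ ∫⁻ t, ENNReal.ofReal (mollifier d ε t) * ENNReal.ofReal (c * (u (x - t) - b) ^ 2) :=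
  calc _ ≤ ENNReal.ofReal (c * ∫ t, mollifier d ε t * (u (x - t) - b) ^ 2) :=
        ENNReal.ofReal_le_ofReal (mul_le_mul_of_nonneg_left (mollify_sub_sq_le hu hε x b) hc)
    _ = ∫⁻ t, ENNReal.ofReal (c * (mollifier d ε t * (u (x - t) - b) ^ 2)) := by
        rw [← integral_const_mul, ofReal_integral_eq_lintegral_ofReal
          ((integrable_mollifier_mul_sub_sq hu hε x b).const_mul c)
          (.of_forall fun t => mul_nonneg hc (mul_nonneg (mollifier_nonneg hε t) (sq_nonneg _)))]
    _ = _ := by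
        congr 1 with t
        rw [mul_left_comm, ENNReal.ofReal_mul (mollifier_nonneg hε t)]

lemma lintegral_weight_mul_mollify_sub_sq_le (hu : Differentiable ℝ u) (hs : 1 ≤ s) (hτ : 0 ≤ τ)
    (hε : 0 < ε) (hε' : ε ≤ 1 / 40) (hsmall : 8 * τ * s * ε ≤ 2 / 3) :
    ∫⁻ x in carlemanRegion d (13 / 10),
        ENNReal.ofReal (carlemanWeight s τ x * (mollify ε u x - u x) ^ 2)
      ≤ ENNReal.ofReal (8 * ε ^ 2) * ∫⁻ y, weightedGradient s τ u y := by
  have hu' := hu.continuous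
  have hK : Measurable fun t => ENNReal.ofReal (mollifier d ε t) :=
    continuous_mollifier.measurable.ennreal_ofReal
  have hW := continuous_carlemanWeight (d := d) (s := s) (τ := τ)
  set D : Euc d → Euc d → ℝ≥0∞ := fun x t =>
    ENNReal.ofReal (carlemanWeight s τ x * (u (x - t) - u x) ^ 2)
  have hDmeas : Measurable (Function.uncurry D) :=
    Measurable.ennreal_ofReal (Continuous.measurable (by fun_prop))
  calc _ ≤ ∫⁻ x in carlemanRegion d (13 / 10), ∫⁻ t, ENNReal.ofReal (mollifier d ε t) * D x t :=
        lintegral_mono fun x => ofReal_mul_mollify_sub_sq_le hu' hε (carlemanWeight_pos x).le x _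
    _ = ∫⁻ t, ENNReal.ofReal (mollifier d ε t) * ∫⁻ x in carlemanRegion d (13 / 10), D x t := by
        rw [lintegral_lintegral_swap ((hK.comp measurable_snd).mul hDmeas).aemeasurable]
        simp_rw [lintegral_const_mul' _ _ ENNReal.ofReal_ne_top]
    _ ≤ ∫⁻ t, ENNReal.ofReal (mollifier d ε t) *
          (ENNReal.ofReal (8 * ε ^ 2) * ∫⁻ y, weightedGradient s τ u y) := by
        refine lintegral_mono fun t => ?_
        by_cases ht : t ∈ tsupport (mollifier d ε)
        · have hnear := tsupport_mollifier_subset hε ht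
          exact mul_le_mul_right (lintegral_weight_mul_sub_sq_le hu hs hτ hε' hsmall hnear.1.le
            hnear.2.le) _
        · simp [image_eq_zero_of_notMem_tsupport ht]
    _ = _ := by
        rw [lintegral_mul_const _ hK, ← ofReal_integral_eq_lintegral_ofReal
          (integrable_mollifier hε) (.of_forall (mollifier_nonneg hε)), integral_mollifier hε,
          ENNReal.ofReal_one, one_mul]

theorem setIntegral_weight_mul_mollifiedSol_sub_sq_le (hu : MemW12 d u) (hs : 1 ≤ s) (hτ : 0 ≤ τ)
    (hε : 0 < ε) (hε' : ε ≤ 1 / 40) (hsmall : 8 * τ * s * ε ≤ 2 / 3) :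
    ∫ x in carlemanRegion d (13 / 10), carlemanWeight s τ x * (mollifiedSol ε u x - u x) ^ 2
      ≤ 8 * ε ^ 2 *
        ∫ x in carlemanRegion d (29 / 20), carlemanWeight s τ x * ‖∇ u x‖ ^ 2 := by
  have hu' := hu.1.continuous
  have hweight (f : Euc d → ℝ) (x : Euc d) : 0 ≤ carlemanWeight s τ x * f x ^ 2 :=
    mul_nonneg (carlemanWeight_pos x).le (sq_nonneg _)
  have herror : IntegrableOn (fun x => carlemanWeight s τ x * (mollifiedSol ε u x - u x) ^ 2)
      (carlemanRegion d (13 / 10)) :=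
    integrableOn_carlemanRegion (integrable_bulkMeasure_of_continuous
      (continuous_carlemanWeight.mul
        (((contDiff_mollifiedSol hu' hε (n := 0)).continuous.sub hu').pow 2))) _
  have hgradient : ∫⁻ y, weightedGradient s τ u y = ENNReal.ofReal
      (∫ x in carlemanRegion d (29 / 20), carlemanWeight s τ x * ‖∇ u x‖ ^ 2) := by
    rw [ofReal_integral_eq_lintegral_ofReal (integrableOn_carlemanRegion
      (integrable_weight_mul (integrable_norm_gradient_sq hu)) _)
      (.of_forall (hweight fun x => ‖∇ u x‖))]
    exact lintegral_indicator (measurableSet_carlemanRegion _) _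
  rw [← ENNReal.ofReal_le_ofReal_iff (mul_nonneg (by positivity)
      (integral_nonneg (hweight fun x => ‖∇ u x‖))),
    ENNReal.ofReal_mul (by positivity), ← hgradient,
    ofReal_integral_eq_lintegral_ofReal herror (.of_forall (hweight _))]
  refine (setLIntegral_congr_fun (measurableSet_carlemanRegion _) fun x hx => ?_).trans_le
    (lintegral_weight_mul_mollify_sub_sq_le hu.1 hs hτ hε hε' hsmall)
  have hxc : ‖x - carlemanCenter d‖ < 13 / 10 := mem_ball_iff_norm.1 hx.2
  have hnorm := norm_le_norm_sub_carlemanCenter_add x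
  rw [mollifiedSol_eq_mollify hε (by linarith) hx.1.2.le]

end MollificationError

section WeightedMass

variable {d : ℕ} {s τ ε ρ : ℝ} {u : Euc d → ℝ} {x : Euc d}

/-- The value of the Carleman weight at distance `ρ` from its centre. -/
def weightLevel (s τ ρ : ℝ) : ℝ := exp (2 * τ * exp (-(s * ρ ^ 2)))

lemma weightLevel_le_carlemanWeight (hs : 0 ≤ s) (hτ : 0 ≤ τ) (hx : ‖x - carlemanCenter d‖ ≤ ρ) :
    weightLevel s τ ρ ≤ carlemanWeight s τ x := by
  rw [weightLevel, carlemanWeight]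
  gcongr
  exact exp_neg_le_gaussWeight hs hx

lemma carlemanWeight_le_weightLevel (hs : 0 ≤ s) (hτ : 0 ≤ τ) (hρ : 0 ≤ ρ)
    (hx : ρ ≤ ‖x - carlemanCenter d‖) : carlemanWeight s τ x ≤ weightLevel s τ ρ := by
  rw [weightLevel, carlemanWeight, gaussWeight, neg_mul]
  gcongr

/-- The weighted `L²` mass of `u` on `carlemanRegion d ρ`. -/
def weightedMass (s τ ρ : ℝ) (u : Euc d → ℝ) : ℝ :=
  ∫ x in carlemanRegion d ρ, carlemanWeight s τ x * u x ^ 2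

lemma weight_mul_sq_nonneg (f : Euc d → ℝ) (x : Euc d) : 0 ≤ carlemanWeight s τ x * f x ^ 2 :=
  mul_nonneg (carlemanWeight_pos x).le (sq_nonneg _)

lemma weightedMass_nonneg : 0 ≤ weightedMass s τ ρ u := integral_nonneg (weight_mul_sq_nonneg u)

lemma integrable_weight_mul_sq (hu : Continuous u) :
    Integrable (fun x => carlemanWeight s τ x * u x ^ 2) (bulkMeasure d) :=
  integrable_weight_mul (integrable_bulkMeasure_of_continuous (hu.pow 2))

lemma carlemanRegion_mono {ρ ρ' : ℝ} (h : ρ ≤ ρ') : carlemanRegion d ρ ⊆ carlemanRegion d ρ' :=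
  Set.inter_subset_inter_right _ (ball_subset_ball h)

lemma weightedMass_mono (hu : Continuous u) {ρ ρ' : ℝ} (h : ρ ≤ ρ') :
    weightedMass s τ ρ u ≤ weightedMass s τ ρ' u :=
  setIntegral_mono_set (integrableOn_carlemanRegion (integrable_weight_mul_sq hu) _)
    (.of_forall (weight_mul_sq_nonneg u)) (.of_forall (carlemanRegion_mono h))

lemma setIntegral_weight_mul_energyDensity_le (hu : MemW12 d u) {ρ ρ' : ℝ} (h : ρ ≤ ρ') :
    ∫ x in carlemanRegion d ρ, carlemanWeight s τ x * energyDensity u x ≤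
      weightedMass s τ ρ' u + ∫ x in carlemanRegion d ρ, carlemanWeight s τ x * ‖∇ u x‖ ^ 2 := by
  simp_rw [energyDensity, mul_add]
  rw [integral_add
    (integrableOn_carlemanRegion (integrable_weight_mul_sq hu.1.continuous) _)
    (integrableOn_carlemanRegion (integrable_weight_mul (integrable_norm_gradient_sq hu)) _)]
  gcongr
  exact weightedMass_mono hu.1.continuous h

lemma weightedMass_le_add (hu : Continuous u) (hs : 0 ≤ s) (hτ : 0 ≤ τ) {ρ ρ' : ℝ} (hρ : 0 ≤ ρ)
    (h : ρ ≤ ρ') :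
    weightedMass s τ ρ' u ≤
      weightedMass s τ ρ u + weightLevel s τ ρ * ∫ x in Bplus d 2, u x ^ 2 := by
  set R := carlemanRegion d ρ
  set f := fun x => carlemanWeight s τ x * u x ^ 2
  have hR : MeasurableSet R := measurableSet_carlemanRegion _
  have hsq : Integrable (fun x => u x ^ 2) (bulkMeasure d) :=
    integrable_bulkMeasure_of_continuous (hu.pow 2)
  have hf : Integrable f (bulkMeasure d) := integrable_weight_mul_sq hu
  have hpt : ∀ x ∈ carlemanRegion d ρ', f x ≤ R.indicator f x + weightLevel s τ ρ * u x ^ 2 := by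
    intro x hx
    have hlevel : 0 ≤ weightLevel s τ ρ := (exp_pos _).le
    by_cases hxR : x ∈ R
    · simpa [hxR] using mul_nonneg hlevel (sq_nonneg (u x))
    · simp only [Set.indicator_of_notMem hxR, zero_add]
      refine mul_le_mul_of_nonneg_right (carlemanWeight_le_weightLevel hs hτ hρ ?_) (sq_nonneg _)
      exact le_of_not_gt fun hlt => hxR ⟨hx.1, mem_ball_iff_norm.2 hlt⟩
  calc weightedMass s τ ρ' u
      ≤ ∫ x in carlemanRegion d ρ', (R.indicator f x + weightLevel s τ ρ * u x ^ 2) :=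
        setIntegral_mono_on (integrableOn_carlemanRegion hf _)
          (integrableOn_carlemanRegion ((hf.indicator hR).add (hsq.const_mul _)) _)
          (measurableSet_carlemanRegion _) hpt
    _ = weightedMass s τ ρ u + weightLevel s τ ρ * ∫ x in carlemanRegion d ρ', u x ^ 2 := by
        rw [integral_add (integrableOn_carlemanRegion (hf.indicator hR) _)
            (integrableOn_carlemanRegion (hsq.const_mul _) _),
          setIntegral_indicator hR, Set.inter_eq_self_of_subset_right (carlemanRegion_mono h),
          integral_const_mul]
        rfl
    _ ≤ _ := by
        gcongr
        · exact (exp_pos _).le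
        · exact .of_forall fun x => sq_nonneg (u x)
        · exact Set.inter_subset_left

lemma Bplus_subset_carlemanRegion : Bplus d 1 ⊆ carlemanRegion d (13 / 10) := fun x hx => by
  have hx1 : ‖x‖ < 1 := mem_ball_zero_iff.1 hx.1
  refine ⟨⟨ball_subset_ball one_le_two hx.1, hx.2⟩, mem_ball_iff_norm.2 ?_⟩
  have := norm_sub_le x (carlemanCenter d)
  rw [norm_carlemanCenter] at this
  linarith

lemma weightLevel_mul_integral_le (hu : Continuous u) (hs : 0 ≤ s) (hτ : 0 ≤ τ) :
    weightLevel s τ (13 / 10) * ∫ x in Bplus d 1, u x ^ 2 ≤ weightedMass s τ (13 / 10) u := by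
  have hsub := Bplus_subset_carlemanRegion (d := d)
  have hsq : IntegrableOn (fun x => u x ^ 2) (carlemanRegion d (13 / 10)) volume :=
    integrableOn_carlemanRegion (integrable_bulkMeasure_of_continuous (hu.pow 2)) _
  have hweight :=
    integrableOn_carlemanRegion (integrable_weight_mul_sq (s := s) (τ := τ) hu) (13 / 10)
  rw [← integral_const_mul]
  calc ∫ x in Bplus d 1, weightLevel s τ (13 / 10) * u x ^ 2
      ≤ ∫ x in Bplus d 1, carlemanWeight s τ x * u x ^ 2 :=
        setIntegral_mono_on ((hsq.mono_set hsub).const_mul _) (hweight.mono_set hsub)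
          (measurableSet_Bplus 1) fun x hx => mul_le_mul_of_nonneg_right
            (weightLevel_le_carlemanWeight hs hτ (mem_ball_iff_norm.1 (hsub hx).2).le) (sq_nonneg _)
    _ ≤ weightedMass s τ (13 / 10) u :=
        setIntegral_mono_set hweight (.of_forall (weight_mul_sq_nonneg u)) (.of_forall hsub)

lemma weightedMass_le_cutoffSol (hu : Continuous u) (hε : 0 < ε) :
    weightedMass s τ (13 / 10) u ≤ 2 * (∫ x, carlemanWeight s τ x * cutoffSol ε u x ^ 2) +
      2 * ∫ x in carlemanRegion d (13 / 10),
        carlemanWeight s τ x * (mollifiedSol ε u x - u x) ^ 2 := by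
  have hmoll : Continuous (mollifiedSol ε u) := (contDiff_mollifiedSol hu hε (n := 0)).continuous
  have hcut : Continuous (cutoffSol ε u) := (contDiff_cutoffSol hu hε).continuous
  have hcutoff : Integrable fun x => carlemanWeight s τ x * cutoffSol ε u x ^ 2 :=
    (continuous_carlemanWeight.mul (hcut.pow 2)).integrable_of_hasCompactSupport <|
      .intro (hasCompactSupport_cutoffSol (ε := ε) (u := u)) fun x hx => by
        simp [image_eq_zero_of_notMem_tsupport hx]
  have herror := integrableOn_carlemanRegion
    (integrable_weight_mul_sq (s := s) (τ := τ) (hmoll.sub hu)) (13 / 10)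
  have hpt : ∀ x ∈ carlemanRegion d (13 / 10), carlemanWeight s τ x * u x ^ 2 ≤
      2 * (carlemanWeight s τ x * cutoffSol ε u x ^ 2) +
        2 * (carlemanWeight s τ x * (mollifiedSol ε u x - u x) ^ 2) := by
    intro x hx
    have hone : cutoffSol ε u x = mollifiedSol ε u x := by
      rw [cutoffSol, (carlemanCutoff d).one_of_mem_closedBall (ball_subset_closedBall hx.2),
        one_mul]
    have hsplit := add_sq_le (a := mollifiedSol ε u x) (b := -(mollifiedSol ε u x - u x))
    rw [hone]
    nlinarith [mul_le_mul_of_nonneg_left hsplit (carlemanWeight_pos (s := s) (τ := τ) x).le]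
  have hmono := setIntegral_mono_on (integrableOn_carlemanRegion (integrable_weight_mul_sq hu) _)
    ((hcutoff.integrableOn.const_mul 2).add (herror.const_mul 2))
    (measurableSet_carlemanRegion _) hpt
  refine hmono.trans ?_
  rw [integral_add' (hcutoff.integrableOn.const_mul 2) (herror.const_mul 2), integral_const_mul,
    integral_const_mul]
  gcongr ?_ + _
  exact mul_le_mul_of_nonneg_left
    (setIntegral_le_integral hcutoff (.of_forall (weight_mul_sq_nonneg _))) zero_le_two

end WeightedMass

section Absorption

variable {lam s τ F C X D G H I J c : ℝ}

lemma mollification_term_le (hs : 1 ≤ s) (hτ : 1 ≤ τ) (hC : 0 ≤ C) (hX : 0 ≤ X) (hG : 0 ≤ G)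
    (hD : D ≤ C * ((s * τ) ^ 2 * X + G)) :
    2 * (8 * (1 / (40 * s * τ ^ 2)) ^ 2 * D) ≤ C / τ * X + C * G := by
  have hsmall : 16 * (1 / (40 * s * τ ^ 2)) ^ 2 * (s * τ) ^ 2 ≤ 1 / τ := by
    have heq : 16 * (1 / (40 * s * τ ^ 2)) ^ 2 * (s * τ) ^ 2 = 1 / 100 * (1 / τ) * (1 / τ) := by
      field_simp
      norm_num
    have hle : 1 / τ ≤ 1 := (div_le_one (by positivity)).2 hτ
    have hpos : 0 < 1 / τ := by positivity
    rw [heq]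
    nlinarith
  have hone : 16 * (1 / (40 * s * τ ^ 2)) ^ 2 ≤ 1 := by
    have hden : 40 ≤ 40 * s * τ ^ 2 := by nlinarith [one_le_pow₀ hτ (n := 2)]
    have hle : 1 / (40 * s * τ ^ 2) ≤ 1 / 40 := one_div_le_one_div_of_le (by norm_num) hden
    have hpos : 0 ≤ 1 / (40 * s * τ ^ 2) := by positivity
    nlinarith
  calc 2 * (8 * (1 / (40 * s * τ ^ 2)) ^ 2 * D)
      ≤ 2 * (8 * (1 / (40 * s * τ ^ 2)) ^ 2 * (C * ((s * τ) ^ 2 * X + G))) := by gcongr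
    _ = 16 * (1 / (40 * s * τ ^ 2)) ^ 2 * (s * τ) ^ 2 * (C * X)
        + 16 * (1 / (40 * s * τ ^ 2)) ^ 2 * (C * G) := by ring
    _ ≤ 1 / τ * (C * X) + 1 * (C * G) := by gcongr
    _ = C / τ * X + C * G := by ring

lemma carleman_term_le (hτ : 1 ≤ τ) (hc : 0 ≤ c) (hF : 0 ≤ F) (hC : 0 ≤ C) (hX : 0 ≤ X)
    (hG : 0 ≤ G) (hH : 0 ≤ H) (hD : D ≤ C * ((s * τ) ^ 2 * X + G)) (hJ : J ≤ F * (X + D) + H)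
    (hI : τ ^ 3 * I ≤ c * J) :
    I ≤ c * F * (1 + C * s ^ 2) / τ * X + c * (F * C * G + H) := by
  have hJ' : J ≤ F * (1 + C * s ^ 2) * τ ^ 2 * X + (F * C * G + H) := by
    calc J ≤ F * (X + C * ((s * τ) ^ 2 * X + G)) + H := hJ.trans (by gcongr)
      _ = F * X * 1 + F * C * s ^ 2 * τ ^ 2 * X + (F * C * G + H) := by ring
      _ ≤ F * X * τ ^ 2 + F * C * s ^ 2 * τ ^ 2 * X + (F * C * G + H) := by
        gcongr
        exact one_le_pow₀ hτ
      _ = F * (1 + C * s ^ 2) * τ ^ 2 * X + (F * C * G + H) := by ring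
  refine le_of_mul_le_mul_left (a := τ ^ 3) ?_ (by positivity)
  calc τ ^ 3 * I ≤ c * (F * (1 + C * s ^ 2) * τ ^ 2 * X + (F * C * G + H)) := hI.trans (by gcongr)
    _ = c * F * (1 + C * s ^ 2) * τ ^ 2 * X + 1 * (c * (F * C * G + H)) := by ring
    _ ≤ c * F * (1 + C * s ^ 2) * τ ^ 2 * X + τ ^ 3 * (c * (F * C * G + H)) := by
        gcongr
        exact one_le_pow₀ hτ
    _ = τ ^ 3 * (c * F * (1 + C * s ^ 2) / τ * X + c * (F * C * G + H)) := by field_simp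

lemma carleman_estimate_cutoffSol (hlam : 0 < lam) (d : ℕ) (K : ℝ) :
    ∃ s τ₀ C : ℝ, 1 ≤ s ∧ 1 ≤ τ₀ ∧ 0 < C ∧ ∀ M Mη A V η u,
      IsRobinSolution (d := d) lam K M Mη A V η u → ∀ ε τ, 0 < ε → ε ≤ 1 / 40 → τ₀ ≤ τ →
        τ ^ 3 * ∫ x, carlemanWeight s τ x * cutoffSol ε u x ^ 2 ≤
          C * ∫ x, carlemanWeight s τ x * nonDivOp (mollify ε A) (cutoffSol ε u) x ^ 2 := by
  obtain ⟨s, τ₀, C, hs, hτ₀, hC, h⟩ :=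
    carleman_estimate (E := Euc d) hlam (ρ := 1 / 5) (by norm_num) K (14 / 10)
  refine ⟨s, τ₀, C, hs, hτ₀, hC, fun M Mη A V η u hu ε τ hε hε' hτ => ?_⟩
  refine h (mollify ε A) (carlemanCenter d) (cutoffSol ε u) τ
    (isC1Elliptic_mollify hε hu.K_nonneg hu.isSymm hu.le_inner hu.norm_le hu.lipschitzWith)
    (contDiff_cutoffSol hu.continuous_sol hε) hasCompactSupport_cutoffSol (fun x hx => ⟨?_, ?_⟩) hτ
  · have hlast : -(2 * ε) ≤ x (Fin.last d) := tsupport_cutoffSol_subset_last hε hx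
    linarith [last_add_le_norm_sub_carlemanCenter x]
  · exact mem_closedBall_iff_norm.1 (tsupport_cutoffSol_subset hx)

lemma exists_weightedMass_le (hlam : 0 < lam) (d : ℕ) (K M Mη : ℝ) :
    ∃ s τ₀ B : ℝ, 1 ≤ s ∧ 1 ≤ τ₀ ∧ 0 ≤ B ∧ ∀ τ, τ₀ ≤ τ → ∃ E, 0 ≤ E ∧
      ∀ A V η u, IsRobinSolution (d := d) lam K M Mη A V η u →
        weightedMass s τ (13 / 10) u ≤
          B / τ * weightedMass s τ (3 / 2) u + E * ∫ x, u x ^ 2 ∂flatMeasure d := by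
  obtain ⟨s, τ₀, c, hs, hτ₀, hc, hcarleman⟩ := carleman_estimate_cutoffSol hlam d K
  obtain ⟨F, hF, hequation⟩ := exists_integral_weight_mul_nonDivOp_sq_le d K M Mη
  obtain ⟨C, hC, hcaccioppoli⟩ := exists_caccioppoli hlam d K M Mη
  refine ⟨s, τ₀, 2 * (c * F * (1 + C * s ^ 2)) + C, hs, hτ₀, by positivity, fun τ hτ => ?_⟩
  have hτ1 : 1 ≤ τ := hτ₀.trans hτ
  set ε := 1 / (40 * s * τ ^ 2)
  have hε : 0 < ε := by positivity
  have hε' : ε ≤ 1 / 40 :=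
    one_div_le_one_div_of_le (by norm_num) (by nlinarith [one_le_pow₀ hτ1 (n := 2)])
  have hsmall : 8 * τ * s * ε ≤ 2 / 3 := by
    have heq : 8 * τ * s * ε = 1 / 5 * (1 / τ) := by
      simp only [ε]
      field_simp
      norm_num
    have hle : 1 / τ ≤ 1 := (div_le_one (by positivity)).2 hτ1
    linarith
  obtain ⟨C', hC', hequation⟩ := hequation ε s τ hε hε' hs (by positivity) hsmall
  refine ⟨2 * (c * (F * C * exp (2 * τ) + C')) + C * exp (2 * τ), by positivity,
    fun A V η u h => ?_⟩
  set X := weightedMass s τ (3 / 2) u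
  set G := ∫ x, u x ^ 2 ∂flatMeasure d
  have hX : 0 ≤ X := weightedMass_nonneg
  have : 0 ≤ G := integral_nonneg fun x => sq_nonneg _
  have hD := hcaccioppoli s τ hs hτ1 A V η u h
  have hJ := (hequation lam A V η u h).trans (add_le_add_left (mul_le_mul_of_nonneg_left
    (setIntegral_weight_mul_energyDensity_le h.memW12 (by norm_num : (29 / 20 : ℝ) ≤ 3 / 2)) hF) _)
  have hI := carleman_term_le hτ1 hc.le hF hC hX (by positivity) (by positivity) hD hJ
    (hcarleman M Mη A V η u h ε τ hε hε' hτ)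
  have herror := mollification_term_le hs hτ1 hC hX (by positivity) hD
  have hmollify :=
    setIntegral_weight_mul_mollifiedSol_sub_sq_le h.memW12 hs (by positivity) hε hε' hsmall
  calc weightedMass s τ (13 / 10) u
      ≤ 2 * (c * F * (1 + C * s ^ 2) / τ * X + c * (F * C * (exp (2 * τ) * G) + C' * G))
        + (C / τ * X + C * (exp (2 * τ) * G)) :=
        (weightedMass_le_cutoffSol h.continuous_sol hε).trans (by linarith)
    _ = (2 * (c * F * (1 + C * s ^ 2)) + C) / τ * X
        + (2 * (c * (F * C * exp (2 * τ) + C')) + C * exp (2 * τ)) * G := by ring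

theorem exists_unit_boundary_stability (hlam : 0 < lam) (d : ℕ) (K M Mη : ℝ) {δ : ℝ} (hδ : 0 < δ) :
    ∃ C, 0 < C ∧ ∀ A V η u, IsRobinSolution (d := d) lam K M Mη A V η u →
      ∫ x in Bplus d 1, u x ^ 2 ≤
        C * (∫ x in Gam d 2, u x ^ 2 ∂surf d) + δ * ∫ x in Bplus d 2, u x ^ 2 := by
  obtain ⟨s, τ₀, B, hs, hτ₀, hB, h⟩ := exists_weightedMass_le hlam d K M Mη
  set τ := τ₀ + 2 * B / δ + 2 * B
  have hq : 0 ≤ 2 * B / δ := by positivity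
  have hτ : 0 < τ := by positivity
  have hhalf : B / τ ≤ 1 / 2 := (div_le_iff₀ hτ).2 (by linarith)
  have hδτ : 2 * (B / τ) ≤ δ := by
    rw [← mul_div_assoc, div_le_comm₀ hτ hδ]
    linarith
  obtain ⟨E, hE, h⟩ := h τ (by linarith)
  set w := weightLevel s τ (13 / 10)
  have hw : 0 < w := exp_pos _
  refine ⟨2 * E / w + 1, by positivity, fun A V η u hu => ?_⟩
  have hmass := h A V η u hu
  have htail := weightedMass_le_add hu.continuous_sol (zero_le_one.trans hs) hτ.le (by norm_num)
    (by norm_num : (13 / 10 : ℝ) ≤ 3 / 2)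
  have hinner := weightLevel_mul_integral_le hu.continuous_sol (zero_le_one.trans hs) hτ.le
  set X := weightedMass s τ (13 / 10) u
  set G := ∫ x in Gam d 2, u x ^ 2 ∂surf d
  set N := ∫ x in Bplus d 2, u x ^ 2
  have hX : 0 ≤ X := weightedMass_nonneg
  have : 0 ≤ G := integral_nonneg fun x => sq_nonneg _
  have : 0 ≤ N := integral_nonneg fun x => sq_nonneg _
  have habsorb : X ≤ 1 / 2 * X + B / τ * (w * N) + E * G :=
    calc X ≤ B / τ * (X + w * N) + E * G := hmass.trans (by gcongr)
      _ = B / τ * X + B / τ * (w * N) + E * G := by ring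
      _ ≤ 1 / 2 * X + B / τ * (w * N) + E * G := by gcongr
  refine le_of_mul_le_mul_left (a := w) ?_ hw
  calc w * ∫ x in Bplus d 1, u x ^ 2 ≤ 2 * (B / τ) * (w * N) + 2 * E * G := by linarith
    _ ≤ δ * (w * N) + 2 * E * G + w * G := by
        have : 0 ≤ w * G := by positivity
        have : 2 * (B / τ) * (w * N) ≤ δ * (w * N) := by gcongr
        linarith
    _ = w * ((2 * E / w + 1) * G + δ * N) := by field_simp; ring

end Absorption

section Scaling

variable {d : ℕ} {r ρ lam K M Mη : ℝ} {A : Euc d → Euc d →L[ℝ] Euc d} {V η u φ ψ : Euc d → ℝ}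

lemma preimage_smul_Bplus (hr : 0 < r) (ρ : ℝ) :
    (fun x : Euc d => r • x) ⁻¹' Bplus d (ρ * r) = Bplus d ρ := by
  ext x
  simp [Bplus, upperHalf, norm_smul, abs_of_pos hr, hr, mul_comm ρ]

lemma preimage_smul_Gam (hr : 0 < r) (ρ : ℝ) :
    (fun x : Euc d => r • x) ⁻¹' Gam d (ρ * r) = Gam d ρ := by
  ext x
  simp [Gam, norm_smul, abs_of_pos hr, hr, hr.ne', mul_comm ρ]

lemma measurableEmbedding_smul (hr : r ≠ 0) : MeasurableEmbedding fun x : Euc d => r • x :=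
  (Homeomorph.smulOfNeZero r hr).measurableEmbedding

lemma map_smul_volume (hr : 0 < r) :
    Measure.map (fun x : Euc d => r • x) volume = ENNReal.ofReal (r⁻¹ ^ (d + 1)) • volume := by
  rw [Measure.map_addHaar_smul _ hr.ne', finrank_euclideanSpace_fin, abs_of_pos (by positivity),
    inv_pow]

lemma map_smul_surf (hr : 0 < r) :
    Measure.map (fun x : Euc d => r • x) (surf d) = ENNReal.ofReal (r⁻¹ ^ d) • surf d := by
  ext s hs
  rw [Measure.map_apply (by fun_prop) hs, Set.preimage_smul₀ hr.ne', surf,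
    Measure.hausdorffMeasure_smul₀ (by positivity) (inv_ne_zero hr.ne'), Measure.smul_apply,
    ENNReal.smul_def, NNReal.rpow_natCast, ENNReal.ofReal]
  congr 2
  ext
  simp [abs_of_pos hr, hr.le]

lemma setIntegral_Bplus_mul (hr : 0 < r) (ρ : ℝ) (f : Euc d → ℝ) :
    ∫ x in Bplus d (ρ * r), f x = r ^ (d + 1) * ∫ x in Bplus d ρ, f (r • x) := by
  have h := (measurableEmbedding_smul hr.ne').setIntegral_map (μ := volume) f (Bplus d (ρ * r))
  rw [preimage_smul_Bplus hr, map_smul_volume hr, Measure.restrict_smul, integral_smul_measure,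
    ENNReal.toReal_ofReal (by positivity), smul_eq_mul] at h
  rw [← h, ← mul_assoc, ← mul_pow, mul_inv_cancel₀ hr.ne', one_pow, one_mul]

lemma setIntegral_Gam_mul (hr : 0 < r) (ρ : ℝ) (f : Euc d → ℝ) :
    ∫ x in Gam d (ρ * r), f x ∂surf d = r ^ d * ∫ x in Gam d ρ, f (r • x) ∂surf d := by
  have h := (measurableEmbedding_smul hr.ne').setIntegral_map (μ := surf d) f (Gam d (ρ * r))
  rw [preimage_smul_Gam hr, map_smul_surf hr, Measure.restrict_smul, integral_smul_measure,
    ENNReal.toReal_ofReal (by positivity), smul_eq_mul] at h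
  rw [← h, ← mul_assoc, ← mul_pow, mul_inv_cancel₀ hr.ne', one_pow, one_mul]

lemma integrableOn_Bplus_comp_smul (hr : 0 < r) {f : Euc d → ℝ}
    (hf : IntegrableOn f (Bplus d (ρ * r))) : IntegrableOn (fun x => f (r • x)) (Bplus d ρ) := by
  rw [← preimage_smul_Bplus hr]
  refine ((measurableEmbedding_smul hr.ne').integrableOn_map_iff (f := f) (μ := volume)).1 ?_
  rw [map_smul_volume hr, IntegrableOn, Measure.restrict_smul]
  exact hf.smul_measure ENNReal.ofReal_ne_top

lemma gradient_comp_smul (hu : Differentiable ℝ u) (c : ℝ) (x : Euc d) :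
    ∇ (fun x => u (c • x)) x = c • ∇ u (c • x) := by
  refine HasGradientAt.gradient (hasGradientAt_iff_hasFDerivAt.2 ?_)
  refine ((hu (c • x)).hasGradientAt.hasFDerivAt.comp x
    ((hasFDerivAt_id x).const_smul c)).congr_fderiv ?_
  ext v
  simp [-inner_gradient_left, -inner_gradient_right]

lemma Bplus_mul_subset (hr : r ≤ 1) : Bplus d (2 * r) ⊆ Bplus d 2 :=
  Set.inter_subset_inter_left _ (ball_subset_ball (by linarith))

lemma memW12_comp_smul (hu : MemW12 d u) (hr : 0 < r) (hr1 : r ≤ 1) :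
    MemW12 d fun x => u (r • x) := by
  have hcont : Continuous fun x => u (r • x) := hu.1.continuous.comp (continuous_const_smul r)
  have hgrad : IntegrableOn (fun x => ‖∇ u x‖ ^ 2) (Bplus d 2) volume :=
    integrable_norm_gradient_sq hu
  refine ⟨hu.1.comp (by fun_prop), ?_, integrable_flatMeasure_of_continuous (hcont.pow 2)⟩
  simp_rw [gradient_comp_smul hu.1, norm_smul, mul_pow]
  exact (integrable_bulkMeasure_of_continuous (hcont.pow 2)).add
    ((integrableOn_Bplus_comp_smul hr (hgrad.mono_set (Bplus_mul_subset hr1))).const_mul _)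

lemma IsWeakSol.integral_eq_of_tsupport_subset (h : IsWeakSol d A V η u) (hρ : ρ ≤ 2)
    (hφ : ContDiff ℝ (⊤ : ℕ∞) φ) (hφc : HasCompactSupport φ) (hφs : tsupport φ ⊆ ball 0 ρ) :
    ∫ x in Bplus d ρ, (⟪A x (∇ u x), ∇ φ x⟫ + V x * u x * φ x) =
      ∫ x in Gam d ρ, η x * u x * φ x ∂surf d := by
  have hball : ball (0 : Euc d) ρ ⊆ ball 0 2 := ball_subset_ball hρ
  have hBplus : Bplus d ρ ⊆ Bplus d 2 := Set.inter_subset_inter_left _ hball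
  have hGam : Gam d ρ ⊆ Gam d 2 := Set.inter_subset_inter_left _ hball
  have hbulk : ∀ x ∈ Bplus d 2 \ Bplus d ρ, ⟪A x (∇ u x), ∇ φ x⟫ + V x * u x * φ x = 0 := by
    intro x hx
    have hx' : x ∉ tsupport φ := fun hmem => hx.2 ⟨hφs hmem, hx.1.2⟩
    simp [gradient, fderiv_of_notMem_tsupport ℝ hx', image_eq_zero_of_notMem_tsupport hx']
  have hflat : ∀ x ∈ Gam d 2 \ Gam d ρ, η x * u x * φ x = 0 := by
    intro x hx
    have hx' : x ∉ tsupport φ := fun hmem => hx.2 ⟨hφs hmem, hx.1.2⟩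
    rw [image_eq_zero_of_notMem_tsupport hx', mul_zero]
  rw [← setIntegral_eq_of_subset_of_forall_sdiff_eq_zero (measurableSet_Bplus 2)
      hBplus hbulk,
    ← setIntegral_eq_of_subset_of_forall_sdiff_eq_zero (measurableSet_Gam 2) hGam hflat]
  exact h.2 φ hφ hφc (hφs.trans hball)

lemma tsupport_comp_inv_smul_subset (hr : 0 < r) (hψ : tsupport ψ ⊆ ball 0 ρ) :
    tsupport (fun y => ψ (r⁻¹ • y)) ⊆ ball 0 (ρ * r) := fun y hy => by
  have hmem := hψ (tsupport_comp_subset_preimage ψ (continuous_const_smul r⁻¹) hy)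
  rw [mem_ball_zero_iff, norm_smul, norm_inv, Real.norm_of_nonneg hr.le, inv_mul_lt_iff₀ hr,
    mul_comm] at hmem
  exact mem_ball_zero_iff.2 hmem

lemma IsWeakSol.comp_smul (h : IsWeakSol d A V η u) (hr : 0 < r) (hr1 : r ≤ 1) :
    IsWeakSol d (fun x => A (r • x)) (fun x => r ^ 2 * V (r • x)) (fun x => r * η (r • x))
      fun x => u (r • x) := by
  refine ⟨memW12_comp_smul h.1 hr hr1, fun ψ hψ hψc hψs => ?_⟩
  set φ : Euc d → ℝ := fun y => ψ (r⁻¹ • y)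
  have hφ (x : Euc d) : φ (r • x) = ψ x := congrArg ψ (inv_smul_smul₀ hr.ne' x)
  have hgrad (x : Euc d) : ∇ φ (r • x) = r⁻¹ • ∇ ψ x := by
    rw [gradient_comp_smul (hψ.differentiable (by simp)), inv_smul_smul₀ hr.ne']
  have hweak := h.integral_eq_of_tsupport_subset (ρ := 2 * r) (φ := φ) (by linarith)
    (hψ.comp (contDiff_const_smul _))
    (hψc.comp_homeomorph (Homeomorph.smulOfNeZero r⁻¹ (inv_ne_zero hr.ne')))
    (tsupport_comp_inv_smul_subset hr hψs)
  rw [setIntegral_Bplus_mul hr, setIntegral_Gam_mul hr, pow_succ, mul_assoc] at hweak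
  have hweak := mul_left_cancel₀ (pow_ne_zero d hr.ne') hweak
  have hbulk (x : Euc d) : ⟪A (r • x) (∇ (fun x => u (r • x)) x), ∇ ψ x⟫
        + r ^ 2 * V (r • x) * u (r • x) * ψ x =
      r ^ 2 * (⟪A (r • x) (∇ u (r • x)), ∇ φ (r • x)⟫ + V (r • x) * u (r • x) * φ (r • x)) := by
    rw [gradient_comp_smul h.1.1, hgrad, hφ, map_smul, real_inner_smul_left, real_inner_smul_right]
    field_simp
  have hflat (x : Euc d) : r * η (r • x) * u (r • x) * ψ x =
      r * (η (r • x) * u (r • x) * φ (r • x)) := by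
    rw [hφ]
    ring
  simp_rw [hbulk, hflat]
  rw [integral_const_mul, integral_const_mul, ← hweak]
  ring

lemma IsRobinSolution.comp_smul (h : IsRobinSolution lam K M Mη A V η u) (hr : 0 < r)
    (hr1 : r ≤ 1) :
    IsRobinSolution lam K M Mη (fun x => A (r • x)) (fun x => r ^ 2 * V (r • x))
      (fun x => r * η (r • x)) fun x => u (r • x) where
  isSymm x := h.isSymm (r • x)
  le_inner x := h.le_inner (r • x)
  norm_le x := h.norm_le (r • x)
  lipschitzWith := by
    have hscale : LipschitzWith 1 fun x : Euc d => r • x := .of_dist_le_mul fun x y => by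
      rw [dist_smul₀, Real.norm_of_nonneg hr.le]
      exact mul_le_mul_of_nonneg_right hr1 dist_nonneg
    simpa [Function.comp_def] using h.lipschitzWith.comp hscale
  measurable_potential := (h.measurable_potential.comp (measurable_const_smul r)).const_mul _
  abs_potential_le x := by
    rw [abs_mul, abs_of_nonneg (by positivity)]
    exact (mul_le_of_le_one_left (abs_nonneg _) (pow_le_one₀ hr.le hr1)).trans
      (h.abs_potential_le _)
  measurable_robin := (h.measurable_robin.comp (measurable_const_smul r)).const_mul _
  abs_robin_le x := by
    rw [abs_mul, abs_of_nonneg hr.le]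
    exact (mul_le_of_le_one_left (abs_nonneg _) hr1).trans (h.abs_robin_le _)
  isWeakSol := h.isWeakSol.comp_smul hr hr1

end Scaling

theorem boundary_stability_general (d : ℕ) (lam K M Mη δ : ℝ) (hlam : 0 < lam) (hδ : 0 < δ) :
    ∃ C : ℝ, 0 < C ∧
      ∀ (A : Euc d → Euc d →L[ℝ] Euc d) (V η u : Euc d → ℝ), IsRobinSolution lam K M Mη A V η u →
        ∀ r : ℝ, 0 < r → r ≤ 1 →
          ∫ x in Bplus d r, u x ^ 2 ≤
            C * r * (∫ x in Gam d (2 * r), u x ^ 2 ∂surf d) +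
              δ * ∫ x in Bplus d (2 * r), u x ^ 2 := by
  obtain ⟨C, hC, h⟩ := exists_unit_boundary_stability hlam d K M Mη hδ
  refine ⟨C, hC, fun A V η u hu r hr hr1 => ?_⟩
  have hunit := h _ _ _ _ (hu.comp_smul hr hr1)
  have hinner := setIntegral_Bplus_mul hr 1 fun x : Euc d => u x ^ 2
  rw [one_mul] at hinner
  rw [hinner, setIntegral_Bplus_mul hr, setIntegral_Gam_mul hr]
  calc _ ≤ r ^ (d + 1) * (C * (∫ x in Gam d 2, u (r • x) ^ 2 ∂surf d)
        + δ * ∫ x in Bplus d 2, u (r • x) ^ 2) := by gcongr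
    _ = _ := by ring

/-- Lemma 6.1, boundary stability estimate: for Lipschitz
symmetric elliptic `A` and Lipschitz `V, η`, for every `δ ∈ (0,1)` there is
`C = C(λ, d, ‖a_{ij}‖_{W^{1,∞}}, M, M_η, δ)` such that every weak solution of the
Robin problem on `B_2^+` satisfies, for all `r ∈ (0,1)`,
`∫_{B_r^+} u² dx ≤ C r ∫_{Γ_{2r}} u² dσ + δ ∫_{B_{2r}^+} u² dx`. -/
theorem boundary_stability
    (d : ℕ) (lam Ka M Mη δ : ℝ) (hlam : 0 < lam) (hlam1 : lam ≤ 1)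
    (hδ : 0 < δ) (hδ1 : δ < 1) :
    ∃ C : ℝ, 0 < C ∧
      ∀ (A : Euc d → Euc d →L[ℝ] Euc d) (V η u : Euc d → ℝ),
        IsSymmA d A → IsEllipticA d lam A →
        (∀ x, ‖A x‖ ≤ Ka) → LipschitzWith (Real.toNNReal Ka) A →
        W1Inf d V M → W1Inf d η Mη →
        IsWeakSol d A V η u →
        ∀ r : ℝ, 0 < r → r < 1 →
          ∫ x in Bplus d r, (u x) ^ 2
            ≤ C * r * (∫ x in Gam d (2 * r), (u x) ^ 2 ∂(surf d))
              + δ * ∫ x in Bplus d (2 * r), (u x) ^ 2 := by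
  obtain ⟨C, hC, h⟩ := boundary_stability_general d lam Ka M Mη δ hlam hδ
  exact ⟨C, hC, fun A V η u hsymm hell hbdd hlip hV hη hu r hr hr1 => h A V η u
    ⟨hsymm, fun x v => (hell x v).1, hbdd, hlip, hV.2.continuous.measurable, hV.1,
      hη.2.continuous.measurable, hη.1, hu⟩ r hr hr1.le⟩
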